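/- Let d be a positive integer and suppose u : D(0,2)^d → [−1,1] is separately subharmonic, i.e. for each coordinate i and any fixed values of the other coordinates, z_i ↦ u(z₁,…,z_d) is subharmonic on D(0,2). Let ω ∈ 𝕋^d satisfy a Diophantine condition and assume that for some n ≥ 1, sup_{θ ∈ 𝕋^d} |u(θ + ω) − u(θ)| < 1/n. Then there exist σ > 0, τ > 0 and c₀ > 0, depending only on d and the Diophantine parameters, such that mes{θ ∈ 𝕋^d : |u(θ) − ⟨u⟩| > n^{−τ}} < exp(−c₀ n^σ), where ⟨u⟩ = ∫_{𝕋^d} u(θ) dθ. -/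

import Mathlib

open MeasureTheory Filter

noncomputable section

/-- Distance from a real number to the nearest integer. -/
def distToInt (x : ℝ) : ℝ := ⨅ k : ℤ, |x - (k : ℝ)|

/-- `ω ∈ 𝕋^d(p,q)`: the standard Diophantine condition `‖k·ω‖ ≥ p/|k|^q`. -/
def Diophantine (d : ℕ) (p q : ℝ) (ω : Fin d → ℝ) : Prop :=
  ∀ k : Fin d → ℤ, k ≠ 0 →
    p / (((∑ i, |k i| : ℤ) : ℝ) ^ q) ≤ distToInt (∑ i, (k i : ℝ) * ω i)

/-- Subharmonicity on a planar domain: upper semicontinuity together with the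
sub-mean value inequality on all sufficiently small circles. -/
def SubharmonicOn (v : ℂ → ℝ) (s : Set ℂ) : Prop :=
  UpperSemicontinuousOn v s ∧
    ∀ z₀ ∈ s, ∃ r₀ > 0, ∀ r : ℝ, 0 < r → r < r₀ →
      v z₀ ≤ (1 / (2 * Real.pi)) *
        ∫ θ in (0 : ℝ)..(2 * Real.pi), v (z₀ + r * Complex.exp (θ * Complex.I))

/-! Extended by `1`, the function `u` is bounded, jointly upper semicontinuous and separately
sub-mean. In one variable, comparison with logarithmic potentials (a Cartan estimate) shows that
a small mean of `|g - m|` over a period of the trace `g` forces `{|g - m| large}` to be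
exponentially small.

Averaging over discs gives `L²` continuity of traces, which bounds the high Fourier frequencies,
while the low ones are bounded by the small increment along the Diophantine vector. Hence the
variance is polynomially small in `n`, and a first, polynomial, bound for the deviation set follows.

The exponential bound is proved by induction on the number of variables, slicing off one
coordinate. Since `|y| = 2 y⁺ - y`, the mean of `|g - m|` over a fibre is controlled by the
marginals of `g` and of its positive part `(g - m)⁺`, both separately sub-mean in one variable
less, so the induction hypothesis makes this mean small off an exponentially small set of fibres,
and the one-variable estimate applies on each remaining fibre. For bounded `n`, the variance stays
below its maximal value `1` by a fixed amount, and Chebyshev's inequality suffices.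
-/

section

open Set Metric
open scoped Topology NNReal

section LipschitzMajorant

variable {X : Type*} [PseudoMetricSpace X] {f : X → ℝ} {C : ℝ}

/-- The sup-convolution of `f` with a cone of slope `L`, that is, the least `L`-Lipschitz function
above `f`. It regularises semicontinuous functions; `f` has to be bounded above for the supremum
not to be a junk value. -/
def lipschitzMajorant (f : X → ℝ) (L : ℝ≥0) (x : X) : ℝ := ⨆ y, (f y - L * dist x y)

theorem sub_mul_dist_le (hC : ∀ x, f x ≤ C) (L : ℝ≥0) (x y : X) : f y - L * dist x y ≤ C :=
  (sub_le_self _ (by positivity)).trans (hC y)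

theorem sub_mul_dist_le_lipschitzMajorant (hC : ∀ x, f x ≤ C) (L : ℝ≥0) (x y : X) :
    f y - L * dist x y ≤ lipschitzMajorant f L x :=
  le_ciSup ⟨C, forall_mem_range.2 (sub_mul_dist_le hC L x)⟩ y

theorem le_lipschitzMajorant (hC : ∀ x, f x ≤ C) (L : ℝ≥0) (x : X) :
    f x ≤ lipschitzMajorant f L x := by
  simpa using sub_mul_dist_le_lipschitzMajorant hC L x x

theorem lipschitzMajorant_le (hC : ∀ x, f x ≤ C) (L : ℝ≥0) (x : X) :
    lipschitzMajorant f L x ≤ C :=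
  have : Nonempty X := ⟨x⟩
  ciSup_le (sub_mul_dist_le hC L x)

theorem lipschitzWith_lipschitzMajorant (hC : ∀ x, f x ≤ C) (L : ℝ≥0) :
    LipschitzWith L (lipschitzMajorant f L) := by
  refine LipschitzWith.of_le_add_mul L fun x y => ?_
  have : Nonempty X := ⟨x⟩
  refine ciSup_le fun z => ?_
  have htri : (L : ℝ) * dist y z ≤ L * (dist x y + dist x z) := by
    rw [dist_comm x y]
    gcongr
    exact dist_triangle y x z
  linarith [sub_mul_dist_le_lipschitzMajorant hC L y z]

theorem tendsto_lipschitzMajorant (hC : ∀ x, f x ≤ C) {x : X} (hf : UpperSemicontinuousAt f x) :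
    Tendsto (fun L => lipschitzMajorant f L x) atTop (𝓝 (f x)) := by
  have : Nonempty X := ⟨x⟩
  refine tendsto_order.2 ⟨fun a ha => Eventually.of_forall fun L =>
    ha.trans_le (le_lipschitzMajorant hC L x), fun a ha => ?_⟩
  obtain ⟨b, hfb, hba⟩ := exists_between ha
  obtain ⟨δ, hδ, hball⟩ := Metric.eventually_nhds_iff.1 (upperSemicontinuousAt_iff.1 hf b hfb)
  filter_upwards [eventually_ge_atTop ((C - b) / δ).toNNReal] with L hL
  refine (ciSup_le fun y => ?_).trans_lt hba
  rcases lt_or_ge (dist y x) δ with hy | hy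
  · exact (sub_le_self _ (by positivity)).trans (hball hy).le
  · have hslope : C - b ≤ L * δ := (div_le_iff₀ hδ).1 (Real.toNNReal_le_iff_le_coe.1 hL)
    have hdist : (L : ℝ) * δ ≤ L * dist x y := by rw [dist_comm]; gcongr
    linarith [hC y]

end LipschitzMajorant

/-! ### The sub-mean value property -/

theorem circleIntegrable_of_abs_le {v : ℂ → ℝ} (hv : Measurable v) {C : ℝ}
    (hC : ∀ z, |v z| ≤ C) (c : ℂ) (r : ℝ) : CircleIntegrable v c r :=
  intervalIntegrable_iff.2 <| Measure.integrableOn_of_bounded (M := C) measure_Ioc_lt_top.ne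
    (hv.comp (continuous_circleMap c r).measurable).aestronglyMeasurable
    (ae_of_all _ fun _ => hC _)

theorem circleAverage_lt_of_re_lt {f : ℂ → ℝ} {c : ℂ} {r M : ℝ} (hr : 0 < r)
    (hf : CircleIntegrable f c r) (hle : ∀ z ∈ sphere c r, f z ≤ M)
    (hlt : ∀ z ∈ sphere c r, c.re < z.re → f z < M) : Real.circleAverage f c r < M := by
  have hpi := Real.pi_pos
  have hquarter : Ioo 0 (Real.pi / 2) ⊆
      {θ | f (circleMap c r θ) < M} ∩ Ioc 0 (2 * Real.pi) := by
    rintro θ ⟨hθ₀, hθ₁⟩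
    refine ⟨hlt _ (circleMap_mem_sphere c hr.le θ) ?_, hθ₀, by linarith⟩
    have hcos : 0 < Real.cos θ := Real.cos_pos_of_mem_Ioo ⟨by linarith, hθ₁⟩
    simpa [circleMap, Complex.exp_ofReal_mul_I_re] using mul_pos hr hcos
  have hint : ∫ θ in (0 : ℝ)..2 * Real.pi, f (circleMap c r θ) <
      ∫ _ in (0 : ℝ)..2 * Real.pi, M := by
    refine intervalIntegral.integral_lt_integral_of_ae_le_of_measure_setOfPred_lt_ne_zero
      Real.two_pi_pos.le hf intervalIntegrable_const
      (ae_of_all _ fun θ => hle _ (circleMap_mem_sphere c hr.le θ)) ?_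
    rw [Measure.restrict_apply' measurableSet_Ioc]
    refine (lt_of_lt_of_le ?_ (measure_mono hquarter)).ne'
    simpa using hpi
  rw [intervalIntegral.integral_const, sub_zero, smul_eq_mul] at hint
  rwa [Real.circleAverage_def, smul_eq_mul, inv_mul_lt_iff₀ Real.two_pi_pos]

-- The maximum of `f - φ` is attained at a point of `O` with largest real part; the values on small
-- circles around that point are smaller on the right half, which contradicts `hsub` and `hsuper`.
theorem le_of_local_submean {K O : Set ℂ} (hK : IsCompact K) (hO : IsOpen O) (hOK : O ⊆ K)
    {f φ : ℂ → ℝ} (hf : UpperSemicontinuousOn f K) (hφ : ContinuousOn φ K)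
    (hsub : ∀ z ∈ O, ∀ᶠ r in 𝓝[>] (0 : ℝ), CircleIntegrable f z r ∧ f z ≤ Real.circleAverage f z r)
    (hsuper : ∀ z ∈ O, ∀ᶠ r in 𝓝[>] (0 : ℝ), Real.circleAverage φ z r ≤ φ z)
    (hoff : ∀ z ∈ K \ O, f z ≤ φ z) : ∀ z ∈ K, f z ≤ φ z := by
  intro z hz
  by_contra! hlt
  have hdiff : UpperSemicontinuousOn (fun z => f z - φ z) K := by
    have hneg : ContinuousOn (fun z => -φ z) K := hφ.neg
    simpa only [sub_eq_add_neg] using hf.add hneg.upperSemicontinuousOn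
  obtain ⟨a, haK, hamax⟩ := hdiff.exists_isMaxOn ⟨z, hz⟩ hK
  obtain ⟨b, ⟨hbK, hba⟩, hbmax⟩ :=
    (hdiff.isCompact_inter_preimage_Ici hK (f a - φ a)).exists_isMaxOn
    ⟨a, haK, le_refl (f a - φ a)⟩ Complex.continuous_re.continuousOn
  have hmax : ∀ w ∈ K, f w - φ w ≤ f b - φ b := fun w hw => (hamax hw).trans hba
  have hbO : b ∈ O := by
    by_contra hbO
    linarith [hoff b ⟨hbK, hbO⟩, hmax z hz]
  obtain ⟨r, ⟨⟨⟨hfint, hfmean⟩, hφmean⟩, hball⟩, hr : 0 < r⟩ :=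
    (((hsub b hbO).and (hsuper b hbO)).and ((eventually_closedBall_subset
      (hO.mem_nhds hbO)).filter_mono nhdsWithin_le_nhds)).and self_mem_nhdsWithin |>.exists
  have hsphere : sphere b r ⊆ K := (sphere_subset_closedBall.trans hball).trans hOK
  have hφint : CircleIntegrable φ b r := (hφ.mono hsphere).circleIntegrable hr.le
  have havg : Real.circleAverage (fun z => f z - φ z) b r < f b - φ b := by
    refine circleAverage_lt_of_re_lt hr (hfint.sub hφint) (fun w hw => hmax w (hsphere hw))
      fun w hw hre => (hmax w (hsphere hw)).lt_of_ne fun heq => hre.not_ge (hbmax ⟨hsphere hw, ?_⟩)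
    exact hba.trans heq.ge
  rw [Real.circleAverage_fun_sub hfint hφint] at havg
  linarith

theorem exists_differentiable_of_mem_span_fourier {T : ℝ} {P : C(AddCircle T, ℂ)}
    (hP : P ∈ Submodule.span ℂ (range (@fourier T))) :
    ∃ h₁ h₂ : ℂ → ℂ, Differentiable ℂ h₁ ∧ Differentiable ℂ h₂ ∧
      ∀ x, P x = h₁ (fourier 1 x) + (starRingEnd ℂ) (h₂ (fourier 1 x)) := by
  have hpow : ∀ (n : ℕ) (x : AddCircle T), fourier (n : ℤ) x = (fourier 1 x : ℂ) ^ n := by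
    intro n x
    induction n with
    | zero => simp
    | succ n ih => rw [Nat.cast_succ, fourier_add, ih, pow_succ]
  induction hP using Submodule.span_induction with
  | mem P hP =>
    obtain ⟨k, rfl⟩ := hP
    rcases Int.eq_nat_or_neg k with ⟨n, rfl | rfl⟩
    · exact ⟨fun z => z ^ n, fun _ => 0, by fun_prop, by fun_prop, fun x => by simp [hpow n x]⟩
    · exact ⟨fun _ => 0, fun z => z ^ n, by fun_prop, by fun_prop, fun x => by
        rw [fourier_neg, hpow n x]; simp⟩
  | zero => exact ⟨fun _ => 0, fun _ => 0, by fun_prop, by fun_prop, fun x => by simp⟩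
  | add P Q _ _ hP hQ =>
    obtain ⟨h₁, h₂, d₁, d₂, h⟩ := hP
    obtain ⟨k₁, k₂, e₁, e₂, k⟩ := hQ
    refine ⟨fun z => h₁ z + k₁ z, fun z => h₂ z + k₂ z, by fun_prop, by fun_prop, fun x => ?_⟩
    simp only [ContinuousMap.add_apply, h, k, map_add]
    ring
  | smul a P _ hP =>
    obtain ⟨h₁, h₂, d₁, d₂, h⟩ := hP
    refine ⟨fun z => a * h₁ z, fun z => (starRingEnd ℂ) a * h₂ z, by fun_prop, by fun_prop,
      fun x => ?_⟩
    simp only [ContinuousMap.smul_apply, h, map_mul, Complex.conj_conj, smul_eq_mul]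
    ring

theorem exists_differentiable_abs_re_sub_le {g : ℂ → ℝ} (hg : Continuous g) (c : ℂ) {R : ℝ}
    (hR : 0 < R) {ε : ℝ} (hε : 0 < ε) :
    ∃ h : ℂ → ℂ, Differentiable ℂ h ∧ ∀ z ∈ sphere c R, |(h z).re - g z| ≤ ε := by
  have : Fact (0 < 2 * Real.pi) := ⟨Real.two_pi_pos⟩
  let G : C(AddCircle (2 * Real.pi), ℂ) :=
    ⟨fun x => (g (c + R * (fourier 1 x : ℂ)) : ℂ), by fun_prop⟩
  have hG : G ∈ (Submodule.span ℂ (range (@fourier (2 * Real.pi)))).topologicalClosure := by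
    rw [span_fourier_closure_eq_top]; trivial
  obtain ⟨P, hP, hPG⟩ := Metric.mem_closure_iff.1 hG ε hε
  obtain ⟨h₁, h₂, d₁, d₂, hPh⟩ := exists_differentiable_of_mem_span_fourier hP
  refine ⟨fun z => h₁ ((z - c) / R) + h₂ ((z - c) / R), by fun_prop, fun z hz => ?_⟩
  obtain ⟨θ, rfl⟩ : z ∈ range (circleMap c R) := by rwa [range_circleMap, abs_of_pos hR]
  have hR' : (R : ℂ) ≠ 0 := Complex.ofReal_ne_zero.2 hR.ne'
  have hfourier : (fourier 1 (θ : AddCircle (2 * Real.pi)) : ℂ) = Complex.exp (θ * Complex.I) := by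
    have : (Real.pi : ℂ) ≠ 0 := Complex.ofReal_ne_zero.2 Real.pi_ne_zero
    rw [fourier_coe_apply]
    congr 1
    push_cast
    field_simp
  have hcircle : (circleMap c R θ - c) / R = fourier 1 (θ : AddCircle (2 * Real.pi)) := by
    rw [hfourier, circleMap, add_sub_cancel_left, mul_div_cancel_left₀ _ hR']
  have hre : (P θ - G θ).re = (h₁ ((circleMap c R θ - c) / R) +
      h₂ ((circleMap c R θ - c) / R)).re - g (circleMap c R θ) := by
    rw [hcircle, Complex.sub_re, hPh, Complex.add_re, Complex.add_re, Complex.conj_re]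
    simp only [G, ContinuousMap.coe_mk, hfourier, Complex.ofReal_re, circleMap]
  calc |_ - g (circleMap c R θ)| = |(P θ - G θ).re| := by rw [hre]
    _ ≤ ‖P θ - G θ‖ := Complex.abs_re_le_norm _
    _ = dist (G θ) (P θ) := by rw [dist_comm, dist_eq_norm]
    _ ≤ ε := (ContinuousMap.dist_apply_le_dist _).trans hPG.le

theorem circleAverage_re_of_differentiable {h : ℂ → ℂ} (hd : Differentiable ℂ h) (c : ℂ) (r : ℝ) :
    Real.circleAverage (fun z => (h z).re) c r = (h c).re := by
  have hcomm := Complex.reCLM.circleAverage_comp_comm (f := h) (c := c) (R := r)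
    hd.continuous.continuousOn.circleIntegrable'
  rw [hd.diffContOnCl.circleAverage] at hcomm
  simpa [Function.comp_def] using hcomm

/-- The sub-mean value inequality on every closed disc contained in `s`. For upper semicontinuous
functions this is the global form of `SubharmonicOn`. -/
def SubmeanOn (v : ℂ → ℝ) (s : Set ℂ) : Prop :=
  ∀ (c : ℂ) (R : ℝ), 0 < R → closedBall c R ⊆ s → v c ≤ Real.circleAverage v c R

section LocalToGlobal

variable {v : ℂ → ℝ} {C : ℝ} {s : Set ℂ}

-- Up to a small error the boundary values of `g` are those of the real part of an entire function,
-- which dominates `v` on the disc by the maximum principle and satisfies the mean value property.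
theorem le_circleAverage_of_le_continuous (husc : UpperSemicontinuous v) (hC : ∀ z, |v z| ≤ C)
    (hloc : ∀ z ∈ s, ∀ᶠ r in 𝓝[>] (0 : ℝ), v z ≤ Real.circleAverage v z r) {c : ℂ} {R : ℝ}
    (hR : 0 < R) (hs : closedBall c R ⊆ s) {g : ℂ → ℝ} (hg : Continuous g)
    (hvg : ∀ z ∈ sphere c R, v z ≤ g z) : v c ≤ Real.circleAverage g c R := by
  refine le_of_forall_pos_le_add fun ε hε => ?_
  obtain ⟨h, hd, happrox⟩ := exists_differentiable_abs_re_sub_le hg c hR (half_pos hε)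
  have hcont : Continuous fun z => (h z).re := Complex.continuous_re.comp hd.continuous
  have havg : ∀ {φ : ℂ → ℝ} (_ : Continuous φ) (z : ℂ) (r : ℝ),
      Real.circleAverage (fun z => φ z + ε / 2) z r = Real.circleAverage φ z r + ε / 2 :=
    fun hφ z r => by
      rw [Real.circleAverage_fun_add hφ.continuousOn.circleIntegrable'
        continuous_const.continuousOn.circleIntegrable', Real.circleAverage_const]
  have hdisc : ∀ z ∈ closedBall c R, v z ≤ (h z).re + ε / 2 := by
    refine le_of_local_submean (isCompact_closedBall c R) isOpen_ball ball_subset_closedBall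
      (husc.upperSemicontinuousOn _) (hcont.add continuous_const).continuousOn
      (fun z hz => (hloc z (hs (ball_subset_closedBall hz))).mono fun r hr =>
        ⟨circleIntegrable_of_abs_le husc.measurable hC z r, hr⟩)
      (fun z _ => Eventually.of_forall fun r => ?_) fun z hz => ?_
    · rw [havg hcont, circleAverage_re_of_differentiable hd]
    · rw [closedBall_sdiff_ball] at hz
      linarith [hvg z hz, (abs_le.1 (happrox z hz)).1]
  have hcenter : (h c).re ≤ Real.circleAverage g c R + ε / 2 := by
    rw [← circleAverage_re_of_differentiable hd c R, ← havg hg]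
    refine Real.circleAverage_mono hcont.continuousOn.circleIntegrable'
      (hg.add continuous_const).continuousOn.circleIntegrable' fun z hz => ?_
    rw [abs_of_pos hR] at hz
    linarith [(abs_le.1 (happrox z hz)).2]
  linarith [hdisc c (mem_closedBall_self hR.le)]

theorem SubmeanOn.of_local (husc : UpperSemicontinuous v) (hC : ∀ z, |v z| ≤ C)
    (hloc : ∀ z ∈ s, ∀ᶠ r in 𝓝[>] (0 : ℝ), v z ≤ Real.circleAverage v z r) : SubmeanOn v s := by
  intro c R hR hs
  have hle : ∀ z, v z ≤ C := fun z => (abs_le.1 (hC z)).2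
  have hcont : ∀ L, Continuous (lipschitzMajorant v L) := fun L =>
    (lipschitzWith_lipschitzMajorant hle L).continuous
  have hbound : ∀ L z, |lipschitzMajorant v L z| ≤ C := fun L z =>
    abs_le.2 ⟨(abs_le.1 (hC z)).1.trans (le_lipschitzMajorant hle L z),
      lipschitzMajorant_le hle L z⟩
  have hlim : Tendsto (fun L => Real.circleAverage (lipschitzMajorant v L) c R) atTop
      (𝓝 (Real.circleAverage v c R)) :=
    (intervalIntegral.tendsto_integral_filter_of_dominated_convergence (fun _ => C)
      (Eventually.of_forall fun L =>
        ((hcont L).comp (continuous_circleMap c R)).aestronglyMeasurable)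
      (Eventually.of_forall fun L => ae_of_all _ fun θ _ => hbound L _) intervalIntegrable_const
      (ae_of_all _ fun θ _ =>
        tendsto_lipschitzMajorant hle (husc.upperSemicontinuousAt _))).const_smul _
  exact ge_of_tendsto' hlim fun L => le_circleAverage_of_le_continuous husc hC hloc hR hs (hcont L)
    fun z _ => le_lipschitzMajorant hle L z

end LocalToGlobal

theorem integral_nonneg_of_circleAverage_nonneg {f : ℂ → ℝ} (c : ℂ)
    (hf : ∀ r > 0, 0 ≤ Real.circleAverage f c r) : 0 ≤ ∫ z, f z := by
  rw [← integral_add_left_eq_self f c, ← Complex.integral_comp_polarCoord_symm]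
  by_cases hint : IntegrableOn (fun p : ℝ × ℝ => p.1 • f (c + Complex.polarCoord.symm p))
    polarCoord.target
  swap
  · rw [integral_undef hint]
  rw [polarCoord_target] at hint ⊢
  rw [Measure.volume_eq_prod, setIntegral_prod _ hint]
  refine setIntegral_nonneg measurableSet_Ioi fun r hr => ?_
  have hcircle : ∀ θ : ℝ, c + Complex.polarCoord.symm (r, θ) = circleMap c r θ := fun θ => by
    simp [Complex.polarCoord_symm_apply, circleMap, Complex.exp_mul_I]
  have hper : Function.Periodic (fun θ => f (circleMap c r θ)) (2 * Real.pi) := fun θ => by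
    simp only [periodic_circleMap c r θ]
  have hshift := hper.intervalIntegral_add_eq (-Real.pi) 0
  rw [show -Real.pi + 2 * Real.pi = Real.pi by ring, zero_add] at hshift
  have havg := hf r hr
  rw [Real.circleAverage_def, smul_eq_mul, ← hshift,
    intervalIntegral.integral_of_le (by linarith [Real.pi_pos]),
    integral_Ioc_eq_integral_Ioo] at havg
  simp only [hcircle, smul_eq_mul]
  rw [integral_const_mul]
  exact mul_nonneg hr.le (nonneg_of_mul_nonneg_right havg (inv_pos.2 Real.two_pi_pos))

theorem SubmeanOn.setIntegral_ball_nonneg {v : ℂ → ℝ} {s : Set ℂ} (h : SubmeanOn v s)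
    (hv : Measurable v) {C : ℝ} (hC : ∀ z, |v z| ≤ C) {c : ℂ} {r : ℝ} (hs : ball c r ⊆ s) :
    0 ≤ ∫ ζ in ball c r, (v ζ - v c) := by
  rw [← integral_indicator measurableSet_ball]
  refine integral_nonneg_of_circleAverage_nonneg c fun ρ hρ => ?_
  have hmem : ∀ z ∈ sphere c |ρ|, z ∈ ball c r ↔ ρ < r := fun z hz => by
    rw [mem_ball, mem_sphere.1 hz, abs_of_pos hρ]
  rcases lt_or_ge ρ r with hρr | hρr
  · rw [Real.circleAverage_congr_sphere (f₂ := fun z => v z - v c) fun z hz =>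
        indicator_of_mem ((hmem z hz).2 hρr) _,
      Real.circleAverage_fun_sub (circleIntegrable_of_abs_le hv hC c ρ)
        continuous_const.continuousOn.circleIntegrable', Real.circleAverage_const, sub_nonneg]
    exact h c ρ hρ ((closedBall_subset_ball hρr).trans hs)
  · rw [Real.circleAverage_congr_sphere (f₂ := fun _ => 0) fun z hz =>
        indicator_of_notMem (fun hz' => hρr.not_gt ((hmem z hz).1 hz')) _, Real.circleAverage_const]

section ReverseFatou

variable {X : Type*} [MeasurableSpace X] {μ : Measure X} [IsFiniteMeasure μ] {C : ℝ}

theorem integrable_of_abs_le {f : X → ℝ} (hf : Measurable f) (hC : ∀ x, |f x| ≤ C) :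
    Integrable f μ :=
  Integrable.of_bound hf.aestronglyMeasurable C (ae_of_all _ hC)

theorem abs_integral_le_of_abs_le {ν : Measure X} [IsProbabilityMeasure ν] {f : X → ℝ}
    (hC : ∀ x, |f x| ≤ C) : |∫ x, f x ∂ν| ≤ C := by
  simpa using norm_integral_le_of_norm_le_const (μ := ν) (f := f) (ae_of_all _ hC)

theorem lintegral_ofReal_const_sub {f : X → ℝ} (hf : Measurable f) (hC : ∀ x, |f x| ≤ C) :
    ∫⁻ x, ENNReal.ofReal (C - f x) ∂μ = ENNReal.ofReal (∫ _, C ∂μ - ∫ x, f x ∂μ) := by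
  have hint : Integrable f μ := integrable_of_abs_le hf hC
  rw [← integral_sub (integrable_const C) hint]
  exact (ofReal_integral_eq_lintegral_ofReal ((integrable_const C).sub hint)
    (ae_of_all _ fun x => sub_nonneg.2 (abs_le.1 (hC x)).2)).symm

theorem ofReal_const_sub_le_liminf {ι : Type*} {l : Filter ι} {F : ι → ℝ} {y : ℝ}
    (hF : ∀ a, y < a → ∀ᶠ i in l, F i < a) (C : ℝ) :
    ENNReal.ofReal (C - y) ≤ liminf (fun i => ENNReal.ofReal (C - F i)) l := by
  refine le_of_forall_lt fun b hb => ?_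
  obtain ⟨b', hbb', hb'⟩ := exists_between hb
  refine hbb'.trans_le (le_liminf_of_le (by isBoundedDefault) ?_)
  have hreal := (ENNReal.lt_ofReal_iff_toReal_lt (hb'.trans_le le_top).ne).1 hb'
  filter_upwards [hF (C - b'.toReal) (by linarith)] with i hi
  exact ENNReal.le_ofReal_iff_toReal_le (hb'.trans_le le_top).ne (ENNReal.toReal_nonneg.trans
    (by linarith)) |>.2 (by linarith)

theorem eventually_integral_lt {ι : Type*} {l : Filter ι} [l.IsCountablyGenerated]
    {F : ι → X → ℝ} {f : X → ℝ} (hF : ∀ i, Measurable (F i)) (hFC : ∀ i x, |F i x| ≤ C)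
    (hf : Measurable f) (hfC : ∀ x, |f x| ≤ C)
    (hlim : ∀ᵐ x ∂μ, ∀ a, f x < a → ∀ᶠ i in l, F i x < a) {a : ℝ} (ha : ∫ x, f x ∂μ < a) :
    ∀ᶠ i in l, ∫ x, F i x ∂μ < a := by
  by_cases! hneg : ∫ _, C ∂μ < a
  · refine Eventually.of_forall fun i => lt_of_le_of_lt ?_ hneg
    exact integral_mono (integrable_of_abs_le (hF i) (hFC i)) (integrable_const C)
      fun x => (abs_le.1 (hFC i x)).2
  have hfatou : ENNReal.ofReal (∫ _, C ∂μ - ∫ x, f x ∂μ) ≤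
      liminf (fun i => ENNReal.ofReal (∫ _, C ∂μ - ∫ x, F i x ∂μ)) l := by
    simp only [← lintegral_ofReal_const_sub hf hfC, ← lintegral_ofReal_const_sub (hF _) (hFC _)]
    refine le_trans (lintegral_mono_ae ?_) (lintegral_liminf_le fun i =>
      (measurable_const.sub (hF i)).ennreal_ofReal)
    filter_upwards [hlim] with x hx using ofReal_const_sub_le_liminf hx C
  have hlt : ENNReal.ofReal (∫ _, C ∂μ - a) < ENNReal.ofReal (∫ _, C ∂μ - ∫ x, f x ∂μ) :=
    (ENNReal.ofReal_lt_ofReal_iff_of_nonneg (sub_nonneg.2 hneg)).2 (by linarith)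
  filter_upwards [eventually_lt_of_lt_liminf (hlt.trans_le hfatou)] with i hi
  rw [ENNReal.ofReal_lt_ofReal_iff_of_nonneg (sub_nonneg.2 hneg)] at hi
  linarith

theorem upperSemicontinuous_integral {Y : Type*} [TopologicalSpace Y] [FirstCountableTopology Y]
    {F : X → Y → ℝ} (hF : ∀ y, Measurable fun x => F x y) (hC : ∀ x y, |F x y| ≤ C)
    (husc : ∀ x, UpperSemicontinuous (F x)) : UpperSemicontinuous fun y => ∫ x, F x y ∂μ :=
  fun y => upperSemicontinuousAt_iff.2 fun _ => eventually_integral_lt (F := fun y x => F x y) hF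
    (fun y x => hC x y) (hF y) (hC · y)
    (ae_of_all _ fun x => upperSemicontinuousAt_iff.1 ((husc x).upperSemicontinuousAt y))

end ReverseFatou

theorem abs_circleAverage_le {v : ℂ → ℝ} (hv : Measurable v) {C : ℝ} (hC : ∀ z, |v z| ≤ C)
    (c : ℂ) (r : ℝ) : |Real.circleAverage v c r| ≤ C :=
  Real.abs_circleAverage_le_circleAverage_abs.trans <| Real.circleAverage_mono_on_of_le_circle
    (circleIntegrable_of_abs_le hv.abs (by simpa using hC) c r) fun z _ => hC z

section IntegralOfFamily

variable {X : Type*} [MeasurableSpace X] {μ : Measure X} {F : X → ℂ → ℝ} {C : ℝ}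

theorem measurable_circleAverage (hF : Measurable (Function.uncurry F)) (c : ℂ) (r : ℝ) :
    Measurable fun x => Real.circleAverage (F x) c r := by
  simp only [Real.circleAverage_def, smul_eq_mul,
    intervalIntegral.integral_of_le Real.two_pi_pos.le]
  have hpair : Measurable fun p : X × ℝ => (p.1, circleMap c r p.2) := by fun_prop
  exact (hF.comp hpair).stronglyMeasurable.integral_prod_right'.measurable.const_mul _

theorem circleAverage_integral [IsFiniteMeasure μ] (hF : Measurable (Function.uncurry F))
    (hC : ∀ x y, |F x y| ≤ C) (c : ℂ) (r : ℝ) :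
    Real.circleAverage (fun z => ∫ x, F x z ∂μ) c r = ∫ x, Real.circleAverage (F x) c r ∂μ := by
  have hpair : Measurable fun p : ℝ × X => (p.2, circleMap c r p.1) := by fun_prop
  simp only [Real.circleAverage_def, smul_eq_mul, integral_const_mul,
    intervalIntegral.integral_of_le Real.two_pi_pos.le]
  congr 1
  exact integral_integral_swap (f := fun θ x => F x (circleMap c r θ))
    (integrable_of_abs_le (hF.comp hpair) fun p => hC _ _)

theorem SubmeanOn.integral [IsFiniteMeasure μ] {s : Set ℂ} (hF : Measurable (Function.uncurry F))
    (hC : ∀ x y, |F x y| ≤ C) (hs : ∀ᵐ x ∂μ, SubmeanOn (F x) s) :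
    SubmeanOn (fun z => ∫ x, F x z ∂μ) s := by
  intro c r hr hcs
  rw [circleAverage_integral hF hC]
  exact integral_mono_ae (integrable_of_abs_le hF.of_uncurry_right fun x => hC x c)
    (integrable_of_abs_le (measurable_circleAverage hF c r) fun x =>
      abs_circleAverage_le hF.of_uncurry_left (hC x) c r)
    (hs.mono fun x hx => hx c r hr hcs)

end IntegralOfFamily

/-! ### Logarithmic potentials -/

theorem setIntegral_closedBall_comp_abs_sub (f : ℝ → ℝ) (x : ℝ) {a : ℝ} (ha : 0 ≤ a) :
    ∫ t in closedBall x a, f |x - t| = 2 * ∫ t in (0 : ℝ)..a, f t := by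
  have hind : (closedBall x a).indicator (fun t => f |x - t|) =
      fun t => (Iic a).indicator f |x - t| := by
    ext t
    simp only [indicator, mem_closedBall', Real.dist_eq, mem_Iic]
  rw [← integral_indicator measurableSet_closedBall, hind,
    integral_sub_left_eq_self (fun t => (Iic a).indicator f |t|) volume x, integral_comp_abs,
    setIntegral_indicator measurableSet_Iic, Ioi_inter_Iic, intervalIntegral.integral_of_le ha]

theorem setIntegral_closedBall_abs_sub_rpow (x : ℝ) {r : ℝ} (hr : -1 < r) :
    ∫ t in closedBall x 1, |x - t| ^ r = 2 / (r + 1) := by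
  rw [setIntegral_closedBall_comp_abs_sub (fun t => t ^ r) x zero_le_one,
    integral_rpow (Or.inl hr), Real.one_rpow, Real.zero_rpow (by linarith)]
  ring

theorem norm_ofReal_sub_ofReal (x t : ℝ) : ‖(x : ℂ) - t‖ = |x - t| := by
  rw [← Complex.ofReal_sub, Complex.norm_real, Real.norm_eq_abs]

/-- The logarithmic potential of the Lebesgue measure on a set of reals, with the sign that makes
it subharmonic. -/
def logPotential (K : Set ℝ) (z : ℂ) : ℝ := ∫ t in K, Real.log ‖z - t‖

section LogPotential

variable {K : Set ℝ} {z : ℂ} {a : ℝ}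

theorem integrableOn_log_norm_sub (hK : Bornology.IsBounded K) (z : ℂ) :
    IntegrableOn (fun t : ℝ => Real.log ‖z - t‖) K := by
  obtain ⟨R, hR⟩ := hK.subset_closedBall 0
  refine IntegrableOn.mono_set ?_ (hR.trans (closedBall_subset_closedBall (le_abs_self R)))
  rw [Real.closedBall_eq_Icc, ← intervalIntegrable_iff_integrableOn_Icc_of_le (by simp)]
  exact MeromorphicOn.intervalIntegrable_log_norm (f := fun t : ℝ => z - (t : ℂ)) fun t _ =>
    (analyticAt_const.sub (Complex.ofRealCLM.analyticAt t)).meromorphicAt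

theorem ae_norm_sub_ofReal_pos (z : ℂ) : ∀ᵐ t : ℝ, 0 < ‖z - t‖ := by
  have hne : ∀ᵐ t : ℝ, t ≠ z.re := by simp [ae_iff]
  filter_upwards [hne] with t ht
  exact norm_pos_iff.2 (sub_ne_zero.2 fun h => ht (by simp [h]))

theorem measureReal_mul_log_le_logPotential (hK : Bornology.IsBounded K) (hm : MeasurableSet K)
    (ha : 0 < a) (h : ∀ t ∈ K, a ≤ ‖z - t‖) : volume.real K * Real.log a ≤ logPotential K z := by
  have hconst : ∫ _ in K, Real.log a = volume.real K * Real.log a := by simp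
  rw [← hconst]
  exact setIntegral_mono_on (integrableOn_const hK.measure_lt_top.ne)
    (integrableOn_log_norm_sub hK z) hm fun t ht => Real.log_le_log ha (h t ht)

theorem logPotential_le_measureReal_mul_log (hK : Bornology.IsBounded K) (hm : MeasurableSet K)
    (h : ∀ t ∈ K, ‖z - t‖ ≤ a) : logPotential K z ≤ volume.real K * Real.log a := by
  have hconst : ∫ _ in K, Real.log a = volume.real K * Real.log a := by simp
  rw [← hconst]
  refine integral_mono_ae (integrableOn_log_norm_sub hK z)
    (integrableOn_const hK.measure_lt_top.ne) ?_
  filter_upwards [ae_restrict_of_ae (ae_norm_sub_ofReal_pos z), ae_restrict_mem hm] with t ht htK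
    using Real.log_le_log ht (h t htK)

theorem logPotential_sdiff {G : Set ℝ} (hK : Bornology.IsBounded K) (hG : MeasurableSet G)
    (hGK : G ⊆ K) (z : ℂ) : logPotential (K \ G) z = logPotential K z - logPotential G z :=
  setIntegral_sdiff hG (integrableOn_log_norm_sub hK z) hGK

theorem volume_real_closedBall (x : ℝ) (ha : 0 ≤ a) : volume.real (closedBall x a) = 2 * a := by
  rw [measureReal_def, Real.volume_closedBall, ENNReal.toReal_ofReal (by positivity)]

theorem logPotential_closedBall_self (x : ℝ) (ha : 0 < a) :
    logPotential (closedBall x a) x = 2 * a * Real.log a - 2 * a := by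
  simp only [logPotential, norm_ofReal_sub_ofReal]
  rw [setIntegral_closedBall_comp_abs_sub Real.log x ha.le, integral_log]
  ring

theorem norm_re_sub_le_norm_sub (z : ℂ) (t : ℝ) : ‖(z.re : ℂ) - t‖ ≤ ‖z - t‖ := by
  rw [norm_ofReal_sub_ofReal]
  simpa using Complex.abs_re_le_norm (z - t)

theorem indicator_log_sub_log_norm_le (ha : 0 < a) {t : ℝ} (ht : 0 < ‖(z.re : ℂ) - t‖) :
    K.indicator (fun t : ℝ => Real.log a - Real.log ‖z - t‖) t ≤
      (closedBall z.re a).indicator (fun t : ℝ => Real.log a - Real.log ‖(z.re : ℂ) - t‖) t := by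
  have hlog := Real.log_le_log ht (norm_re_sub_le_norm_sub z t)
  have hmem : t ∈ closedBall z.re a ↔ ‖(z.re : ℂ) - t‖ ≤ a := by
    rw [mem_closedBall', ← Complex.isometry_ofReal.dist_eq, dist_eq_norm]
  by_cases hball : t ∈ closedBall z.re a
  · have hnonneg := Real.log_le_log ht (hmem.1 hball)
    rw [indicator_of_mem hball]
    refine indicator_apply_le' (fun _ => ?_) fun _ => ?_ <;> linarith
  · have hneg := Real.log_le_log ha (not_le.1 (mt hmem.2 hball)).le
    rw [indicator_of_notMem hball]
    refine indicator_apply_le' (fun _ => ?_) fun _ => le_rfl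
    linarith

-- Equality holds for the interval of radius `a` centred at the real part of `z`, which minimises
-- the potential among the sets of its length.
theorem measureReal_mul_log_sub_le_logPotential (hK : Bornology.IsBounded K) (hm : MeasurableSet K)
    (z : ℂ) (ha : 0 < a) : volume.real K * Real.log a - 2 * a ≤ logPotential K z := by
  have hint : ∀ {A : Set ℝ} (_ : Bornology.IsBounded A) (w : ℂ),
      IntegrableOn (fun t : ℝ => Real.log a - Real.log ‖w - t‖) A ∧
      ∫ t in A, (Real.log a - Real.log ‖w - t‖) =
        volume.real A * Real.log a - logPotential A w := fun {A} hA w => by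
    have hc : IntegrableOn (fun _ : ℝ => Real.log a) A := integrableOn_const hA.measure_lt_top.ne
    refine ⟨hc.sub (integrableOn_log_norm_sub hA w), ?_⟩
    rw [integral_sub hc (integrableOn_log_norm_sub hA w), setIntegral_const, smul_eq_mul]
    rfl
  obtain ⟨hKint, hKeq⟩ := hint hK z
  obtain ⟨hBint, hBeq⟩ := hint (isBounded_closedBall (x := z.re) (r := a)) z.re
  have hmono : volume.real K * Real.log a - logPotential K z ≤ 2 * a * Real.log a -
      (2 * a * Real.log a - 2 * a) := by
    rw [← logPotential_closedBall_self z.re ha, ← volume_real_closedBall z.re ha.le, ← hKeq,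
      ← hBeq, ← integral_indicator hm, ← integral_indicator measurableSet_closedBall]
    refine integral_mono_ae ((integrable_indicator_iff hm).2 hKint)
      ((integrable_indicator_iff measurableSet_closedBall).2 hBint) ?_
    filter_upwards [ae_norm_sub_ofReal_pos z.re] with t ht
      using indicator_log_sub_log_norm_le ha ht
  linarith

theorem log_one_add_le_two_mul_sqrt {y : ℝ} (hy : 0 ≤ y) : Real.log (1 + y) ≤ 2 * √y := by
  have hsq : 1 + y ≤ (1 + √y) ^ 2 := by nlinarith [Real.sq_sqrt hy, Real.sqrt_nonneg y]
  calc Real.log (1 + y) ≤ Real.log ((1 + √y) ^ 2) := Real.log_le_log (by linarith) hsq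
    _ = 2 * Real.log (1 + √y) := by rw [Real.log_pow]; norm_num
    _ ≤ 2 * √y := by linarith [Real.log_le_sub_one_of_pos (x := 1 + √y) (by positivity)]

theorem log_norm_sub_sub_log_norm_sub_le {z w : ℂ} {t : ℝ} (hz : 0 < ‖z - t‖)
    (hw : 0 < ‖(w.re : ℂ) - t‖) : Real.log ‖z - t‖ - Real.log ‖w - t‖ ≤
      2 * √‖z - w‖ * |w.re - t| ^ (-(1 / 2) : ℝ) := by
  have hre := norm_ofReal_sub_ofReal w.re t
  have hle : |w.re - t| ≤ ‖w - t‖ := hre ▸ norm_re_sub_le_norm_sub w t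
  rw [hre] at hw
  have hwt : 0 < ‖w - t‖ := hw.trans_le hle
  have hratio : ‖z - t‖ / ‖w - t‖ ≤ 1 + ‖z - w‖ / |w.re - t| := by
    have htri : ‖z - t‖ ≤ ‖w - t‖ + ‖z - w‖ := by
      simpa [add_comm] using norm_sub_le_norm_sub_add_norm_sub z w (t : ℂ)
    calc ‖z - t‖ / ‖w - t‖ ≤ (‖w - t‖ + ‖z - w‖) / ‖w - t‖ := by gcongr
      _ = 1 + ‖z - w‖ / ‖w - t‖ := by rw [add_div, div_self hwt.ne']
      _ ≤ 1 + ‖z - w‖ / |w.re - t| := by gcongr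
  calc Real.log ‖z - t‖ - Real.log ‖w - t‖ = Real.log (‖z - t‖ / ‖w - t‖) :=
        (Real.log_div hz.ne' hwt.ne').symm
    _ ≤ Real.log (1 + ‖z - w‖ / |w.re - t|) := Real.log_le_log (by positivity) hratio
    _ ≤ 2 * √(‖z - w‖ / |w.re - t|) := log_one_add_le_two_mul_sqrt (by positivity)
    _ = 2 * √‖z - w‖ * |w.re - t| ^ (-(1 / 2) : ℝ) := by
      rw [Real.sqrt_div (norm_nonneg _), Real.rpow_neg hw.le, ← Real.sqrt_eq_rpow]; ring

theorem setIntegral_abs_sub_rpow_neg_half_le (hK : Bornology.IsBounded K) (x : ℝ) :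
    IntegrableOn (fun t => |x - t| ^ (-(1 / 2) : ℝ)) K ∧
      ∫ t in K, |x - t| ^ (-(1 / 2) : ℝ) ≤ 4 + volume.real K := by
  set φ : ℝ → ℝ := fun t => |x - t| ^ (-(1 / 2) : ℝ)
  set B : Set ℝ := closedBall x 1
  have hφ : ∀ t, 0 ≤ φ t := fun t => Real.rpow_nonneg (abs_nonneg _) _
  have hball : ∫ t in B, φ t = 4 := by
    rw [setIntegral_closedBall_abs_sub_rpow x (by norm_num)]; norm_num
  have hBint : Integrable (B.indicator φ) := (integrable_indicator_iff measurableSet_closedBall).2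
    (Integrable.of_integral_ne_zero (by rw [hball]; norm_num))
  have hone : IntegrableOn (fun _ => (1 : ℝ)) K := integrableOn_const hK.measure_lt_top.ne
  have hle : ∀ t, φ t ≤ B.indicator φ t + 1 := fun t => by
    by_cases ht : t ∈ B
    · rw [indicator_of_mem ht]; linarith
    · rw [indicator_of_notMem ht, zero_add]
      refine Real.rpow_le_one_of_one_le_of_nonpos ?_ (by norm_num)
      rw [mem_closedBall', Real.dist_eq, not_le] at ht
      exact ht.le
  have hφint : IntegrableOn φ K := (hBint.integrableOn.add hone).mono'
    (by fun_prop) (ae_of_all _ fun t => (Real.norm_of_nonneg (hφ t)).le.trans (hle t))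
  refine ⟨hφint, (integral_mono hφint (hBint.integrableOn.add hone) hle).trans ?_⟩
  rw [integral_add' hBint.integrableOn hone, setIntegral_const, smul_eq_mul, mul_one]
  gcongr
  rw [← hball, ← integral_indicator measurableSet_closedBall]
  exact setIntegral_le_integral hBint (ae_of_all _ fun t => indicator_nonneg (fun t _ => hφ t) t)

theorem logPotential_sub_le (hK : Bornology.IsBounded K) (z w : ℂ) :
    logPotential K z - logPotential K w ≤ 2 * (4 + volume.real K) * √‖z - w‖ := by
  have hz := integrableOn_log_norm_sub hK z
  have hw := integrableOn_log_norm_sub hK w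
  obtain ⟨hφ, hle⟩ := setIntegral_abs_sub_rpow_neg_half_le hK w.re
  calc logPotential K z - logPotential K w
      = ∫ t in K, (Real.log ‖z - t‖ - Real.log ‖w - t‖) := (integral_sub hz hw).symm
    _ ≤ ∫ t in K, 2 * √‖z - w‖ * |w.re - t| ^ (-(1 / 2) : ℝ) := by
      refine integral_mono_ae (hz.sub hw) (hφ.const_mul _) (ae_restrict_of_ae ?_)
      filter_upwards [ae_norm_sub_ofReal_pos z, ae_norm_sub_ofReal_pos w.re] with t hzt hwt
        using log_norm_sub_sub_log_norm_sub_le hzt hwt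
    _ = 2 * √‖z - w‖ * ∫ t in K, |w.re - t| ^ (-(1 / 2) : ℝ) := integral_const_mul _ _
    _ ≤ 2 * √‖z - w‖ * (4 + volume.real K) := by gcongr
    _ = _ := by ring

theorem continuous_logPotential (hK : Bornology.IsBounded K) : Continuous (logPotential K) := by
  refine continuous_iff_continuousAt.2 fun z => tendsto_iff_norm_sub_tendsto_zero.2 ?_
  have hlim : Tendsto (fun w => 2 * (4 + volume.real K) * √‖w - z‖) (𝓝 z) (𝓝 0) := by
    have hcont : Continuous fun w => 2 * (4 + volume.real K) * √‖w - z‖ := by fun_prop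
    simpa using hcont.tendsto z
  refine squeeze_zero (fun _ => norm_nonneg _) (fun w => abs_sub_le_iff.2
    ⟨logPotential_sub_le hK w z, ?_⟩) hlim
  rw [norm_sub_rev]
  exact logPotential_sub_le hK z w

theorem circleAverage_log_norm_sub_of_lt {z w : ℂ} {r : ℝ} (hr : 0 < r) (hw : r < ‖z - w‖) :
    Real.circleAverage (fun ζ => Real.log ‖ζ - w‖) z r = Real.log ‖z - w‖ := by
  have hratio : 1 ≤ |r⁻¹ * ‖z - w‖| := by
    rw [abs_of_pos (mul_pos (inv_pos.2 hr) (hr.trans hw)), inv_mul_eq_div, le_div_iff₀ hr]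
    linarith
  rw [circleAverage_log_norm_sub_const_eq_log_radius_add_posLog hr.ne', Real.posLog_eq_log hratio,
    Real.log_mul (inv_ne_zero hr.ne') (hr.trans hw).ne', Real.log_inv]
  ring

theorem circleAverage_logPotential (hK : IsCompact K) {r : ℝ} (hr : 0 < r)
    (hd : ∀ t ∈ K, (t : ℂ) ∉ closedBall z r) :
    Real.circleAverage (logPotential K) z r = logPotential K z := by
  have hcont : ContinuousOn (fun p : ℝ × ℝ => Real.log ‖circleMap z r p.1 - p.2‖)
      (Icc 0 (2 * Real.pi) ×ˢ K) := by
    refine ContinuousOn.log (by fun_prop) fun p hp h => ?_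
    refine hd p.2 hp.2 ?_
    rw [← sub_eq_zero.1 (norm_eq_zero.1 h)]
    exact circleMap_mem_closedBall z hr.le p.1
  have hint : Integrable (fun p : ℝ × ℝ => Real.log ‖circleMap z r p.1 - p.2‖)
      ((volume.restrict (Ioc 0 (2 * Real.pi))).prod (volume.restrict K)) := by
    rw [Measure.prod_restrict]
    exact (hcont.integrableOn_compact (isCompact_Icc.prod hK)).mono_set
      (prod_mono_left Ioc_subset_Icc_self)
  calc Real.circleAverage (logPotential K) z r
      = ∫ t in K, Real.circleAverage (fun ζ => Real.log ‖ζ - t‖) z r := by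
        simp only [Real.circleAverage_def, logPotential, smul_eq_mul, integral_const_mul,
          intervalIntegral.integral_of_le Real.two_pi_pos.le]
        rw [integral_integral_swap hint]
    _ = logPotential K z := setIntegral_congr_fun hK.measurableSet fun t ht =>
        circleAverage_log_norm_sub_of_lt hr <| by
          simpa [dist_comm z, dist_eq_norm, norm_sub_rev z] using hd t ht

end LogPotential

theorem le_add_mul_logPotential {v : ℂ → ℝ} (husc : UpperSemicontinuous v) {C : ℝ}
    (hC : ∀ z, |v z| ≤ C) {s : Set ℂ} (hsub : SubmeanOn v s) {c : ℂ} {R : ℝ}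
    (hs : closedBall c R ⊆ s) {G : Set ℝ} (hG : IsCompact G) {α β : ℝ}
    (hsph : ∀ z ∈ sphere c R, v z ≤ β + α * logPotential G z)
    (hGv : ∀ t ∈ G, v t ≤ β + α * logPotential G t) :
    ∀ z ∈ closedBall c R, v z ≤ β + α * logPotential G z := by
  have hcont : Continuous fun z => α * logPotential G z :=
    continuous_const.mul (continuous_logPotential hG.isBounded)
  set O : Set ℂ := ball c R ∩ ((fun t : ℝ => (t : ℂ)) '' G)ᶜ
  have hO : IsOpen O :=
    isOpen_ball.inter (hG.image Complex.continuous_ofReal).isClosed.isOpen_compl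
  have hdisc : ∀ z ∈ O, ∀ᶠ r in 𝓝[>] (0 : ℝ), 0 < r ∧ closedBall z r ⊆ O := fun z hz =>
    (eventually_mem_nhdsWithin).and ((eventually_closedBall_subset (hO.mem_nhds hz)).filter_mono
      nhdsWithin_le_nhds)
  have hOball : O ⊆ closedBall c R := inter_subset_left.trans ball_subset_closedBall
  refine le_of_local_submean (isCompact_closedBall c R) hO hOball (husc.upperSemicontinuousOn _)
    (continuous_const.add hcont).continuousOn (fun z hz => ?_) (fun z hz => ?_) fun z hz => ?_
  · filter_upwards [hdisc z hz] with r ⟨hr, hrO⟩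
    exact ⟨circleIntegrable_of_abs_le husc.measurable hC z r,
      hsub z r hr ((hrO.trans hOball).trans hs)⟩
  · filter_upwards [hdisc z hz] with r ⟨hr, hrO⟩
    have havg := Real.circleAverage_fun_smul (a := α) (f := logPotential G) (c := z) (R := r)
    rw [circleAverage_logPotential hG hr fun t ht hmem => (hrO hmem).2 ⟨t, ht, rfl⟩] at havg
    rw [Real.circleAverage_fun_add continuous_const.continuousOn.circleIntegrable'
      hcont.continuousOn.circleIntegrable', Real.circleAverage_const]
    exact (congrArg (β + ·) havg).le
  · by_cases hball : z ∈ ball c R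
    · obtain ⟨t, ht, rfl⟩ : z ∈ (fun t : ℝ => (t : ℂ)) '' G := not_not.1 fun h => hz.2 ⟨hball, h⟩
      exact hGv t ht
    · exact hsph z (closedBall_sdiff_ball (x := c) ▸ ⟨hz.1, hball⟩)

theorem logPotential_closedBall_self_le {a : ℝ} (ha : 0 < a) (x : ℝ) (z : ℂ) :
    logPotential (closedBall x a) x ≤ logPotential (closedBall x a) z := by
  rw [logPotential_closedBall_self x ha, ← volume_real_closedBall x ha.le]
  nth_rw 2 [volume_real_closedBall x ha.le]
  exact measureReal_mul_log_sub_le_logPotential isBounded_closedBall measurableSet_closedBall z ha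

theorem logPotential_closedBall_self_add_le {a : ℝ} (ha : 0 < a) {x : ℝ} {z : ℂ}
    (hz : 2 * a ≤ ‖z - x‖) :
    logPotential (closedBall x a) x + 2 * a ≤ logPotential (closedBall x a) z := by
  have hfar : volume.real (closedBall x a) * Real.log a ≤ logPotential (closedBall x a) z := by
    refine measureReal_mul_log_le_logPotential isBounded_closedBall measurableSet_closedBall ha
      fun t ht => ?_
    have htri := norm_sub_le_norm_sub_add_norm_sub z t (x : ℂ)
    rw [norm_ofReal_sub_ofReal] at htri
    have := mem_closedBall.1 ht
    rw [Real.dist_eq] at this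
    linarith
  rw [volume_real_closedBall x ha.le] at hfar
  linarith [logPotential_closedBall_self x ha]

theorem neg_four_mul_sqrt_le_logPotential {K : Set ℝ} (hK : Bornology.IsBounded K)
    (hm : MeasurableSet K) {δ : ℝ} (hδ : 0 < δ) (hδ1 : δ ≤ 1) (hvol : volume.real K ≤ δ) (z : ℂ) :
    -(4 * √δ) ≤ logPotential K z := by
  have hbathtub := measureReal_mul_log_sub_le_logPotential hK hm z hδ
  have hmul : δ * Real.log δ ≤ volume.real K * Real.log δ :=
    mul_le_mul_of_nonpos_right hvol (Real.log_nonpos hδ.le hδ1)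
  have hsqrt : 0 < √δ := Real.sqrt_pos.2 hδ
  have hsq : √δ * √δ = δ := Real.mul_self_sqrt hδ.le
  have hlog : -(2 * √δ) ≤ δ * Real.log δ := by
    have hinv := Real.one_sub_inv_le_log_of_pos hsqrt
    have hmulinv : δ * (√δ)⁻¹ = √δ := by rw [← div_eq_mul_inv, Real.div_sqrt]
    rw [Real.log_sqrt hδ.le] at hinv
    nlinarith
  nlinarith [Real.sqrt_le_one.2 hδ1]

theorem exists_isCompact_volume_sdiff_lt {g : ℝ → ℝ} (hg : Measurable g) {S : Set ℝ}
    (hS : MeasurableSet S) (hfin : volume S ≠ ⊤) {M : ℝ} {δ : ENNReal}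
    (hbad : volume {t ∈ S | M < g t} < δ) :
    ∃ G ⊆ S, IsCompact G ∧ (∀ t ∈ G, g t ≤ M) ∧ volume (S \ G) < δ := by
  have hA : MeasurableSet {t ∈ S | g t ≤ M} := hS.inter (measurableSet_le hg measurable_const)
  obtain ⟨G, hGA, hGc, hGlt⟩ := hA.exists_isCompact_sdiff_lt (μ := volume)
    (measure_ne_top_of_subset (fun t ht => ht.1) hfin) (tsub_pos_of_lt hbad).ne'
  refine ⟨G, fun t ht => (hGA ht).1, hGc, fun t ht => (hGA ht).2, ?_⟩
  have hcover : S \ G ⊆ {t ∈ S | M < g t} ∪ ({t ∈ S | g t ≤ M} \ G) := fun t ht =>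
    (lt_or_ge M (g t)).imp (fun h => ⟨ht.1, h⟩) fun h => ⟨⟨ht.1, h⟩, ht.2⟩
  calc volume (S \ G) ≤ volume {t ∈ S | M < g t} + volume ({t ∈ S | g t ≤ M} \ G) :=
        (measure_mono hcover).trans (measure_union_le _ _)
    _ < volume {t ∈ S | M < g t} + (δ - volume {t ∈ S | M < g t}) :=
        ENNReal.add_lt_add_left (hbad.trans_le le_top).ne hGlt
    _ = δ := add_tsub_cancel_of_le hbad.le

-- A function that is at most `M` on most of a real interval is not much larger than `M` nearby:
-- compare it with the potential of a compact set `G` carrying most of the interval.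
theorem le_add_sqrt_of_measure_lt {v : ℂ → ℝ} (husc : UpperSemicontinuous v) {C : ℝ}
    (hC : ∀ z, |v z| ≤ C) {s : Set ℂ} (hsub : SubmeanOn v s) (hs : closedBall 0 (2 / 3) ⊆ s)
    {M k δ : ℝ} (hk : 0 ≤ k) (hsph : ∀ z ∈ sphere (0 : ℂ) (2 / 3), v z ≤ M + k) (hδ : 0 < δ)
    (hδ1 : δ ≤ 1) (hbad : volume {t ∈ closedBall (0 : ℝ) (1 / 3) | M < v t} < ENNReal.ofReal δ)
    {z : ℂ} (hz : ‖z‖ ≤ 2 / 3) : v z ≤ M + k * (14 * √‖z‖ + 6 * √δ) := by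
  set J : Set ℝ := closedBall 0 (1 / 3)
  have hJ : Bornology.IsBounded J := isBounded_closedBall
  obtain ⟨G, hGJ, hGc, hGv, hGvol⟩ := exists_isCompact_volume_sdiff_lt
    (g := fun t : ℝ => v t) (husc.measurable.comp Complex.measurable_ofReal)
    measurableSet_closedBall measure_closedBall_lt_top.ne hbad
  have hBm : MeasurableSet (J \ G) := measurableSet_closedBall.diff hGc.measurableSet
  have hBb : Bornology.IsBounded (J \ G) := hJ.subset sdiff_subset
  have hsplit := logPotential_sdiff hJ hGc.measurableSet hGJ
  have hJnorm : ∀ t ∈ J, ‖(t : ℂ)‖ ≤ 1 / 3 := fun t ht => by simpa [J] using ht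
  have hBneg : ∀ z : ℂ, ‖z‖ ≤ 2 / 3 → logPotential (J \ G) z ≤ 0 := fun z hz => by
    simpa using logPotential_le_measureReal_mul_log (a := 1) hBb hBm fun t ht => by
      linarith [norm_sub_le z t, hJnorm t ht.1]
  have hcmp := le_add_mul_logPotential husc hC hsub hs hGc (α := 3 / 2 * k)
    (β := M - 3 / 2 * k * logPotential J 0) (fun z hz => ?_) (fun t ht => ?_) z (by simpa using hz)
  · have hBlow := neg_four_mul_sqrt_le_logPotential hBb hBm hδ hδ1
      (ENNReal.toReal_le_of_le_ofReal hδ.le hGvol.le) z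
    have hJup := logPotential_sub_le hJ z 0
    rw [volume_real_closedBall 0 (by norm_num), sub_zero] at hJup
    nlinarith [hsplit z]
  · have hz' : ‖z‖ = 2 / 3 := by simpa using hz
    have hJlow := logPotential_closedBall_self_add_le (a := 1 / 3) (by norm_num) (x := 0) (z := z)
      (by rw [Complex.ofReal_zero, sub_zero, hz']; norm_num)
    rw [Complex.ofReal_zero] at hJlow
    nlinarith [hsplit z, hBneg z hz'.le, hsph z hz]
  · have hJlow : logPotential J (0 : ℝ) ≤ logPotential J t :=
      logPotential_closedBall_self_le (by norm_num) 0 t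
    rw [Complex.ofReal_zero] at hJlow
    nlinarith [hsplit t, hBneg t (by linarith [hJnorm t (hGJ ht)]), hGv t ht]

/-! ### Cartan type estimates -/

section Cartan

variable {v : ℂ → ℝ} {C x s m lam k : ℝ} {S : Set ℂ}

theorem log_add_one_le_log_three_mul (hs : 0 < s) : Real.log s + 1 ≤ Real.log (3 * s) := by
  rw [Real.log_mul (by norm_num) hs.ne', add_comm]
  gcongr
  rw [Real.le_log_iff_exp_le (by norm_num)]
  linarith [Real.exp_one_lt_d9]

theorem measureReal_mul_log_le_logPotential_of_mem_sphere (hs : 0 < s) {E : Set ℝ}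
    (hE : IsCompact E) (hEx : E ⊆ closedBall x (s / 4)) {z : ℂ} (hz : z ∈ sphere (x : ℂ) s) :
    volume.real E * Real.log (3 * (s / 4)) ≤ logPotential E z := by
  refine measureReal_mul_log_le_logPotential hE.isBounded hE.measurableSet (by positivity)
    fun t ht => ?_
  have hxt : ‖(t : ℂ) - x‖ ≤ s / 4 := by
    rw [norm_ofReal_sub_ofReal, ← Real.dist_eq]
    exact hEx ht
  have hzx : ‖z - x‖ = s := mem_sphere_iff_norm.1 hz
  linarith [norm_sub_le_norm_sub_add_norm_sub z t (x : ℂ)]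

theorem div_le_of_isCompact_of_le_sub (husc : UpperSemicontinuous v) (hC : ∀ z, |v z| ≤ C)
    (hs : 0 < s) (hsub : SubmeanOn v S) (hS : closedBall (x : ℂ) s ⊆ S)
    (hm : ∀ z ∈ sphere (x : ℂ) s, v z ≤ m) (hk : 0 < k) (hx : m - k ≤ v x) (hlam : 0 < lam)
    {E : Set ℝ} (hE : IsCompact E) (hEx : E ⊆ closedBall x (s / 4)) (hEv : ∀ t ∈ E, v t ≤ m - lam)
    (hpos : 0 < volume.real E) :
    lam / k ≤ Real.log (3 * (s / 4)) - Real.log (volume.real E) + 2 := by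
  set δ := volume.real E
  set L := Real.log (3 * (s / 4)) - Real.log δ + 2
  have hδs : δ ≤ s / 2 :=
    (measureReal_mono hEx measure_closedBall_lt_top.ne).trans
      (by rw [volume_real_closedBall x (by positivity)]; linarith)
  have hL : 0 < L := by
    have hlog : Real.log δ ≤ Real.log (3 * (s / 4)) := Real.log_le_log hpos (by linarith)
    linarith
  have hEdist : ∀ t ∈ E, ‖(x : ℂ) - t‖ ≤ s / 4 := fun t ht => by
    rw [norm_ofReal_sub_ofReal, ← Real.dist_eq, dist_comm]; exact hEx ht
  have hcenter : logPotential E x ≤ δ * Real.log (s / 4) :=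
    logPotential_le_measureReal_mul_log hE.isBounded hE.measurableSet hEdist
  have hcmp := le_add_mul_logPotential husc hC hsub hS hE (α := lam / (L * δ))
    (β := m - lam / L * Real.log (3 * (s / 4))) (fun z hz => ?_) (fun t ht => ?_) x
    (mem_closedBall_self hs.le)
  · have hlog : Real.log (s / 4) + 1 ≤ Real.log (3 * (s / 4)) :=
      log_add_one_le_log_three_mul (by positivity)
    have hmul : lam / (L * δ) * logPotential E x ≤ lam / L * Real.log (s / 4) := by
      calc _ ≤ lam / (L * δ) * (δ * Real.log (s / 4)) := by gcongr
        _ = _ := by field_simp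
    have hratio : lam / L ≤ k := by nlinarith [div_pos hlam hL]
    rwa [div_le_comm₀ hk hL]
  · have hsphere := measureReal_mul_log_le_logPotential_of_mem_sphere hs hE hEx hz
    have hmul : lam / L * Real.log (3 * (s / 4)) ≤ lam / (L * δ) * logPotential E z := by
      calc _ = lam / (L * δ) * (δ * Real.log (3 * (s / 4))) := by field_simp
        _ ≤ _ := by gcongr
    linarith [hm z hz]
  · have hmul : lam / L * (Real.log δ - 2) ≤ lam / (L * δ) * logPotential E t := by
      calc _ = lam / (L * δ) * (δ * Real.log δ - 2 * δ) := by field_simp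
        _ ≤ _ := by
          gcongr
          exact measureReal_mul_log_sub_le_logPotential hE.isBounded hE.measurableSet t hpos
    have hlamL : lam / L * L = lam := div_mul_cancel₀ _ hL.ne'
    have hexpand : lam / L * L =
        lam / L * Real.log (3 * (s / 4)) - lam / L * (Real.log δ - 2) := by simp only [L]; ring
    linarith [hEv t ht, hexpand]

theorem volume_real_le_of_isCompact_of_le_sub (husc : UpperSemicontinuous v) (hC : ∀ z, |v z| ≤ C)
    (hs : 0 < s) (hsub : SubmeanOn v S) (hS : closedBall (x : ℂ) s ⊆ S)
    (hm : ∀ z ∈ sphere (x : ℂ) s, v z ≤ m) (hk : 0 < k) (hx : m - k ≤ v x) (hlam : 0 < lam)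
    {E : Set ℝ} (hE : IsCompact E) (hEx : E ⊆ closedBall x (s / 4))
    (hEv : ∀ t ∈ E, v t ≤ m - lam) : volume.real E ≤ 8 * s * Real.exp (-(lam / k)) := by
  rcases (measureReal_nonneg (μ := volume) (s := E)).eq_or_lt with hzero | hpos
  · rw [← hzero]; positivity
  have hlog := div_le_of_isCompact_of_le_sub husc hC hs hsub hS hm hk hx hlam hE hEx hEv hpos
  have hexp : Real.exp 2 ≤ 8 := by
    have hsq : Real.exp 2 = Real.exp 1 * Real.exp 1 := by rw [← Real.exp_add]; norm_num
    nlinarith [Real.exp_one_lt_d9, Real.exp_pos 1]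
  calc volume.real E = Real.exp (Real.log (volume.real E)) := (Real.exp_log hpos).symm
    _ ≤ Real.exp (Real.log (3 * (s / 4)) + 2 + -(lam / k)) := by gcongr; linarith
    _ = 3 * (s / 4) * Real.exp 2 * Real.exp (-(lam / k)) := by
      rw [Real.exp_add, Real.exp_add, Real.exp_log (by positivity)]
    _ ≤ s * 8 * Real.exp (-(lam / k)) := by gcongr; linarith
    _ = _ := by ring

theorem volume_le_of_le_sub (husc : UpperSemicontinuous v) (hC : ∀ z, |v z| ≤ C) (hs : 0 < s)
    (hsub : SubmeanOn v S) (hS : closedBall (x : ℂ) s ⊆ S)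
    (hm : ∀ z ∈ sphere (x : ℂ) s, v z ≤ m) (hk : 0 < k) (hx : m - k ≤ v x) (hlam : 0 < lam) :
    volume {t ∈ closedBall x (s / 4) | v t ≤ m - lam} ≤
      ENNReal.ofReal (8 * s * Real.exp (-(lam / k))) := by
  have hvm : Measurable fun t : ℝ => v t := husc.measurable.comp Complex.measurable_ofReal
  have hA : MeasurableSet {t ∈ closedBall x (s / 4) | v t ≤ m - lam} :=
    measurableSet_closedBall.inter (measurableSet_le hvm measurable_const)
  rw [hA.measure_eq_iSup_isCompact]
  refine iSup₂_le fun E hE => iSup_le fun hEc => ?_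
  rw [← ofReal_measureReal hEc.measure_lt_top.ne]
  exact ENNReal.ofReal_le_ofReal (volume_real_le_of_isCompact_of_le_sub husc hC hs hsub hS hm hk hx
    hlam hEc (fun t ht => (hE ht).1) fun t ht => (hE ht).2)

end Cartan

theorem SubmeanOn.comp_add_left {v : ℂ → ℝ} {s t : Set ℂ} (h : SubmeanOn v s) (a : ℂ)
    (ht : ∀ z ∈ t, a + z ∈ s) : SubmeanOn (fun z => v (a + z)) t := by
  intro c R hR hc
  have havg : Real.circleAverage (fun z => v (a + z)) c R = Real.circleAverage v (a + c) R := by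
    simp only [Real.circleAverage_def, circleMap, add_assoc]
  rw [havg]
  refine h (a + c) R hR fun z hz => ?_
  have hmem : z - a ∈ closedBall c R := by
    rwa [mem_closedBall, dist_eq_norm, sub_sub, ← dist_eq_norm, ← mem_closedBall]
  simpa using ht _ (hc hmem)

/-! ### Periodic traces -/

section Periodic

variable {f : ℝ → ℝ}

theorem setIntegral_Icc_add_one (hf : Function.Periodic f 1) (a : ℝ) :
    ∫ x in Icc a (a + 1), f x = ∫ x in Icc (0 : ℝ) 1, f x := by
  rw [integral_Icc_eq_integral_Ioc, integral_Icc_eq_integral_Ioc,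
    ← intervalIntegral.integral_of_le (by linarith), ← intervalIntegral.integral_of_le zero_le_one]
  simpa using hf.intervalIntegral_add_eq a 0

theorem setIntegral_comp_add_right (hf : Function.Periodic f 1) (t : ℝ) :
    ∫ x in Icc (0 : ℝ) 1, f (x + t) = ∫ x in Icc (0 : ℝ) 1, f x := by
  rw [← setIntegral_Icc_add_one hf t, integral_Icc_eq_integral_Ioc, integral_Icc_eq_integral_Ioc,
    ← intervalIntegral.integral_of_le zero_le_one, ← intervalIntegral.integral_of_le (by linarith),
    intervalIntegral.integral_comp_add_right, zero_add, add_comm]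

theorem volume_lt_le_of_setIntegral_le_sq (hf : Function.Periodic f 1) (hm : Measurable f)
    (hf0 : ∀ x, 0 ≤ f x) {C : ℝ} (hC : ∀ x, |f x| ≤ C) {e : ℝ} (he : 0 < e)
    (hint : ∫ x in Icc (0 : ℝ) 1, f x ≤ e ^ 2) {c r : ℝ} (hr : r ≤ 1 / 2) :
    volume {t ∈ closedBall c r | e < f t} ≤ ENNReal.ofReal e := by
  set μ := volume.restrict (Icc (c - r) (c - r + 1))
  have : IsFiniteMeasure μ := ⟨by simp [μ]⟩
  have hmarkov := mul_meas_ge_le_integral_of_nonneg (ae_of_all μ hf0)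
    (integrable_of_abs_le hm hC) e
  rw [setIntegral_Icc_add_one hf] at hmarkov
  have hle : μ.real {t | e ≤ f t} ≤ e :=
    le_of_mul_le_mul_left (hmarkov.trans (hint.trans_eq (sq e))) he
  have hsub : {t ∈ closedBall c r | e < f t} ⊆ {t | e ≤ f t} ∩ Icc (c - r) (c - r + 1) :=
    fun t ht => by
      rw [Real.closedBall_eq_Icc] at ht
      exact ⟨ht.2.le, ht.1.1, ht.1.2.trans (by linarith)⟩
  calc volume {t ∈ closedBall c r | e < f t}
      ≤ volume ({t | e ≤ f t} ∩ Icc (c - r) (c - r + 1)) := measure_mono hsub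
    _ = μ {t | e ≤ f t} := (Measure.restrict_apply (measurableSet_le measurable_const hm)).symm
    _ ≤ ENNReal.ofReal e := by
      rw [← ofReal_measureReal]
      exact ENNReal.ofReal_le_ofReal hle

end Periodic

theorem volume_Icc_inter_le_of_closedBall_inter_le {A : Set ℝ} {r b : ℝ} (hr : 0 < r)
    (h : ∀ c ∈ Icc (0 : ℝ) 1, volume (closedBall c r ∩ A) ≤ ENNReal.ofReal b) :
    volume (Icc 0 1 ∩ A) ≤ ENNReal.ofReal ((1 / (2 * r) + 2) * b) := by
  set N := ⌈1 / (2 * r)⌉₊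
  have hN : 0 < (N : ℝ) := Nat.cast_pos.2 (Nat.ceil_pos.2 (by positivity))
  have hNr : 1 ≤ N * (2 * r) := (div_le_iff₀ (by positivity)).1 (Nat.le_ceil _)
  have hcover : Icc 0 1 ∩ A ⊆ ⋃ j ∈ Finset.range (N + 1), closedBall ((j : ℝ) / N) r ∩ A := by
    rintro x ⟨⟨hx0, hx1⟩, hxA⟩
    have hfloor := Nat.floor_le (a := x * N + 1 / 2) (by positivity)
    have hlt := Nat.lt_floor_add_one (x * N + 1 / 2)
    set j := ⌊x * N + 1 / 2⌋₊
    have hjN : j < N + 1 := by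
      have : (j : ℝ) < N + 1 := by nlinarith
      exact_mod_cast this
    refine mem_biUnion (Finset.mem_range.2 hjN) ⟨?_, hxA⟩
    rw [mem_closedBall, Real.dist_eq, sub_div' hN.ne', abs_div, abs_of_pos hN, div_le_iff₀ hN,
      abs_le]
    constructor <;> nlinarith
  have hNle : (N : ℝ) + 1 ≤ 1 / (2 * r) + 2 := by
    linarith [Nat.ceil_lt_add_one (a := 1 / (2 * r)) (by positivity)]
  have hcenter : ∀ j ∈ Finset.range (N + 1), (j : ℝ) / N ∈ Icc (0 : ℝ) 1 := fun j hj =>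
    ⟨by positivity, (div_le_one₀ hN).2 (by exact_mod_cast Finset.mem_range_succ_iff.1 hj)⟩
  calc volume (Icc 0 1 ∩ A)
      ≤ ∑ j ∈ Finset.range (N + 1), volume (closedBall ((j : ℝ) / N) r ∩ A) :=
        (measure_mono hcover).trans (measure_biUnion_finset_le _ _)
    _ ≤ ∑ _j ∈ Finset.range (N + 1), ENNReal.ofReal b :=
        Finset.sum_le_sum fun j hj => h _ (hcenter j hj)
    _ = ENNReal.ofReal (N + 1) * ENNReal.ofReal b := by
        rw [Finset.sum_const, Finset.card_range, nsmul_eq_mul, ← ENNReal.ofReal_natCast,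
          Nat.cast_succ]
    _ ≤ ENNReal.ofReal (1 / (2 * r) + 2) * ENNReal.ofReal b := by
        gcongr
    _ = _ := (ENNReal.ofReal_mul (by positivity)).symm

/-- `v` is a function on the plane with values in `[-1, 1]` and the sub-mean value property on the
disc of radius two, and `g` is the `1`-periodic extension of its restriction to the real axis. -/
structure PeriodicTrace (v : ℂ → ℝ) (g : ℝ → ℝ) : Prop where
  usc : UpperSemicontinuous v
  abs_le_one : ∀ z, |v z| ≤ 1
  submean : SubmeanOn v (ball 0 2)
  periodic : Function.Periodic g 1
  trace_eq : ∀ x : ℝ, |x| < 2 → v x = g x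

namespace PeriodicTrace

variable {v : ℂ → ℝ} {g : ℝ → ℝ} {m h : ℝ}

theorem eq_fract (H : PeriodicTrace v g) (x : ℝ) : g x = v (Int.fract x : ℝ) := by
  rw [H.trace_eq _ (abs_lt.2 ⟨by linarith [Int.fract_nonneg x], by linarith [Int.fract_lt_one x]⟩)]
  have hperiod := H.periodic.sub_int_mul_eq ⌊x⌋ (x := x)
  rw [mul_one, Int.self_sub_floor] at hperiod
  exact hperiod.symm

theorem measurable (H : PeriodicTrace v g) : Measurable g := by
  rw [funext H.eq_fract]
  exact H.usc.measurable.comp (Complex.measurable_ofReal.comp measurable_fract)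

theorem abs_trace_le_one (H : PeriodicTrace v g) (x : ℝ) : |g x| ≤ 1 :=
  H.eq_fract x ▸ H.abs_le_one _

theorem submeanOn_comp_add (H : PeriodicTrace v g) {x r : ℝ} (hx : |x| + r ≤ 2) :
    SubmeanOn (fun z => v (x + z)) (ball 0 r) :=
  H.submean.comp_add_left x fun z hz => by
    rw [mem_ball_zero_iff] at hz ⊢
    have htri := norm_add_le (x : ℂ) z
    rw [Complex.norm_real, Real.norm_eq_abs] at htri
    linarith

theorem volume_lt_abs_sub_le (H : PeriodicTrace v g) (hm : |m| ≤ 1) (hh : 0 < h)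
    (hinteg : ∫ x in Icc (0 : ℝ) 1, |g x - m| ≤ h ^ 8) {c r : ℝ} (hr : r ≤ 1 / 2) :
    volume {t ∈ closedBall c r | h ^ 4 < |g t - m|} ≤ ENNReal.ofReal (h ^ 4) := by
  refine volume_lt_le_of_setIntegral_le_sq (C := 2) (fun x => by simp only [H.periodic x])
    (H.measurable.sub_const m).abs (fun x => abs_nonneg _) (fun x => ?_) (by positivity)
    (hinteg.trans_eq (by ring)) hr
  rw [abs_abs]
  linarith [abs_sub (g x) m, H.abs_trace_le_one x]

theorem le_of_integral_le (H : PeriodicTrace v g) (hm : |m| ≤ 1) (hh : 0 < h) (hh1 : h ≤ 1 / 2)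
    (hinteg : ∫ x in Icc (0 : ℝ) 1, |g x - m| ≤ h ^ 8) {x : ℝ} (hx : |x| ≤ 9 / 8)
    {z : ℂ} (hz : ‖z‖ ≤ 8 * h ^ 4) : v (x + z) ≤ m + 110 * h ^ 2 := by
  obtain ⟨hm1, -⟩ := abs_le.1 hm
  obtain ⟨hx1, hx2⟩ := abs_le.1 hx
  have hh2 : h ^ 2 ≤ 1 / 4 := by nlinarith
  have hh2pos : 0 < h ^ 2 := by positivity
  have hh42 : h ^ 4 = h ^ 2 * h ^ 2 := by ring
  have hh4 : h ^ 4 ≤ 1 / 16 := by nlinarith [hh42]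
  have hh4pos : 0 < h ^ 4 := by positivity
  have hlocal := le_add_sqrt_of_measure_lt (v := fun z => v (x + z))
    (H.usc.comp (continuous_const.add continuous_id)) (fun z => H.abs_le_one _)
    (H.submeanOn_comp_add (r := 7 / 8) (by linarith))
    (closedBall_subset_ball (by norm_num)) (M := m + h ^ 4) (k := 2) (δ := 2 * h ^ 4)
    (by norm_num) (fun z _ => ?_) (by linarith) (by linarith) ?_ (z := z) (by linarith)
  · have hsqrt₁ : √‖z‖ ≤ 3 * h ^ 2 := Real.sqrt_le_iff.2 ⟨by positivity, by nlinarith⟩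
    have hsqrt₂ : √(2 * h ^ 4) ≤ 3 / 2 * h ^ 2 :=
      Real.sqrt_le_iff.2 ⟨by positivity, by nlinarith⟩
    nlinarith
  · linarith [(abs_le.1 (H.abs_le_one (x + z))).2]
  · have hsub : {t ∈ closedBall (0 : ℝ) (1 / 3) | m + h ^ 4 < v (x + t)} ⊆
        (fun t => x + t) ⁻¹' {t ∈ closedBall x (1 / 3) | h ^ 4 < |g t - m|} := by
      rintro t ⟨ht, hvt⟩
      refine ⟨by simpa [Real.dist_eq] using ht, ?_⟩
      obtain ⟨ht1, ht2⟩ := abs_le.1 (by simpa using ht)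
      rw [← Complex.ofReal_add, H.trace_eq (x + t) (abs_lt.2 ⟨by linarith, by linarith⟩)] at hvt
      exact lt_of_lt_of_le (by linarith) (le_abs_self _)
    calc _ ≤ _ := measure_mono hsub
      _ = _ := measure_preimage_add volume x _
      _ ≤ ENNReal.ofReal (h ^ 4) := H.volume_lt_abs_sub_le hm hh hinteg (by norm_num)
      _ < _ := (ENNReal.ofReal_lt_ofReal_iff (by positivity)).2 (by linarith)

-- A point where the trace is close to `m` provides the lower bound in the Cartan estimate, on a
-- scale small enough for the upper bound `m + 110 * h ^ 2`.
theorem volume_deviation_closedBall_le (H : PeriodicTrace v g) (hm : |m| ≤ 1) (hh : 0 < h)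
    (hh1 : h ≤ 1 / 2) (hinteg : ∫ x in Icc (0 : ℝ) 1, |g x - m| ≤ h ^ 8) {c : ℝ}
    (hc : c ∈ Icc (0 : ℝ) 1) :
    volume {x ∈ closedBall c (h ^ 4) | 111 * h < |g x - m|} ≤
      ENNReal.ofReal (64 * h ^ 4 * Real.exp (-(1 / h))) := by
  have hh2 : h ^ 2 ≤ h / 2 := by nlinarith
  have hh42 : h ^ 4 = h ^ 2 * h ^ 2 := by ring
  have hh4 : h ^ 4 ≤ 1 / 16 := by nlinarith [hh42]
  have hh4pos : 0 < h ^ 4 := by positivity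
  have hnear : ∀ x ∈ closedBall c (h ^ 4), |x| ≤ 9 / 8 ∧ v x = g x := fun x hx => by
    rw [Real.closedBall_eq_Icc] at hx
    have habs : |x| ≤ 9 / 8 := abs_le.2 ⟨by linarith [hx.1, hc.1], by linarith [hx.2, hc.2]⟩
    exact ⟨habs, H.trace_eq x (by linarith)⟩
  obtain ⟨y, hy, hyg⟩ : ∃ y ∈ closedBall c (h ^ 4), |g y - m| ≤ h ^ 4 := by
    by_contra! hcon
    have hbad := H.volume_lt_abs_sub_le hm hh hinteg (c := c) (hh4.trans (by norm_num))
    rw [sep_eq_self_iff_mem_true.2 hcon, Real.volume_closedBall,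
      ENNReal.ofReal_le_ofReal_iff hh4pos.le] at hbad
    linarith
  obtain ⟨hy1, hyv⟩ := hnear y hy
  have hcartan := volume_le_of_le_sub H.usc H.abs_le_one (x := y) (s := 8 * h ^ 4)
    (m := m + 110 * h ^ 2) (lam := 111 * h) (k := 111 * h ^ 2) (by positivity) H.submean
    (fun z hz => ?_) (fun z hz => ?_) (by positivity) ?_ (by positivity)
  · have hexp : 111 * h / (111 * h ^ 2) = 1 / h := by field_simp
    rw [hexp, show 8 * (8 * h ^ 4) = 64 * h ^ 4 by ring] at hcartan
    refine (measure_mono fun t (ht : t ∈ closedBall c (h ^ 4) ∧ _) => ?_).trans hcartan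
    refine ⟨?_, ?_⟩
    · exact closedBall_subset_closedBall' (by linarith [mem_closedBall'.1 hy]) ht.1
    · obtain ⟨ht1, htv⟩ := hnear t ht.1
      have hup := H.le_of_integral_le hm hh hh1 hinteg ht1 (z := 0) (by rw [norm_zero]; positivity)
      rw [add_zero, htv] at hup
      rw [htv]
      rcases lt_abs.1 ht.2 with hlt | hlt <;> linarith [sq_nonneg h]
  · rw [mem_closedBall, dist_eq_norm] at hz
    have htri := norm_add_le (z - y) (y : ℂ)
    rw [sub_add_cancel, Complex.norm_real, Real.norm_eq_abs] at htri
    exact mem_ball_zero_iff.2 (by linarith)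
  · have hup := H.le_of_integral_le hm hh hh1 hinteg hy1 (mem_sphere_iff_norm.1 hz).le
    rwa [add_sub_cancel] at hup
  · rw [hyv]
    nlinarith [(abs_le.1 hyg).1]

theorem volume_deviation_le (H : PeriodicTrace v g) (hm : |m| ≤ 1) (hh : 0 < h)
    (hinteg : ∫ x in Icc (0 : ℝ) 1, |g x - m| ≤ h ^ 8) :
    volume {x ∈ Icc (0 : ℝ) 1 | 111 * h < |g x - m|} ≤
      ENNReal.ofReal (64 * Real.exp (-(1 / h))) := by
  rcases lt_or_ge (1 / 2) h with hh1 | hh1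
  · have hempty : {x ∈ Icc (0 : ℝ) 1 | 111 * h < |g x - m|} = ∅ :=
      eq_empty_of_forall_notMem fun x hx => by
        linarith [abs_sub (g x) m, H.abs_trace_le_one x, hx.2]
    rw [hempty, measure_empty]
    exact zero_le
  refine (volume_Icc_inter_le_of_closedBall_inter_le (pow_pos hh 4) fun c hc =>
    H.volume_deviation_closedBall_le hm hh hh1 hinteg hc).trans (ENNReal.ofReal_le_ofReal ?_)
  have hh2 : h ^ 2 ≤ 1 / 4 := by nlinarith
  calc (1 / (2 * h ^ 4) + 2) * (64 * h ^ 4 * Real.exp (-(1 / h)))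
      = (32 + 128 * (h ^ 2 * h ^ 2)) * Real.exp (-(1 / h)) := by field_simp; ring
    _ ≤ 64 * Real.exp (-(1 / h)) := by gcongr; nlinarith

end PeriodicTrace

section DiskAverage

theorem volume_real_complex_ball (c : ℂ) {r : ℝ} (hr : 0 ≤ r) :
    volume.real (ball c r) = Real.pi * r ^ 2 := by
  rw [measureReal_def, Complex.volume_ball, ENNReal.toReal_mul, ENNReal.toReal_pow,
    ENNReal.toReal_ofReal hr]
  simp [mul_comm]

/-- The average of `v` over the disc of radius `r` centred at `z`, written as an average over the
centred disc so that the dependence on `z` is visibly measurable. -/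
def diskAverage (v : ℂ → ℝ) (r : ℝ) (z : ℂ) : ℝ := ⨍ ζ in ball 0 r, v (z + ζ)

variable {v : ℂ → ℝ} {C r : ℝ}

instance isFiniteMeasure_restrict_ball (c : ℂ) (r : ℝ) :
    IsFiniteMeasure (volume.restrict (ball c r)) :=
  ⟨by simpa using measure_ball_lt_top (μ := (volume : Measure ℂ)) (x := c) (r := r)⟩

theorem setIntegral_ball_eq (hr : 0 < r) (z : ℂ) :
    ∫ ζ in ball z r, v ζ = Real.pi * r ^ 2 * diskAverage v r z := by
  have hpos : 0 < Real.pi * r ^ 2 := by have := Real.pi_pos; positivity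
  rw [diskAverage, setAverage_eq, volume_real_complex_ball 0 hr.le, smul_eq_mul,
    mul_inv_cancel_left₀ hpos.ne', ← integral_indicator measurableSet_ball,
    ← integral_indicator measurableSet_ball,
    ← integral_add_left_eq_self (fun ζ => (ball z r).indicator v ζ) z]
  simp [indicator]

theorem abs_diskAverage_le (hC : ∀ z, |v z| ≤ C) (hr : 0 < r) (z : ℂ) :
    |diskAverage v r z| ≤ C := by
  have hpos : 0 < Real.pi * r ^ 2 := by have := Real.pi_pos; positivity
  have hint := norm_setIntegral_le_of_norm_le_const (μ := volume) (f := v)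
    (measure_ball_lt_top (x := z) (r := r)) fun ζ _ => hC ζ
  rw [setIntegral_ball_eq hr, volume_real_complex_ball z hr.le, norm_mul,
    Real.norm_of_nonneg hpos.le, mul_comm C] at hint
  exact le_of_mul_le_mul_left hint hpos

theorem measurable_diskAverage (hv : Measurable v) (r : ℝ) : Measurable (diskAverage v r) := by
  have huncurry : Measurable fun p : ℂ × ℂ => v (p.1 + p.2) := hv.comp measurable_add
  unfold diskAverage
  simp only [average_eq, smul_eq_mul]
  have hint := huncurry.stronglyMeasurable.integral_prod_right' (ν := volume.restrict (ball 0 r))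
  exact hint.measurable.const_mul _

theorem SubmeanOn.le_diskAverage {s : Set ℂ} (h : SubmeanOn v s) (hv : Measurable v)
    (hC : ∀ z, |v z| ≤ C) (hr : 0 < r) {z : ℂ} (hs : ball z r ⊆ s) : v z ≤ diskAverage v r z := by
  have hpos : 0 < Real.pi * r ^ 2 := by have := Real.pi_pos; positivity
  have hint := h.setIntegral_ball_nonneg hv hC hs
  rw [integral_sub (integrable_of_abs_le hv hC) (integrable_const _), setIntegral_ball_eq hr,
    setIntegral_const, volume_real_complex_ball z hr.le, smul_eq_mul, sub_nonneg] at hint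
  exact le_of_mul_le_mul_left hint hpos

theorem abs_setIntegral_ball_sub_le_of_subset (hv : Measurable v) (hC : ∀ z, |v z| ≤ C)
    {c y : ℂ} {R : ℝ} (hr : 0 ≤ r) (hR : 0 ≤ R) (hsub : ball y r ⊆ ball c R) :
    |(∫ ζ in ball c R, v ζ) - ∫ ζ in ball y r, v ζ| ≤ C * (Real.pi * (R ^ 2 - r ^ 2)) := by
  rw [← setIntegral_sdiff measurableSet_ball (integrable_of_abs_le hv hC) hsub]
  refine (norm_setIntegral_le_of_norm_le_const (μ := volume) (f := v)
    ((measure_mono sdiff_subset).trans_lt measure_ball_lt_top) fun z _ => hC z).trans_eq ?_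
  rw [measureReal_sdiff hsub measurableSet_ball, volume_real_complex_ball _ hR,
    volume_real_complex_ball _ hr]
  ring

theorem abs_diskAverage_sub_le (hv : Measurable v) (hC : ∀ z, |v z| ≤ C) (hr : 0 < r)
    (z w : ℂ) : |diskAverage v r z - diskAverage v r w| ≤
      2 * C * (2 * (dist z w / r) + (dist z w / r) ^ 2) := by
  have hpos : 0 < Real.pi * r ^ 2 := by have := Real.pi_pos; positivity
  set d := dist z w
  have hd : 0 ≤ d := dist_nonneg
  have hz := abs_setIntegral_ball_sub_le_of_subset hv hC hr.le (by positivity)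
    (ball_subset_ball (x := z) (by linarith : r ≤ r + d))
  have hw := abs_setIntegral_ball_sub_le_of_subset hv hC hr.le (by positivity)
    (ball_subset_ball' (by rw [dist_comm] : r + dist w z ≤ r + d))
  rw [setIntegral_ball_eq hr] at hz hw
  have hle : |Real.pi * r ^ 2 * (diskAverage v r z - diskAverage v r w)| ≤
      Real.pi * r ^ 2 * (2 * C * (2 * (d / r) + (d / r) ^ 2)) := by
    calc _ ≤ C * (Real.pi * ((r + d) ^ 2 - r ^ 2)) + C * (Real.pi * ((r + d) ^ 2 - r ^ 2)) := by
          rw [abs_le] at *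
          constructor <;> linarith
      _ = _ := by field_simp; ring
  rw [abs_mul, abs_of_pos hpos] at hle
  exact le_of_mul_le_mul_left hle hpos

theorem integral_diskAverage {X : Type*} [MeasurableSpace X] {μ : Measure X} [IsFiniteMeasure μ]
    (hv : Measurable v) (hC : ∀ z, |v z| ≤ C) {f : X → ℂ} (hf : Measurable f) (r : ℝ) :
    ∫ x, diskAverage v r (f x) ∂μ = ⨍ ζ in ball 0 r, ∫ x, v (f x + ζ) ∂μ := by
  have huncurry : Measurable fun p : X × ℂ => v (f p.1 + p.2) := hv.comp (by fun_prop)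
  simp only [diskAverage, average_eq, integral_smul]
  rw [integral_integral_swap (integrable_of_abs_le huncurry fun p => hC _)]

end DiskAverage

instance isProbabilityMeasure_restrict_Icc :
    IsProbabilityMeasure (volume.restrict (Icc (0 : ℝ) 1)) := ⟨by simp⟩

namespace PeriodicTrace

variable {v : ℂ → ℝ} {g : ℝ → ℝ}

theorem integrable_comp_add (H : PeriodicTrace v g) (t : ℝ) :
    IntegrableOn (fun x => g (x + t)) (Icc 0 1) :=
  integrable_of_abs_le (H.measurable.comp (measurable_id.add_const t)) fun _ =>
    H.abs_trace_le_one _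

-- Averaging over real translations preserves subharmonicity and makes the trace constant on the
-- real axis.
theorem integral_comp_add_le (H : PeriodicTrace v g) {z : ℂ} (hz : ‖z‖ ≤ 2 / 3) :
    ∫ x in Icc (0 : ℝ) 1, v (x + z) ≤ (∫ x in Icc (0 : ℝ) 1, g x) + 28 * √‖z‖ := by
  set w : ℂ → ℝ := fun z => ∫ x in Icc (0 : ℝ) 1, v (x + z)
  set a := ∫ x in Icc (0 : ℝ) 1, g x
  have hmeas : Measurable (Function.uncurry fun (x : ℝ) (z : ℂ) => v (x + z)) :=
    H.usc.measurable.comp (by fun_prop)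
  have husc : UpperSemicontinuous w :=
    upperSemicontinuous_integral (fun z => hmeas.of_uncurry_right)
      (fun x z => H.abs_le_one _) fun x => H.usc.comp (continuous_const.add continuous_id)
  have hsub : SubmeanOn w (ball 0 1) := by
    refine SubmeanOn.integral hmeas (fun x z => H.abs_le_one _) ?_
    filter_upwards [ae_restrict_mem measurableSet_Icc] with x hx
      using H.submeanOn_comp_add (by linarith [abs_of_nonneg hx.1, hx.2])
  have habs : ∀ z, |w z| ≤ 1 := fun z => abs_integral_le_of_abs_le fun x => H.abs_le_one _
  have ha : |a| ≤ 1 := abs_integral_le_of_abs_le H.abs_trace_le_one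
  have hreal : ∀ t ∈ closedBall (0 : ℝ) (1 / 3), w t = a := fun t ht => by
    refine Eq.trans (setIntegral_congr_fun measurableSet_Icc fun x hx => ?_)
      (setIntegral_comp_add_right H.periodic t)
    obtain ⟨ht1, ht2⟩ := abs_le.1 (by simpa using ht)
    rw [← H.trace_eq (x + t) (abs_lt.2 ⟨by linarith [hx.1], by linarith [hx.2]⟩),
      Complex.ofReal_add]
  have hδ : ∀ δ : ℝ, 0 < δ → δ ≤ 1 → w z ≤ a + 2 * (14 * √‖z‖ + 6 * √δ) := fun δ hδ hδ1 => by
    refine le_add_sqrt_of_measure_lt husc habs hsub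
      (closedBall_subset_ball (by norm_num)) zero_le_two (fun z _ => ?_) hδ hδ1 ?_ hz
    · linarith [(abs_le.1 (habs z)).2, (abs_le.1 ha).1]
    · have hempty : {t ∈ closedBall (0 : ℝ) (1 / 3) | a < w t} = ∅ :=
        eq_empty_of_forall_notMem fun t ht => ht.2.ne' (hreal t ht.1)
      rw [hempty, measure_empty]
      exact ENNReal.ofReal_pos.2 hδ
  have hcont : Continuous fun δ : ℝ => a + 2 * (14 * √‖z‖ + 6 * √δ) := by fun_prop
  have hlim := (hcont.tendsto 0).mono_left (nhdsWithin_le_nhds (s := Ioi 0))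
  have hle : w z ≤ a + 2 * (14 * √‖z‖ + 6 * √0) := ge_of_tendsto hlim <| by
    filter_upwards [Ioc_mem_nhdsGT one_pos] with δ h using hδ δ h.1 h.2
  rw [Real.sqrt_zero] at hle
  linarith

theorem integral_diskAverage_le (H : PeriodicTrace v g) {r t : ℝ} (hr : 0 < r) (ht : 0 ≤ t)
    (hrt : r + t ≤ 2 / 3) : ∫ x in Icc (0 : ℝ) 1, diskAverage v r (x + t : ℝ) ≤
      (∫ x in Icc (0 : ℝ) 1, g x) + 28 * √(r + t) := by
  have hpos : 0 < Real.pi * r ^ 2 := by have := Real.pi_pos; positivity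
  have hmeas : Measurable fun p : ℝ × ℂ => v ((p.1 + t : ℝ) + p.2) :=
    H.usc.measurable.comp (by fun_prop)
  have hint : Integrable (fun ζ : ℂ => ∫ x in Icc (0 : ℝ) 1, v ((x + t : ℝ) + ζ))
      (volume.restrict (ball 0 r)) :=
    (integrable_of_abs_le (μ := (volume.restrict (Icc (0 : ℝ) 1)).prod
      (volume.restrict (ball (0 : ℂ) r))) hmeas fun p => H.abs_le_one _).integral_prod_right
  rw [integral_diskAverage H.usc.measurable H.abs_le_one (by fun_prop), setAverage_eq,
    volume_real_complex_ball 0 hr.le, smul_eq_mul, inv_mul_le_iff₀ hpos,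
    ← volume_real_complex_ball 0 hr.le, ← smul_eq_mul, ← setIntegral_const]
  refine setIntegral_mono_on hint (integrable_const _) measurableSet_ball fun ζ hζ => ?_
  have hnorm : ‖(t : ℂ) + ζ‖ ≤ r + t := by
    have htri := norm_add_le (t : ℂ) ζ
    rw [Complex.norm_real, Real.norm_of_nonneg ht] at htri
    linarith [mem_ball_zero_iff.1 hζ]
  simp only [Complex.ofReal_add, add_assoc]
  refine (H.integral_comp_add_le (hnorm.trans hrt)).trans ?_
  gcongr

theorem abs_shift_le (H : PeriodicTrace v g) {r t x : ℝ} (hr : 0 < r) (ht : 0 ≤ t)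
    (hrt : r + t ≤ 2 / 3) (hx : x ∈ Icc (0 : ℝ) 1) : |g (x + t) - g x| ≤
      (diskAverage v r (x + t : ℝ) - g (x + t)) + (diskAverage v r (x + 0 : ℝ) - g (x + 0)) +
        2 * (2 * (t / r) + (t / r) ^ 2) := by
  have hle : ∀ y : ℝ, 0 ≤ y → y + r ≤ 2 → g y ≤ diskAverage v r y := fun y hy hyr => by
    rw [← H.trace_eq y (by rw [abs_of_nonneg hy]; linarith)]
    refine H.submean.le_diskAverage H.usc.measurable H.abs_le_one hr (ball_subset_ball' ?_)
    rw [dist_zero_right, Complex.norm_real, Real.norm_of_nonneg hy]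
    linarith
  have hlip := abs_diskAverage_sub_le H.usc.measurable H.abs_le_one hr
    (x + t : ℝ) (x + 0 : ℝ)
  rw [Complex.dist_eq, ← Complex.ofReal_sub, Complex.norm_real, add_zero, add_sub_cancel_left,
    Real.norm_of_nonneg ht, mul_one] at hlip
  have hxt := hle (x + t) (by linarith [hx.1]) (by linarith [hx.2])
  have hx₀ := hle x hx.1 (by linarith [hx.2])
  rw [add_zero]
  rw [abs_le] at hlip ⊢
  constructor <;> linarith

-- The disc average dominates the trace, has almost the same mean, and is Lipschitz.
theorem integral_abs_shift_le_of_le (H : PeriodicTrace v g) {r t : ℝ} (hr : 0 < r) (ht : 0 ≤ t)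
    (hrt : r + t ≤ 2 / 3) : ∫ x in Icc (0 : ℝ) 1, |g (x + t) - g x| ≤
      28 * √(r + t) + 28 * √r + 2 * (2 * (t / r) + (t / r) ^ 2) := by
  have hintA : ∀ s : ℝ, IntegrableOn (fun x : ℝ => diskAverage v r (x + s : ℝ)) (Icc 0 1) :=
    fun s => integrable_of_abs_le
      ((measurable_diskAverage H.usc.measurable r).comp (by fun_prop))
      fun x => abs_diskAverage_le H.abs_le_one hr _
  have hintS : ∀ s : ℝ, IntegrableOn (fun x : ℝ => diskAverage v r (x + s : ℝ) - g (x + s))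
      (Icc 0 1) := fun s => (hintA s).sub (H.integrable_comp_add s)
  have hgap : ∀ s : ℝ, 0 ≤ s → r + s ≤ 2 / 3 →
      ∫ x in Icc (0 : ℝ) 1, (diskAverage v r (x + s : ℝ) - g (x + s)) ≤ 28 * √(r + s) :=
    fun s hs hrs => by
      rw [integral_sub (hintA s) (H.integrable_comp_add s), setIntegral_comp_add_right H.periodic]
      linarith [H.integral_diskAverage_le hr hs hrs]
  have hintg : IntegrableOn (fun x => g (x + t) - g x) (Icc 0 1) := by
    have hint₀ := H.integrable_comp_add 0
    simp only [add_zero] at hint₀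
    exact (H.integrable_comp_add t).sub hint₀
  have hmono := setIntegral_mono_on hintg.abs (((hintS t).add (hintS 0)).add (integrable_const _))
    measurableSet_Icc fun x hx => H.abs_shift_le hr ht hrt hx
  have hsplit := integral_add ((hintS t).add (hintS 0))
    (integrable_const (2 * (2 * (t / r) + (t / r) ^ 2)))
  rw [integral_add' (hintS t) (hintS 0), integral_const, probReal_univ, one_smul] at hsplit
  have h₀ := hgap 0 le_rfl (by linarith)
  rw [add_zero] at h₀
  exact hmono.trans (hsplit.trans_le (by linarith [hgap t ht hrt]))

theorem integral_abs_shift_le (H : PeriodicTrace v g) {k : ℝ} (hk : 0 ≤ k) :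
    ∫ x in Icc (0 : ℝ) 1, |g (x + k ^ 4) - g x| ≤ 80 * k := by
  rcases hk.eq_or_lt with rfl | hk0
  · simp
  rcases lt_or_ge (1 / 40) k with hk1 | hk1
  · have hnorm := norm_setIntegral_le_of_norm_le_const (μ := volume) (s := Icc (0 : ℝ) 1) (C := 2)
      (f := fun x => |g (x + k ^ 4) - g x|) measure_Icc_lt_top fun x _ => by
        rw [Real.norm_eq_abs, abs_abs]
        linarith [abs_sub (g (x + k ^ 4)) (g x), H.abs_trace_le_one x,
          H.abs_trace_le_one (x + k ^ 4)]
    rw [Real.volume_real_Icc_of_le zero_le_one] at hnorm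
    linarith [Real.le_norm_self (∫ x in Icc (0 : ℝ) 1, |g (x + k ^ 4) - g x|)]
  have hk2 : k ^ 2 ≤ 1 / 1600 := by nlinarith
  have hk42 : k ^ 4 = k ^ 2 * k ^ 2 := by ring
  have hdiv : k ^ 4 / k ^ 2 = k ^ 2 := by field_simp
  have hshift := H.integral_abs_shift_le_of_le (r := k ^ 2) (t := k ^ 4) (by positivity)
    (by positivity) (by nlinarith [hk42])
  rw [hdiv, Real.sqrt_sq hk] at hshift
  have hsqrt : √(k ^ 2 + k ^ 4) ≤ 11 / 10 * k :=
    Real.sqrt_le_iff.2 ⟨by positivity, by nlinarith [hk42]⟩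
  nlinarith [hk42]

end PeriodicTrace

/-! ### The unit cube -/

section Cube

variable {d : ℕ}

theorem volume_restrict_Icc_eq_pi (d : ℕ) :
    (volume : Measure (Fin d → ℝ)).restrict (Icc 0 1) =
      Measure.pi fun _ => (volume : Measure ℝ).restrict (Icc 0 1) := by
  rw [← Measure.restrict_pi_pi, ← volume_pi, ← pi_univ_Icc]
  rfl

instance isProbabilityMeasure_restrict_cube :
    IsProbabilityMeasure ((volume : Measure (Fin d → ℝ)).restrict (Icc 0 1)) := by
  rw [volume_restrict_Icc_eq_pi]
  infer_instance

theorem abs_lt_two_of_mem_Icc {θ : Fin d → ℝ} (hθ : θ ∈ Icc 0 1) (i : Fin d) : |θ i| < 2 :=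
  abs_lt.2 ⟨by linarith [show 0 ≤ θ i from hθ.1 i], by linarith [show θ i ≤ 1 from hθ.2 i]⟩

theorem comp_insertNth {X Y : Type*} (f : X → Y) (i : Fin (d + 1)) (x : X) (θ : Fin d → X) :
    (fun j => f (i.insertNth (α := fun _ => X) x θ j)) =
      i.insertNth (α := fun _ => Y) (f x) fun j => f (θ j) :=
  Fin.eq_insertNth_iff.2 ⟨by simp, by ext; simp [Fin.removeNth]⟩

theorem insertNth_add_eq_add_single (i : Fin (d + 1)) (x t : ℝ) (θ : Fin d → ℝ) :
    (i.insertNth (x + t) θ : Fin (d + 1) → ℝ) = i.insertNth x θ + Pi.single i t := by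
  rw [← Fin.insertNth_zero_right, ← Fin.insertNth_add, add_zero]

theorem measurable_insertNth {X : Type*} [MeasurableSpace X] (i : Fin (d + 1)) :
    Measurable fun z : X × (Fin d → X) => (i.insertNth z.1 z.2 : Fin (d + 1) → X) :=
  (MeasurableEquiv.piFinSuccAbove (fun _ : Fin (d + 1) => X) i).symm.measurable

theorem measurePreserving_insertNth (i : Fin (d + 1)) :
    MeasurePreserving (fun z : ℝ × (Fin d → ℝ) => (i.insertNth z.1 z.2 : Fin (d + 1) → ℝ))
      ((volume.restrict (Icc 0 1)).prod (volume.restrict (Icc 0 1)))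
      (volume.restrict (Icc 0 1)) := by
  rw [volume_restrict_Icc_eq_pi, volume_restrict_Icc_eq_pi]
  exact (measurePreserving_piFinSuccAbove
    (fun _ : Fin (d + 1) => (volume : Measure ℝ).restrict (Icc 0 1)) i).symm

theorem setIntegral_cube_succ (i : Fin (d + 1)) {F : (Fin (d + 1) → ℝ) → ℝ}
    (hF : Measurable F) {C : ℝ} (hC : ∀ θ, |F θ| ≤ C) :
    ∫ θ in Icc 0 1, F θ = ∫ θ in Icc 0 1, ∫ x in Icc (0 : ℝ) 1, F (i.insertNth x θ) := by
  rw [← (measurePreserving_insertNth i).map_eq, integral_map (measurable_insertNth i).aemeasurable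
    hF.aestronglyMeasurable, integral_prod_symm]
  exact integrable_of_abs_le (hF.comp (measurable_insertNth i)) fun z => hC _

end Cube

/-! ### Periodic traces in several variables -/

/-- `U` is a function on `ℂ^d` with values in `[-1, 1]`, separately sub-mean on the polydisc of
radius two, and `g` is the `ℤ^d`-periodic extension of its restriction to the real points. -/
structure MultiTrace (d : ℕ) (U : (Fin d → ℂ) → ℝ) (g : (Fin d → ℝ) → ℝ) : Prop where
  usc : UpperSemicontinuous U
  abs_le_one : ∀ w, |U w| ≤ 1
  submean : ∀ i w, (∀ j, w j ∈ ball (0 : ℂ) 2) →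
    SubmeanOn (fun ζ => U (Function.update w i ζ)) (ball 0 2)
  periodic : ∀ k : Fin d → ℤ, Function.Periodic g fun i => (k i : ℝ)
  trace_eq : ∀ θ : Fin d → ℝ, (∀ i, |θ i| < 2) → U (fun i => (θ i : ℂ)) = g θ

theorem PeriodicTrace.integral_sq_shift_le {v : ℂ → ℝ} {g : ℝ → ℝ} (H : PeriodicTrace v g)
    {k : ℝ} (hk : 0 ≤ k) : ∫ x in Icc (0 : ℝ) 1, (g (x + k ^ 4) - g x) ^ 2 ≤ 160 * k := by
  have htwo : ∀ x, |g (x + k ^ 4) - g x| ≤ 2 := fun x =>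
    (abs_sub _ _).trans (by linarith [H.abs_trace_le_one x, H.abs_trace_le_one (x + k ^ 4)])
  have hint : IntegrableOn (fun x => g (x + k ^ 4) - g x) (Icc 0 1) :=
    integrable_of_abs_le ((H.measurable.comp (measurable_id.add_const _)).sub H.measurable) htwo
  calc ∫ x in Icc (0 : ℝ) 1, (g (x + k ^ 4) - g x) ^ 2
      ≤ ∫ x in Icc (0 : ℝ) 1, 2 * |g (x + k ^ 4) - g x| := by
        refine integral_mono_of_nonneg (ae_of_all _ fun x => sq_nonneg _)
          (hint.abs.const_mul 2) (ae_of_all _ fun x => ?_)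
        beta_reduce
        rw [← sq_abs, sq]
        exact mul_le_mul_of_nonneg_right (htwo x) (abs_nonneg _)
    _ ≤ 160 * k := by
        rw [integral_const_mul]
        linarith [H.integral_abs_shift_le hk]

namespace MultiTrace

section

variable {d : ℕ} {U : (Fin d → ℂ) → ℝ} {g : (Fin d → ℝ) → ℝ}

theorem eq_fract (H : MultiTrace d U g) (θ : Fin d → ℝ) :
    g θ = U fun i => (Int.fract (θ i) : ℝ) := by
  rw [H.trace_eq _ fun i => abs_lt.2
    ⟨by linarith [Int.fract_nonneg (θ i)], by linarith [Int.fract_lt_one (θ i)]⟩]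
  conv_lhs => rw [← funext fun i => Int.fract_add_floor (θ i)]
  exact H.periodic (fun i => ⌊θ i⌋) fun i => Int.fract (θ i)

theorem measurable (H : MultiTrace d U g) : Measurable g := by
  rw [funext H.eq_fract]
  exact H.usc.measurable.comp (by fun_prop)

theorem abs_trace_le_one (H : MultiTrace d U g) (θ : Fin d → ℝ) : |g θ| ≤ 1 :=
  H.eq_fract θ ▸ H.abs_le_one _

theorem integrable (H : MultiTrace d U g) : IntegrableOn g (Icc 0 1) :=
  integrable_of_abs_le H.measurable H.abs_trace_le_one

theorem abs_integral_le_one (H : MultiTrace d U g) : |∫ θ in Icc 0 1, g θ| ≤ 1 :=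
  abs_integral_le_of_abs_le H.abs_trace_le_one

end

variable {d : ℕ} {U : (Fin (d + 1) → ℂ) → ℝ} {g : (Fin (d + 1) → ℝ) → ℝ}

theorem periodic_insertNth (H : MultiTrace (d + 1) U g) (i : Fin (d + 1)) (θ : Fin d → ℝ) :
    Function.Periodic (fun x => g (i.insertNth x θ)) 1 := fun x => by
  have hperiod := H.periodic (Pi.single i 1) (i.insertNth x θ)
  rwa [show (fun j => ((Pi.single i 1 : Fin (d + 1) → ℤ) j : ℝ)) = Pi.single i 1 by
    ext j; simp [Pi.single_apply], ← insertNth_add_eq_add_single] at hperiod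

theorem slice (H : MultiTrace (d + 1) U g) (i : Fin (d + 1)) {θ : Fin d → ℝ}
    (hθ : ∀ j, |θ j| < 2) :
    PeriodicTrace (fun ζ => U (i.insertNth ζ fun j => (θ j : ℂ)))
      (fun x => g (i.insertNth x θ)) where
  usc := H.usc.comp (by fun_prop)
  abs_le_one _ := H.abs_le_one _
  submean := by
    have hsub := H.submean i (i.insertNth 0 fun j => (θ j : ℂ))
      ((Fin.forall_iff_succAbove i).2 ⟨by simp, fun j => by simpa using hθ j⟩)
    simpa only [Fin.update_insertNth] using hsub
  periodic := H.periodic_insertNth i θ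
  trace_eq x hx := by
    rw [← comp_insertNth]
    exact H.trace_eq _ ((Fin.forall_iff_succAbove i).2 ⟨by simpa using hx, by simpa using hθ⟩)

theorem integral_sq_shift_le (H : MultiTrace (d + 1) U g) (i : Fin (d + 1)) {k : ℝ}
    (hk : 0 ≤ k) : ∫ θ in Icc 0 1, (g (θ + Pi.single i (k ^ 4)) - g θ) ^ 2 ≤ 160 * k := by
  have hmeas : Measurable fun θ => (g (θ + Pi.single i (k ^ 4)) - g θ) ^ 2 :=
    ((H.measurable.comp (measurable_id.add_const _)).sub H.measurable).pow_const 2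
  have hfour : ∀ θ, |(g (θ + Pi.single i (k ^ 4)) - g θ) ^ 2| ≤ 2 ^ 2 := fun θ => by
    rw [abs_pow]
    gcongr
    have h₁ := H.abs_trace_le_one θ
    have h₂ := H.abs_trace_le_one (θ + Pi.single i (k ^ 4))
    exact (abs_sub _ _).trans (by linarith)
  rw [setIntegral_cube_succ i hmeas hfour]
  have hslice : ∀ᵐ (θ : Fin d → ℝ) ∂(volume.restrict (Icc 0 1)), ∫ x in Icc (0 : ℝ) 1,
      (g (i.insertNth x θ + Pi.single i (k ^ 4)) - g (i.insertNth x θ)) ^ 2 ≤ 160 * k := by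
    filter_upwards [ae_restrict_mem measurableSet_Icc] with θ hθ
    simp only [← insertNth_add_eq_add_single]
    exact (H.slice i (abs_lt_two_of_mem_Icc hθ)).integral_sq_shift_le hk
  refine (integral_mono_of_nonneg (ae_of_all _ fun θ => integral_nonneg fun x => sq_nonneg _)
    (integrable_const _) hslice).trans_eq ?_
  rw [integral_const, probReal_univ, one_smul]

end MultiTrace

/-! ### Fourier analysis of periodic functions on the cube -/

section Torus

-- The measure in terms of which Mathlib states the theory of `UnitAddTorus`, where it is local.
local instance measureSpaceUnitAddCircle : MeasureSpace UnitAddCircle := ⟨AddCircle.haarAddCircle⟩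

local instance isAddHaarMeasureUnitAddCircle :
    Measure.IsAddHaarMeasure (volume : Measure UnitAddCircle) :=
  inferInstanceAs (Measure.IsAddHaarMeasure AddCircle.haarAddCircle)

open UnitAddTorus

variable {d : ℕ} {f : (Fin d → ℝ) → ℝ} {F : UnitAddTorus (Fin d) → ℂ} {C : ℝ}

/-- The function on the torus induced by a function on `ℝ^d`, through representatives
in `(0, 1]^d`. -/
def torusLift (f : (Fin d → ℝ) → ℝ) (t : UnitAddTorus (Fin d)) : ℝ :=
  f fun i => (AddCircle.equivIoc 1 0 (t i)).1

theorem torusLift_coe (hper : ∀ k : Fin d → ℤ, Function.Periodic f fun i => (k i : ℝ))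
    (θ : Fin d → ℝ) : torusLift f (fun i => (θ i : UnitAddCircle)) = f θ := by
  have hrep : ∀ i, ∃ k : ℤ,
      (AddCircle.equivIoc (1 : ℝ) 0 (θ i : UnitAddCircle)).1 = θ i + k := fun i => by
    have hzero : (((AddCircle.equivIoc (1 : ℝ) 0 (θ i : UnitAddCircle)).1 - θ i : ℝ) :
        UnitAddCircle) = 0 := by
      rw [AddCircle.coe_sub, AddCircle.coe_equivIoc, sub_self]
    obtain ⟨k, hk⟩ := (AddCircle.coe_eq_zero_iff 1).1 hzero
    exact ⟨k, by rw [zsmul_eq_mul, mul_one] at hk; linarith⟩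
  choose k hk using hrep
  simp only [torusLift, hk]
  exact hper k θ

theorem measurable_torusLift (hf : Measurable f) : Measurable (torusLift f) :=
  hf.comp (measurable_pi_lambda _ fun i => measurable_subtype_coe.comp
    ((AddCircle.measurableEquivIoc 1 0).measurable.comp (measurable_pi_apply i)))

theorem integral_unitAddTorus {E : Type*} [NormedAddCommGroup E] [NormedSpace ℝ E]
    (F : UnitAddTorus (Fin d) → E) :
    ∫ t, F t = ∫ θ in Icc (0 : Fin d → ℝ) 1, F fun i => (θ i : UnitAddCircle) := by
  refine (UnitAddTorus.integral_preimage F 0).trans (setIntegral_congr_set ?_)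
  have hae := Measure.univ_pi_Ioc_ae_eq_Icc (μ := fun _ : Fin d => (volume : Measure ℝ))
    (f := 0) (g := 1)
  rw [← volume_pi] at hae
  refine EventuallyEq.trans (ae_of_all _ fun x => propext ?_) hae
  change (∀ i, x i ∈ Ioc ((0 : Fin d → ℝ) i) ((0 : Fin d → ℝ) i + 1)) ↔ x ∈ univ.pi _
  simp

theorem setIntegral_cube_comp_add_right
    (hper : ∀ k : Fin d → ℤ, Function.Periodic f fun i => (k i : ℝ)) (a : Fin d → ℝ) :
    ∫ θ in Icc 0 1, f (θ + a) = ∫ θ in Icc 0 1, f θ := by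
  have hinv := integral_add_right_eq_self (μ := (volume : Measure (UnitAddTorus (Fin d))))
    (torusLift f) fun i => (a i : UnitAddCircle)
  rw [integral_unitAddTorus, integral_unitAddTorus] at hinv
  have hadd : ∀ θ : Fin d → ℝ, torusLift f ((fun i => (θ i : UnitAddCircle)) +
      fun i => (a i : UnitAddCircle)) = f (θ + a) := fun θ => torusLift_coe hper (θ + a)
  simpa only [hadd, torusLift_coe hper] using hinv

theorem hasSum_sq_norm_mFourierCoeff (hF : Measurable F) (hC : ∀ t, ‖F t‖ ≤ C) :
    HasSum (fun k => ‖mFourierCoeff F k‖ ^ 2) (∫ t, ‖F t‖ ^ 2) := by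
  have hL : MemLp F 2 (volume : Measure (UnitAddTorus (Fin d))) :=
    MemLp.of_bound hF.aestronglyMeasurable C (ae_of_all _ hC)
  have hnorm : ∫ t, ‖hL.toLp F t‖ ^ 2 = ∫ t, ‖F t‖ ^ 2 :=
    integral_congr_ae (by filter_upwards [hL.coeFn_toLp] with t ht; rw [ht])
  have hcoeff : ∀ k, mFourierCoeff (hL.toLp F) k = mFourierCoeff F k := fun k =>
    integral_congr_ae (by filter_upwards [hL.coeFn_toLp] with t ht; rw [ht])
  simpa only [hnorm, hcoeff] using hasSum_sq_mFourierCoeff (hL.toLp F)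

theorem mFourier_add_apply (k : Fin d → ℤ) (s t : UnitAddTorus (Fin d)) :
    mFourier k (s + t) = mFourier k s * mFourier k t := by
  simp only [mFourier, ContinuousMap.coe_mk, Pi.add_apply, ← Finset.prod_mul_distrib]
  refine Finset.prod_congr rfl fun i _ => ?_
  simp [fourier_apply, smul_add, AddCircle.toCircle_add]

theorem mFourierCoeff_comp_add_right (F : UnitAddTorus (Fin d) → ℂ) (a : UnitAddTorus (Fin d))
    (k : Fin d → ℤ) :
    mFourierCoeff (fun t => F (t + a)) k = mFourier k a * mFourierCoeff F k := by
  have hinv : mFourier k a * mFourier (-k) a = 1 := by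
    rw [← mFourier_add, add_neg_cancel, mFourier_zero]
    rfl
  unfold mFourierCoeff
  rw [← integral_add_right_eq_self (fun t => mFourier (-k) t • F t) a, ← integral_const_mul]
  refine integral_congr_ae (ae_of_all _ fun t => ?_)
  simp only [smul_eq_mul, mFourier_add_apply]
  linear_combination (-(mFourier (-k) t * F (t + a))) * hinv

theorem integrable_mFourier_smul (hF : Measurable F) (hC : ∀ t, ‖F t‖ ≤ C) (k : Fin d → ℤ) :
    Integrable fun t => mFourier k t • F t := by
  refine Integrable.of_bound (C := C)
    ((mFourier k).continuous.measurable.smul hF).aestronglyMeasurable (ae_of_all _ fun t => ?_)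
  rw [norm_smul, ← one_mul C]
  exact mul_le_mul (((mFourier k).norm_coe_le_norm t).trans_eq mFourier_norm) (hC t)
    (norm_nonneg _) zero_le_one

theorem mFourierCoeff_comp_add_right_sub (hF : Measurable F) (hC : ∀ t, ‖F t‖ ≤ C)
    (a : UnitAddTorus (Fin d)) (k : Fin d → ℤ) :
    mFourierCoeff (fun t => F (t + a) - F t) k = (mFourier k a - 1) * mFourierCoeff F k := by
  rw [sub_one_mul, ← mFourierCoeff_comp_add_right]
  simp only [mFourierCoeff, smul_sub]
  exact integral_sub
    (integrable_mFourier_smul (hF.comp (measurable_add_const a)) (fun t => hC _) _)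
    (integrable_mFourier_smul hF hC _)

theorem norm_mFourier_coe_sub_one_sq (k : Fin d → ℤ) (a : Fin d → ℝ) :
    ‖mFourier k (fun i => (a i : UnitAddCircle)) - 1‖ ^ 2 =
      4 * Real.sin (Real.pi * ∑ i, (k i : ℝ) * a i) ^ 2 := by
  have hexp : mFourier k (fun i => (a i : UnitAddCircle)) =
      Complex.exp (Complex.I * ((2 * Real.pi * ∑ i, (k i : ℝ) * a i : ℝ) : ℂ)) := by
    simp only [mFourier, ContinuousMap.coe_mk, fourier_coe_apply, ← Complex.exp_sum]
    congr 1
    push_cast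
    rw [Finset.mul_sum, Finset.mul_sum]
    refine Finset.sum_congr rfl fun i _ => ?_
    rw [div_one]
    ring
  rw [hexp, Complex.norm_exp_I_mul_ofReal_sub_one, Real.norm_eq_abs, sq_abs, mul_pow,
    mul_assoc 2, mul_div_cancel_left₀ _ two_ne_zero]
  norm_num

/-- The mean-zero part of a periodic function, as a function on the torus. -/
def centredLift (f : (Fin d → ℝ) → ℝ) (t : UnitAddTorus (Fin d)) : ℂ :=
  ((torusLift f t - ∫ θ in Icc 0 1, f θ : ℝ) : ℂ)

/-- The squared modulus of the `k`-th Fourier coefficient of the mean-zero part of `f`. -/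
def fourierWeight (f : (Fin d → ℝ) → ℝ) (k : Fin d → ℤ) : ℝ :=
  ‖mFourierCoeff (centredLift f) k‖ ^ 2

theorem centredLift_coe (hper : ∀ k : Fin d → ℤ, Function.Periodic f fun i => (k i : ℝ))
    (θ : Fin d → ℝ) : centredLift f (fun i => (θ i : UnitAddCircle)) =
      ((f θ - ∫ η in Icc 0 1, f η : ℝ) : ℂ) := by
  rw [centredLift, torusLift_coe hper]

theorem measurable_centredLift (hf : Measurable f) : Measurable (centredLift f) :=
  Complex.measurable_ofReal.comp ((measurable_torusLift hf).sub_const _)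

theorem norm_centredLift_le (hC : ∀ θ, |f θ| ≤ C) (t : UnitAddTorus (Fin d)) :
    ‖centredLift f t‖ ≤ C + C := by
  rw [centredLift, Complex.norm_real, Real.norm_eq_abs]
  exact (abs_sub _ _).trans (add_le_add (hC _) (abs_integral_le_of_abs_le hC))

theorem fourierWeight_nonneg (f : (Fin d → ℝ) → ℝ) (k : Fin d → ℤ) : 0 ≤ fourierWeight f k :=
  sq_nonneg _

theorem fourierWeight_zero (hf : Measurable f) (hC : ∀ θ, |f θ| ≤ C)
    (hper : ∀ k : Fin d → ℤ, Function.Periodic f fun i => (k i : ℝ)) : fourierWeight f 0 = 0 := by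
  rw [fourierWeight, mFourierCoeff, integral_unitAddTorus]
  simp only [neg_zero, mFourier_zero, ContinuousMap.one_apply, one_smul, centredLift_coe hper]
  rw [integral_complex_ofReal, integral_sub (integrable_of_abs_le hf hC) (integrable_const _)]
  simp

theorem hasSum_fourierWeight (hf : Measurable f) (hC : ∀ θ, |f θ| ≤ C)
    (hper : ∀ k : Fin d → ℤ, Function.Periodic f fun i => (k i : ℝ)) :
    HasSum (fourierWeight f) (∫ θ in Icc 0 1, (f θ - ∫ η in Icc 0 1, f η) ^ 2) := by
  have hsum := hasSum_sq_norm_mFourierCoeff (measurable_centredLift hf) (norm_centredLift_le hC)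
  rw [integral_unitAddTorus] at hsum
  simp only [centredLift_coe hper, Complex.norm_real, Real.norm_eq_abs, sq_abs] at hsum
  exact hsum

theorem hasSum_fourierWeight_mul_sin_sq (hf : Measurable f) (hC : ∀ θ, |f θ| ≤ C)
    (hper : ∀ k : Fin d → ℤ, Function.Periodic f fun i => (k i : ℝ)) (a : Fin d → ℝ) :
    HasSum (fun k => fourierWeight f k * (4 * Real.sin (Real.pi * ∑ i, (k i : ℝ) * a i) ^ 2))
      (∫ θ in Icc 0 1, (f (θ + a) - f θ) ^ 2) := by
  set a' : UnitAddTorus (Fin d) := fun i => (a i : UnitAddCircle) with ha'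
  have hmeas := measurable_centredLift hf
  have hbound := norm_centredLift_le hC
  have hsum := hasSum_sq_norm_mFourierCoeff (F := fun t => centredLift f (t + a') - centredLift f t)
    ((hmeas.comp (measurable_add_const a')).sub hmeas)
    fun t => (norm_sub_le _ _).trans (add_le_add (hbound _) (hbound _))
  have hshift : ∀ θ : Fin d → ℝ, centredLift f ((fun i => (θ i : UnitAddCircle)) + a') =
      ((f (θ + a) - ∫ η in Icc 0 1, f η : ℝ) : ℂ) := fun θ => centredLift_coe hper (θ + a)
  rw [integral_unitAddTorus] at hsum
  simp only [hshift, centredLift_coe hper, ← Complex.ofReal_sub, Complex.norm_real,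
    Real.norm_eq_abs, sq_abs, sub_sub_sub_cancel_right] at hsum
  refine hsum.congr_fun fun k => ?_
  rw [mFourierCoeff_comp_add_right_sub hmeas hbound, norm_mul, mul_pow, ha',
    norm_mFourier_coe_sub_one_sq, fourierWeight, mul_comm]

end Torus

/-! ### The variance estimate -/

theorem two_mul_distToInt_le (x : ℝ) : 2 * distToInt x ≤ |Real.sin (Real.pi * x)| := by
  have hround : distToInt x ≤ |x - round x| :=
    ciInf_le (f := fun k : ℤ => |x - k|) ⟨0, by rintro _ ⟨k, rfl⟩; exact abs_nonneg _⟩ (round x)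
  have hsin : |Real.sin (Real.pi * x)| = |Real.sin (Real.pi * |x - round x|)| := by
    conv_lhs => rw [show Real.pi * x = Real.pi * (x - round x) + (round x : ℤ) * Real.pi by ring,
      Real.sin_add_int_mul_pi, abs_mul, abs_zpow, abs_neg, abs_one, one_zpow, one_mul]
    rcases abs_cases (x - round x) with h | h <;> rw [h.1]
    rw [mul_neg, Real.sin_neg, abs_neg]
  have hjordan := Real.mul_le_sin (x := Real.pi * |x - round x|) (by positivity)
    (by nlinarith [Real.pi_pos, abs_sub_round x])
  rw [div_mul_eq_mul_div, mul_left_comm, mul_div_cancel_left₀ _ Real.pi_pos.ne'] at hjordan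
  rw [hsin]
  linarith [le_abs_self (Real.sin (Real.pi * |x - round x|))]

theorem one_le_integral_sin_sq {x : ℝ} (hx : 1 ≤ |x|) :
    1 ≤ ∫ s in (0 : ℝ)..1, 4 * Real.sin (Real.pi * (x * s)) ^ 2 := by
  have hx0 : x ≠ 0 := abs_pos.1 (by linarith)
  have hhalf : ∀ s : ℝ, 4 * Real.sin (Real.pi * (x * s)) ^ 2 =
      2 - 2 * Real.cos ((2 * Real.pi * x) * s) := fun s => by
    rw [Real.sin_sq_eq_half_sub]
    ring_nf
  simp only [hhalf]
  rw [intervalIntegral.integral_sub (by simp)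
    (Continuous.intervalIntegrable (by fun_prop) _ _), intervalIntegral.integral_const_mul,
    intervalIntegral.integral_comp_mul_left (fun s => Real.cos s) (by positivity), integral_cos]
  simp only [intervalIntegral.integral_const, sub_zero, mul_one, mul_zero, Real.sin_zero,
    smul_eq_mul, one_mul]
  have hsmall : |(2 * Real.pi * x)⁻¹ * Real.sin (2 * Real.pi * x)| ≤ 2⁻¹ * 1 := by
    rw [abs_mul, abs_inv]
    gcongr
    · rw [abs_mul, abs_of_pos (by positivity)]
      nlinarith [Real.pi_gt_three]
    · exact Real.abs_sin_le_one _
  linarith [(abs_le.1 hsmall).2]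

theorem sum_le_of_sum_mul_sin_sq_le {ι : Type*} {S : Finset ι} {c x : ι → ℝ} {B : ℝ}
    (hc : ∀ k ∈ S, 0 ≤ c k) (hx : ∀ k ∈ S, 1 ≤ |x k|)
    (hB : ∀ s ∈ Icc (0 : ℝ) 1, ∑ k ∈ S, c k * (4 * Real.sin (Real.pi * (x k * s)) ^ 2) ≤ B) :
    ∑ k ∈ S, c k ≤ B :=
  calc ∑ k ∈ S, c k
      ≤ ∑ k ∈ S, ∫ s in (0 : ℝ)..1, c k * (4 * Real.sin (Real.pi * (x k * s)) ^ 2) :=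
        Finset.sum_le_sum fun k hk => by
          rw [intervalIntegral.integral_const_mul]
          exact le_mul_of_one_le_right (hc k hk) (one_le_integral_sin_sq (hx k hk))
    _ = ∫ s in (0 : ℝ)..1, ∑ k ∈ S, c k * (4 * Real.sin (Real.pi * (x k * s)) ^ 2) :=
        (intervalIntegral.integral_finsetSum fun k _ =>
          Continuous.intervalIntegrable (by fun_prop) _ _).symm
    _ ≤ ∫ _ in (0 : ℝ)..1, B :=
        intervalIntegral.integral_mono_on zero_le_one
          (Continuous.intervalIntegrable (by fun_prop) _ _) (by simp) hB
    _ = B := by simp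

theorem one_le_sum_abs {d : ℕ} {k : Fin d → ℤ} (hk : k ≠ 0) : 1 ≤ ∑ i, |k i| := by
  obtain ⟨i, hi⟩ := Function.ne_iff.1 hk
  exact (Int.one_le_abs hi).trans
    (Finset.single_le_sum (f := fun i => |k i|) (fun j _ => abs_nonneg _) (Finset.mem_univ i))

theorem le_abs_sin_of_diophantine {d : ℕ} {p q K : ℝ} (hp : 0 ≤ p) (hq : 0 ≤ q)
    {ω : Fin d → ℝ} (hω : Diophantine d p q ω) {k : Fin d → ℤ} (hk : k ≠ 0)
    (hkK : ∀ i, |(k i : ℝ)| ≤ K) :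
    2 * (p / (d * K) ^ q) ≤ |Real.sin (Real.pi * ∑ i, (k i : ℝ) * ω i)| := by
  have hpos : (0 : ℝ) < ((∑ i, |k i| : ℤ) : ℝ) := by exact_mod_cast one_le_sum_abs hk
  have hle : ((∑ i, |k i| : ℤ) : ℝ) ≤ d * K := by
    push_cast
    exact (Finset.sum_le_sum fun i _ => hkK i).trans_eq (by simp)
  refine le_trans ?_ (two_mul_distToInt_le _)
  gcongr
  refine le_trans ?_ (hω k hk)
  gcongr

namespace MultiTrace

variable {d : ℕ} {U : (Fin (d + 1) → ℂ) → ℝ} {g : (Fin (d + 1) → ℝ) → ℝ} {K : ℝ}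

-- High frequencies in the `i`-th direction cost `L²` continuity in that direction: average the
-- increments over all translations of size at most `1 / K`.
theorem sum_fourierWeight_le_rpow (H : MultiTrace (d + 1) U g) (hK : 0 < K) (i : Fin (d + 1))
    {S : Finset (Fin (d + 1) → ℤ)} (hS : ∀ k ∈ S, K ≤ |(k i : ℝ)|) :
    ∑ k ∈ S, fourierWeight g k ≤ 160 * K ^ (-(1 / 4) : ℝ) := by
  refine sum_le_of_sum_mul_sin_sq_le (x := fun k => k i / K)
    (fun k _ => fourierWeight_nonneg g k)
    (fun k hk => by rw [abs_div, abs_of_pos hK, le_div_iff₀ hK, one_mul]; exact hS k hk)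
    fun s hs => ?_
  have hsK : 0 ≤ s / K := div_nonneg hs.1 hK.le
  have hshift := H.integral_sq_shift_le i (Real.rpow_nonneg hsK (1 / 4))
  rw [← Real.rpow_natCast, ← Real.rpow_mul hsK, Nat.cast_ofNat, one_div_mul_cancel four_ne_zero,
    Real.rpow_one] at hshift
  have hsum := sum_le_hasSum S (fun k _ => mul_nonneg (fourierWeight_nonneg g k) (by positivity))
    (hasSum_fourierWeight_mul_sin_sq H.measurable H.abs_trace_le_one H.periodic
      (Pi.single i (s / K)))
  have hfreq : ∀ k : Fin (d + 1) → ℤ,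
      ∑ j, (k j : ℝ) * (Pi.single i (s / K) : Fin (d + 1) → ℝ) j = (k i : ℝ) / K * s := fun k => by
    rw [Finset.sum_eq_single i (fun j _ hj => by simp [hj]) (by simp), Pi.single_eq_same]
    ring
  simp only [hfreq] at hsum
  refine hsum.trans (hshift.trans ?_)
  rw [Real.rpow_neg hK.le, ← Real.inv_rpow hK.le]
  gcongr
  exact (div_le_div_of_nonneg_right hs.2 hK.le).trans_eq (one_div K)

theorem sum_fourierWeight_le_integral_shift (H : MultiTrace (d + 1) U g) {p q : ℝ} (hp : 0 < p)
    (hq : 0 ≤ q) {ω : Fin (d + 1) → ℝ} (hω : Diophantine (d + 1) p q ω) (hK : 0 < K)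
    {S : Finset (Fin (d + 1) → ℤ)} (hS : ∀ k ∈ S, ∀ i, |(k i : ℝ)| ≤ K) :
    ∑ k ∈ S, fourierWeight g k ≤ (((d + 1) * K) ^ q / (4 * p)) ^ 2 *
      ∫ θ in Icc 0 1, (g (θ + ω) - g θ) ^ 2 := by
  have hsum := sum_le_hasSum S (fun k _ => mul_nonneg (fourierWeight_nonneg g k) (by positivity))
    (hasSum_fourierWeight_mul_sin_sq H.measurable H.abs_trace_le_one H.periodic ω)
  refine le_trans ?_ (mul_le_mul_of_nonneg_left hsum (sq_nonneg _))
  rw [Finset.mul_sum]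
  refine Finset.sum_le_sum fun k hk => ?_
  rcases eq_or_ne k 0 with rfl | hk0
  · simp [fourierWeight_zero H.measurable H.abs_trace_le_one H.periodic]
  have hsin := le_abs_sin_of_diophantine hp.le hq hω hk0 (hS k hk)
  push_cast at hsin
  rw [mul_left_comm]
  refine le_mul_of_one_le_right (fourierWeight_nonneg g k) ?_
  calc (1 : ℝ) = (((d + 1) * K) ^ q / (4 * p)) ^ 2 * (4 * (2 * (p / ((d + 1) * K) ^ q)) ^ 2) := by
        have hX : ((d + 1) * K) ^ q ≠ 0 := by positivity
        field_simp [hX]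
        norm_num
    _ ≤ (((d + 1) * K) ^ q / (4 * p)) ^ 2 *
          (4 * |Real.sin (Real.pi * ∑ i, (k i : ℝ) * ω i)| ^ 2) := by
        gcongr
    _ = _ := by rw [sq_abs]

theorem sum_fourierWeight_le (H : MultiTrace (d + 1) U g) (hK : 0 < K)
    {S : Finset (Fin (d + 1) → ℤ)} (hS : ∀ k ∈ S, ∃ i, K ≤ |(k i : ℝ)|) :
    ∑ k ∈ S, fourierWeight g k ≤ (d + 1) * (160 * K ^ (-(1 / 4) : ℝ)) := by
  calc ∑ k ∈ S, fourierWeight g k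
      ≤ ∑ k ∈ S, ∑ i, if K ≤ |(k i : ℝ)| then fourierWeight g k else 0 := by
        refine Finset.sum_le_sum fun k hk => ?_
        obtain ⟨i, hi⟩ := hS k hk
        have hterm := Finset.single_le_sum
          (f := fun i => if K ≤ |(k i : ℝ)| then fourierWeight g k else 0)
          (fun j _ => by split_ifs <;> simp [fourierWeight_nonneg]) (Finset.mem_univ i)
        simpa only [if_pos hi] using hterm
    _ = ∑ i, ∑ k ∈ S with K ≤ |(k i : ℝ)|, fourierWeight g k := by
        rw [Finset.sum_comm]
        simp only [Finset.sum_filter]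
    _ ≤ ∑ _i : Fin (d + 1), 160 * K ^ (-(1 / 4) : ℝ) :=
        Finset.sum_le_sum fun i _ => H.sum_fourierWeight_le_rpow hK i fun k hk =>
          (Finset.mem_filter.1 hk).2
    _ = _ := by simp

-- Low frequencies are controlled by the shift along the Diophantine vector, high ones by the
-- `L²` continuity of the trace.
theorem variance_le (H : MultiTrace (d + 1) U g) {p q : ℝ} (hp : 0 < p) (hq : 0 ≤ q)
    {ω : Fin (d + 1) → ℝ} (hω : Diophantine (d + 1) p q ω) (hK : 0 < K) :
    ∫ θ in Icc 0 1, (g θ - ∫ η in Icc 0 1, g η) ^ 2 ≤ (((d + 1) * K) ^ q / (4 * p)) ^ 2 *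
      (∫ θ in Icc 0 1, (g (θ + ω) - g θ) ^ 2) + (d + 1) * (160 * K ^ (-(1 / 4) : ℝ)) := by
  refine hasSum_le_of_sum_le
    (hasSum_fourierWeight H.measurable H.abs_trace_le_one H.periodic) fun S => ?_
  rw [← Finset.sum_filter_add_sum_filter_not S fun k => ∀ i, |(k i : ℝ)| ≤ K]
  refine add_le_add (H.sum_fourierWeight_le_integral_shift hp hq hω hK fun k hk =>
    (Finset.mem_filter.1 hk).2) (H.sum_fourierWeight_le hK fun k hk => ?_)
  obtain ⟨i, hi⟩ := not_forall.1 (Finset.mem_filter.1 hk).2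
  exact ⟨i, (not_le.1 hi).le⟩

end MultiTrace

/-! ### Convex functions of a trace -/

theorem SubmeanOn.comp_convex {v : ℂ → ℝ} {s : Set ℂ} (h : SubmeanOn v s) (hv : Measurable v)
    {C : ℝ} (hC : ∀ z, |v z| ≤ C) {φ : ℝ → ℝ} (hφ : ConvexOn ℝ univ φ) (hmono : Monotone φ) :
    SubmeanOn (fun z => φ (v z)) s := by
  intro c R hR hcs
  have hcont : Continuous φ := hφ.locallyLipschitz.continuous
  have hφC : ∀ z, |φ (v z)| ≤ max |φ (-C)| |φ C| := fun z =>
    abs_le_max_abs_abs (hmono (abs_le.1 (hC z)).1) (hmono (abs_le.1 (hC z)).2)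
  refine (hmono (h c R hR hcs)).trans ?_
  rw [Real.circleAverage_eq_intervalAverage, Real.circleAverage_eq_intervalAverage]
  have hpi := Real.two_pi_pos
  refine hφ.map_set_average_le hcont.continuousOn isClosed_univ ?_ ?_ (ae_of_all _ fun _ => trivial)
    (intervalIntegrable_iff.1 (circleIntegrable_of_abs_le hv hC c R))
    (intervalIntegrable_iff.1 (circleIntegrable_of_abs_le (hcont.measurable.comp hv) hφC c R))
  · rw [uIoc_of_le hpi.le, Real.volume_Ioc]
    simpa using hpi
  · rw [uIoc_of_le hpi.le]
    exact measure_Ioc_lt_top.ne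

theorem MultiTrace.comp_convex {d : ℕ} {U : (Fin d → ℂ) → ℝ} {g : (Fin d → ℝ) → ℝ}
    (H : MultiTrace d U g) {φ : ℝ → ℝ} (hφ : ConvexOn ℝ univ φ) (hmono : Monotone φ)
    (hone : ∀ t, |t| ≤ 1 → |φ t| ≤ 1) : MultiTrace d (fun w => φ (U w)) fun θ => φ (g θ) where
  usc := hφ.locallyLipschitz.continuous.comp_upperSemicontinuous H.usc hmono
  abs_le_one w := hone _ (H.abs_le_one w)
  submean i w hw := (H.submean i w hw).comp_convex
    (H.usc.comp (continuous_const.update i continuous_id)).measurable (fun _ => H.abs_le_one _)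
    hφ hmono
  periodic k θ := congrArg φ (H.periodic k θ)
  trace_eq θ hθ := congrArg φ (H.trace_eq θ hθ)

/-- Half the positive part of `t - m`. The factor makes it preserve `[-1, 1]` when `|m| ≤ 1`. -/
def halfPosPart (m t : ℝ) : ℝ := 1 / 2 * max (t - m) 0

section HalfPosPart

variable {m : ℝ}

theorem convexOn_halfPosPart : ConvexOn ℝ univ (halfPosPart m) :=
  (((convexOn_id convex_univ).sub (concaveOn_const m convex_univ)).sup
    (convexOn_const 0 convex_univ)).smul (by norm_num)

theorem monotone_halfPosPart : Monotone (halfPosPart m) := fun a b hab => by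
  unfold halfPosPart
  gcongr

theorem halfPosPart_nonneg (a : ℝ) : 0 ≤ halfPosPart m a :=
  mul_nonneg (by norm_num) (le_max_right _ _)

theorem halfPosPart_le_abs (a : ℝ) : halfPosPart m a ≤ |a - m| := by
  have hmax : max (a - m) 0 ≤ |a - m| := max_le (le_abs_self _) (abs_nonneg _)
  unfold halfPosPart
  linarith [abs_nonneg (a - m)]

theorem abs_halfPosPart_le_one (hm : |m| ≤ 1) (a : ℝ) (ha : |a| ≤ 1) : |halfPosPart m a| ≤ 1 := by
  have hmax : max (a - m) 0 ≤ 2 :=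
    max_le (by linarith [(abs_le.1 ha).2, (abs_le.1 hm).1]) zero_le_two
  rw [abs_of_nonneg (halfPosPart_nonneg a), halfPosPart]
  linarith

theorem abs_halfPosPart_sub_le (a b : ℝ) : |halfPosPart m a - halfPosPart m b| ≤ |a - b| := by
  have hmax := abs_max_sub_max_le_abs (a - m) (b - m) 0
  rw [sub_sub_sub_cancel_right] at hmax
  rw [halfPosPart, halfPosPart, ← mul_sub, abs_mul, abs_of_pos one_half_pos]
  linarith [abs_nonneg (a - b)]

theorem abs_sub_eq_halfPosPart (a : ℝ) : |a - m| = 4 * halfPosPart m a - (a - m) := by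
  unfold halfPosPart
  rcases abs_cases (a - m) with h | h
  · rw [h.1, max_eq_left h.2]
    ring
  · rw [h.1, max_eq_right h.2.le]
    ring

end HalfPosPart

/-! ### Marginals -/

namespace MultiTrace

variable {d : ℕ} {U : (Fin (d + 1) → ℂ) → ℝ} {g : (Fin (d + 1) → ℝ) → ℝ}

theorem marginal (H : MultiTrace (d + 1) U g) (i : Fin (d + 1)) :
    MultiTrace d (fun w => ∫ x in Icc (0 : ℝ) 1, U (i.insertNth (x : ℂ) w))
      (fun θ => ∫ x in Icc (0 : ℝ) 1, g (i.insertNth x θ)) where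
  usc := upperSemicontinuous_integral (C := 1)
    (fun w => (H.usc.comp (by fun_prop)).measurable) (fun _ _ => H.abs_le_one _)
    fun x => H.usc.comp (by fun_prop)
  abs_le_one w := abs_integral_le_of_abs_le fun _ => H.abs_le_one _
  submean j w hw := by
    refine SubmeanOn.integral (C := 1)
      (F := fun (x : ℝ) ζ => U (i.insertNth (x : ℂ) (Function.update w j ζ)))
      ((H.usc.comp (by fun_prop)).measurable (f := fun z : ℝ × ℂ => _))
      (fun x ζ => H.abs_le_one _) ?_
    filter_upwards [ae_restrict_mem measurableSet_Icc] with x hx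
    have hball : ∀ j, (i.insertNth (x : ℂ) w : Fin (d + 1) → ℂ) j ∈ ball (0 : ℂ) 2 :=
      (Fin.forall_iff_succAbove i).2 ⟨by
        simpa using abs_lt.2 ⟨by linarith [hx.1], by linarith [hx.2]⟩, by simpa using hw⟩
    simpa only [Fin.insertNth_update] using H.submean (i.succAbove j) _ hball
  periodic k θ := by
    have hperiod : ∀ x, g (i.insertNth x (θ + fun j => (k j : ℝ))) = g (i.insertNth x θ) :=
      fun x => by
        rw [← H.periodic (i.insertNth 0 k) (i.insertNth x θ), comp_insertNth,
          ← Fin.insertNth_add, Int.cast_zero, add_zero]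
    simp only [hperiod]
  trace_eq θ hθ := setIntegral_congr_fun measurableSet_Icc fun x hx =>
    (H.slice i hθ).trace_eq x (abs_lt.2 ⟨by linarith [hx.1], by linarith [hx.2]⟩)

theorem integral_marginal (H : MultiTrace (d + 1) U g) (i : Fin (d + 1)) :
    ∫ θ in Icc 0 1, ∫ x in Icc (0 : ℝ) 1, g (i.insertNth x θ) = ∫ θ in Icc 0 1, g θ :=
  (setIntegral_cube_succ i H.measurable H.abs_trace_le_one).symm

theorem measurable_comp_insertNth (H : MultiTrace (d + 1) U g) (i : Fin (d + 1))
    (θ : Fin d → ℝ) : Measurable fun x => g (i.insertNth x θ) :=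
  H.measurable.comp ((measurable_insertNth i).comp (measurable_id.prodMk measurable_const))

theorem integrable_comp_insertNth (H : MultiTrace (d + 1) U g) (i : Fin (d + 1))
    (θ : Fin d → ℝ) : IntegrableOn (fun x => g (i.insertNth x θ)) (Icc 0 1) :=
  integrable_of_abs_le (H.measurable_comp_insertNth i θ) fun _ => H.abs_trace_le_one _

theorem abs_marginal_shift_le (H : MultiTrace (d + 1) U g) (i : Fin (d + 1))
    {ω : Fin (d + 1) → ℝ} {ε : ℝ} (hε : ∀ θ, |g (θ + ω) - g θ| ≤ ε) (θ : Fin d → ℝ) :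
    |(∫ x in Icc (0 : ℝ) 1, g (i.insertNth x (θ + i.removeNth ω))) -
      ∫ x in Icc (0 : ℝ) 1, g (i.insertNth x θ)| ≤ ε := by
  have hadd : ∀ x, (i.insertNth (x + ω i) (θ + i.removeNth ω) : Fin (d + 1) → ℝ) =
      i.insertNth x θ + ω := fun x => by
    rw [Fin.insertNth_add, Fin.insertNth_self_removeNth]
  rw [← setIntegral_comp_add_right (H.periodic_insertNth i _) (ω i), ← integral_sub]
  · exact abs_integral_le_of_abs_le fun x => hadd x ▸ hε _
  · simp only [hadd]
    exact integrable_of_abs_le (H.measurable.comp (((measurable_insertNth i).comp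
      (measurable_id.prodMk measurable_const)).add_const ω)) fun _ => H.abs_trace_le_one _
  · exact H.integrable_comp_insertNth i θ

end MultiTrace

theorem Diophantine.removeNth {d : ℕ} {p q : ℝ} {ω : Fin (d + 1) → ℝ}
    (h : Diophantine (d + 1) p q ω) (i : Fin (d + 1)) : Diophantine d p q (i.removeNth ω) := by
  intro k hk
  have hne : (i.insertNth 0 k : Fin (d + 1) → ℤ) ≠ 0 := fun hzero =>
    hk (funext fun j => by simpa using congrFun hzero (i.succAbove j))
  simpa [Fin.sum_univ_succAbove _ i, Fin.removeNth] using h _ hne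

/-! ### Large deviations at polynomial scale -/

theorem sq_integral_abs_le {X : Type*} [MeasurableSpace X] {μ : Measure X}
    [IsProbabilityMeasure μ] {f : X → ℝ} (hf : MemLp f 2 μ) :
    (∫ x, |f x| ∂μ) ^ 2 ≤ ∫ x, f x ^ 2 ∂μ := by
  have hvar := ProbabilityTheory.variance_eq_sub hf.abs
  simp only [Pi.pow_apply, Pi.abs_apply, sq_abs] at hvar
  linarith [ProbabilityTheory.variance_nonneg |f| μ]

namespace MultiTrace

variable {d : ℕ} {U : (Fin (d + 1) → ℂ) → ℝ} {g : (Fin (d + 1) → ℝ) → ℝ} {p q x : ℝ}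
  {ω : Fin (d + 1) → ℝ}

theorem variance_le_rpow (H : MultiTrace (d + 1) U g) (hp : 0 < p) (hq : 1 ≤ q)
    (hω : Diophantine (d + 1) p q ω) (hx : 1 ≤ x) (hg : ∀ θ, |g (θ + ω) - g θ| ≤ 1 / x) :
    ∫ θ in Icc 0 1, (g θ - ∫ η in Icc 0 1, g η) ^ 2 ≤
      (((d + 1) ^ q / (4 * p)) ^ 2 + (d + 1) * 160) * x ^ (-(1 / (8 * q))) := by
  have hx0 : 0 < x := one_pos.trans_le hx
  have hq0 : 0 < q := one_pos.trans_le hq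
  have hvar := H.variance_le hp hq0.le hω (K := x ^ (1 / (2 * q))) (by positivity)
  have hhigh : (x ^ (1 / (2 * q))) ^ (-(1 / 4) : ℝ) = x ^ (-(1 / (8 * q))) := by
    rw [← Real.rpow_mul hx0.le]
    congr 1
    field_simp
    norm_num
  have hlow : ((((d : ℝ) + 1) * x ^ (1 / (2 * q))) ^ q / (4 * p)) ^ 2 =
      ((d + 1) ^ q / (4 * p)) ^ 2 * x := by
    rw [Real.mul_rpow (by positivity) (by positivity), ← Real.rpow_mul hx0.le,
      show 1 / (2 * q) * q = 1 / 2 by field_simp, ← Real.sqrt_eq_rpow, mul_div_right_comm, mul_pow,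
      Real.sq_sqrt hx0.le]
  have hshift : ∫ θ in Icc 0 1, (g (θ + ω) - g θ) ^ 2 ≤ (1 / x) ^ 2 :=
    (le_abs_self _).trans (abs_integral_le_of_abs_le fun θ => by
      rw [abs_pow]
      exact pow_le_pow_left₀ (abs_nonneg _) (hg θ) 2)
  have hinv : x * (1 / x) ^ 2 ≤ x ^ (-(1 / (8 * q))) := by
    rw [one_div, sq, mul_inv_cancel_left₀ hx0.ne', ← Real.rpow_neg_one]
    refine Real.rpow_le_rpow_of_exponent_le hx (neg_le_neg ?_)
    rw [div_le_one (by positivity)]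
    linarith
  rw [hhigh, hlow] at hvar
  calc _ ≤ ((d + 1) ^ q / (4 * p)) ^ 2 * (x * (1 / x) ^ 2) +
          (d + 1) * (160 * x ^ (-(1 / (8 * q)))) := by
        refine hvar.trans (add_le_add_left ?_ _)
        rw [mul_assoc]
        gcongr
    _ ≤ ((d + 1) ^ q / (4 * p)) ^ 2 * x ^ (-(1 / (8 * q))) +
          (d + 1) * (160 * x ^ (-(1 / (8 * q)))) := by gcongr
    _ = _ := by ring

theorem integral_abs_sub_le (H : MultiTrace (d + 1) U g) (hp : 0 < p) (hq : 1 ≤ q)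
    (hω : Diophantine (d + 1) p q ω) (hx : 1 ≤ x) (hg : ∀ θ, |g (θ + ω) - g θ| ≤ 1 / x) :
    ∫ θ in Icc 0 1, |g θ - ∫ η in Icc 0 1, g η| ≤
      (((d + 1) ^ q / (4 * p)) ^ 2 + (d + 1) * 160) * x ^ (-(1 / (16 * q))) := by
  have hx0 : 0 < x := one_pos.trans_le hx
  have hvar := H.variance_le_rpow hp hq hω hx hg
  set A : ℝ := ((d + 1) ^ q / (4 * p)) ^ 2 + (d + 1) * 160
  have hA : 1 ≤ A := by
    have := sq_nonneg (((d : ℝ) + 1) ^ q / (4 * p))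
    have := Nat.cast_nonneg (α := ℝ) d
    linarith
  have hmem : MemLp (fun θ => g θ - ∫ η in Icc 0 1, g η) 2 (volume.restrict (Icc 0 1)) :=
    (MemLp.of_bound H.measurable.aestronglyMeasurable 1 (ae_of_all _ H.abs_trace_le_one)).sub
      (memLp_const _)
  refine le_of_sq_le_sq ((sq_integral_abs_le hmem).trans (hvar.trans ?_)) (by positivity)
  rw [mul_pow, ← Real.rpow_mul_natCast hx0.le,
    show -(1 / (16 * q)) * (2 : ℕ) = -(1 / (8 * q)) by push_cast; field_simp; norm_num]
  gcongr
  exact le_self_pow₀ hA two_ne_zero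

end MultiTrace

theorem measure_cube_succ_le {d : ℕ} (i : Fin (d + 1)) {B : Set (Fin (d + 1) → ℝ)}
    (hB : MeasurableSet B) {N : Set (Fin d → ℝ)} {ε : ENNReal}
    (hN : ∀ θ ∈ Icc (0 : Fin d → ℝ) 1, θ ∉ N →
      volume.restrict (Icc (0 : ℝ) 1) {x | i.insertNth x θ ∈ B} ≤ ε) :
    volume.restrict (Icc 0 1) B ≤ volume.restrict (Icc 0 1) N + ε := by
  set μ := (volume : Measure (Fin d → ℝ)).restrict (Icc 0 1)
  rw [← (measurePreserving_insertNth i).measure_preimage hB.nullMeasurableSet,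
    Measure.prod_apply_symm (measurable_insertNth i hB), ← measure_toMeasurable N]
  calc _ ≤ ∫⁻ θ, (toMeasurable μ N).indicator 1 θ + ε ∂μ := by
        refine lintegral_mono_ae ?_
        filter_upwards [ae_restrict_mem measurableSet_Icc] with θ hθ
        by_cases hθN : θ ∈ toMeasurable μ N
        · rw [indicator_of_mem hθN]
          exact (prob_le_one (μ := volume.restrict (Icc (0 : ℝ) 1))).trans le_self_add
        · exact (hN θ hθ (notMem_subset (subset_toMeasurable μ N) hθN)).trans le_add_self
    _ = _ := by
        rw [lintegral_add_right _ measurable_const,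
          lintegral_indicator_one (measurableSet_toMeasurable μ N)]
        simp

/-- The large deviation estimate at scale `x ^ (-κ)` for all separately sub-mean functions of `d`
variables whose increments along a vector of type `(p, q)` are at most `1 / x`. -/
def DeviationEstimate (d : ℕ) (p q κ C : ℝ) : Prop :=
  ∀ ⦃U : (Fin d → ℂ) → ℝ⦄ ⦃g : (Fin d → ℝ) → ℝ⦄, MultiTrace d U g →
    ∀ ⦃ω : Fin d → ℝ⦄, Diophantine d p q ω → ∀ ⦃x : ℝ⦄, 1 ≤ x →
    (∀ θ, |g (θ + ω) - g θ| ≤ 1 / x) →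
    volume.restrict (Icc 0 1) {θ | C * x ^ (-κ) < |g θ - ∫ η in Icc 0 1, g η|} ≤
      ENNReal.ofReal (C * Real.exp (-(x ^ κ / C)))

theorem sub_integral_eq_zero_of_subsingleton {X : Type*} [MeasurableSpace X] [Subsingleton X]
    {μ : Measure X} [IsProbabilityMeasure μ] (f : X → ℝ) (x : X) : f x - ∫ y, f y ∂μ = 0 := by
  simp [Subsingleton.elim _ x]

theorem deviationEstimate_zero (p q κ : ℝ) {C : ℝ} (hC : 0 ≤ C) : DeviationEstimate 0 p q κ C := by
  intro U g _ ω _ x hx _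
  have hpow : 0 ≤ C * x ^ (-κ) := mul_nonneg hC (Real.rpow_nonneg (zero_le_one.trans hx) _)
  simp only [sub_integral_eq_zero_of_subsingleton, abs_zero, hpow.not_gt]
  simp

section InductionStep

variable {d : ℕ} {U : (Fin (d + 1) → ℂ) → ℝ} {g : (Fin (d + 1) → ℝ) → ℝ} {p q κ C x : ℝ}
  {ω : Fin (d + 1) → ℝ}

theorem MultiTrace.measure_deviation_le (H : MultiTrace (d + 1) U g) (i : Fin (d + 1)) {m h : ℝ}
    (hm : |m| ≤ 1) (hh : 0 < h) :
    volume.restrict (Icc 0 1) {θ | 111 * h < |g θ - m|} ≤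
      volume.restrict (Icc 0 1) {θ | h ^ 8 < ∫ x in Icc (0 : ℝ) 1, |g (i.insertNth x θ) - m|} +
        ENNReal.ofReal (64 * Real.exp (-(1 / h))) := by
  refine measure_cube_succ_le i (measurableSet_lt measurable_const (H.measurable.sub_const m).abs)
    fun θ hθ hθN => ?_
  refine le_of_eq_of_le ?_ ((H.slice i (abs_lt_two_of_mem_Icc hθ)).volume_deviation_le hm hh
    (not_lt.1 hθN))
  rw [Measure.restrict_apply' measurableSet_Icc, inter_comm]
  rfl

-- Since `|y| = 2 y⁺ - y`, the mean of `|g - m|` over a fibre is controlled by the marginals of `g`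
-- and of its positive part, to which the estimate in one variable less applies.
theorem MultiTrace.integral_abs_insertNth_sub_le (H : MultiTrace (d + 1) U g) (i : Fin (d + 1))
    {m a b : ℝ} (hm : |m| ≤ 1) (hb : ∫ θ in Icc 0 1, |g θ - m| ≤ b) {θ : Fin d → ℝ}
    (hmean : |(∫ x in Icc (0 : ℝ) 1, g (i.insertNth x θ)) - m| ≤ a)
    (hpos : |(∫ x in Icc (0 : ℝ) 1, halfPosPart m (g (i.insertNth x θ))) -
      ∫ η in Icc 0 1, halfPosPart m (g η)| ≤ a) :
    ∫ x in Icc (0 : ℝ) 1, |g (i.insertNth x θ) - m| ≤ 4 * b + 5 * a := by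
  have hP := H.comp_convex convexOn_halfPosPart monotone_halfPosPart (abs_halfPosPart_le_one hm)
  have hmeanPos : ∫ η in Icc 0 1, halfPosPart m (g η) ≤ b :=
    (integral_mono hP.integrable (H.integrable.sub (integrable_const m)).abs fun η =>
      halfPosPart_le_abs _).trans hb
  have hint := H.integrable_comp_insertNth i θ
  have hsub : IntegrableOn (fun x => g (i.insertNth x θ) - m) (Icc 0 1) :=
    hint.sub (integrable_const m)
  simp only [abs_sub_eq_halfPosPart]
  rw [integral_sub ((hP.integrable_comp_insertNth i θ).const_mul 4) hsub, integral_const_mul,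
    integral_sub hint (integrable_const m), integral_const, probReal_univ, one_smul]
  linarith [(abs_le.1 hmean).1, (abs_le.1 hpos).2]

theorem DeviationEstimate.measure_integral_abs_insertNth_le (hD : DeviationEstimate d p q κ C)
    (hC : 0 ≤ C) (H : MultiTrace (d + 1) U g) (i : Fin (d + 1))
    (hω : Diophantine (d + 1) p q ω) (hx : 1 ≤ x) (hg : ∀ θ, |g (θ + ω) - g θ| ≤ 1 / x)
    {b : ℝ} (hb : ∫ θ in Icc 0 1, |g θ - ∫ η in Icc 0 1, g η| ≤ b) :
    volume.restrict (Icc 0 1) {θ | 4 * b + 5 * (C * x ^ (-κ)) <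
      ∫ x in Icc (0 : ℝ) 1, |g (i.insertNth x θ) - ∫ η in Icc 0 1, g η|} ≤
    ENNReal.ofReal (2 * C * Real.exp (-(x ^ κ / C))) := by
  have hm := H.abs_integral_le_one
  set m := ∫ η in Icc 0 1, g η with hmdef
  have hP := H.comp_convex convexOn_halfPosPart monotone_halfPosPart (abs_halfPosPart_le_one hm)
  have hPg : ∀ θ, |halfPosPart m (g (θ + ω)) - halfPosPart m (g θ)| ≤ 1 / x := fun θ =>
    (abs_halfPosPart_sub_le _ _).trans (hg θ)
  have hbad := hD (H.marginal i) (hω.removeNth i) hx (H.abs_marginal_shift_le i hg)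
  have hbadP := hD (hP.marginal i) (hω.removeNth i) hx (hP.abs_marginal_shift_le i hPg)
  rw [H.integral_marginal, ← hmdef] at hbad
  rw [hP.integral_marginal] at hbadP
  rw [mul_assoc, two_mul, ENNReal.ofReal_add (by positivity) (by positivity)]
  refine (measure_mono fun θ hθ => ?_).trans ((measure_union_le _ _).trans (add_le_add hbad hbadP))
  by_contra hgood
  rw [mem_union, not_or] at hgood
  exact (H.integral_abs_insertNth_sub_le i hm hb (not_lt.1 hgood.1) (not_lt.1 hgood.2)).not_gt hθ

theorem add_exp_le_mul_exp {κ' D : ℝ} (hx : 1 ≤ x) (hκ' : κ' ≤ κ) (hC : 1 ≤ C) (hCD : 5 * C ≤ D) :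
    2 * C * Real.exp (-(x ^ κ / C)) + 64 * Real.exp (-(x ^ κ' / D)) ≤
      111 * D * Real.exp (-(x ^ κ' / (111 * D))) := by
  calc 2 * C * Real.exp (-(x ^ κ / C)) + 64 * Real.exp (-(x ^ κ' / D))
      ≤ 2 * C * Real.exp (-(x ^ κ' / (111 * D))) + 64 * Real.exp (-(x ^ κ' / (111 * D))) := by
        gcongr <;> linarith
    _ ≤ 111 * D * Real.exp (-(x ^ κ' / (111 * D))) := by
        rw [← add_mul]
        gcongr
        linarith

theorem mul_rpow_add_mul_rpow_le {a b C₁ C₂ t : ℝ} (hx : 1 ≤ x) (hC₁ : 0 ≤ C₁) (hC₂ : 0 ≤ C₂)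
    (hC : 1 ≤ C₁ + C₂) (hta : 8 * t ≤ a) (htb : 8 * t ≤ b) :
    C₁ * x ^ (-a) + C₂ * x ^ (-b) ≤ ((C₁ + C₂) * x ^ (-t)) ^ 8 := by
  have hx0 : 0 < x := one_pos.trans_le hx
  have hpow : (x ^ (-t)) ^ 8 = x ^ (-(8 * t)) := by
    rw [← Real.rpow_mul_natCast hx0.le, Nat.cast_ofNat, neg_mul, mul_comm]
  calc C₁ * x ^ (-a) + C₂ * x ^ (-b) ≤ C₁ * x ^ (-(8 * t)) + C₂ * x ^ (-(8 * t)) := by gcongr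
    _ = (C₁ + C₂) * (x ^ (-t)) ^ 8 := by rw [hpow, add_mul]
    _ ≤ (C₁ + C₂) ^ 8 * (x ^ (-t)) ^ 8 := by
        gcongr
        exact le_self_pow₀ hC (by norm_num)
    _ = _ := (mul_pow _ _ _).symm

theorem DeviationEstimate.succ (hD : DeviationEstimate d p q κ C) (hp : 0 < p) (hq : 1 ≤ q)
    (hκ : 0 ≤ κ) (hC : 1 ≤ C) :
    DeviationEstimate (d + 1) p q (min (1 / (16 * q)) κ / 8)
      (111 * (4 * (((d + 1) ^ q / (4 * p)) ^ 2 + (d + 1) * 160) + 5 * C)) := by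
  intro U g H ω hω x hx hg
  have hx0 : 0 < x := one_pos.trans_le hx
  have hmean := H.integral_abs_sub_le hp hq hω hx hg
  set A : ℝ := ((d + 1) ^ q / (4 * p)) ^ 2 + (d + 1) * 160
  set κ' := min (1 / (16 * q)) κ / 8 with hκ'
  set D := 4 * A + 5 * C
  have hA : 0 ≤ A := by positivity
  have hh : 0 < D * x ^ (-κ') := by positivity
  have hexp : 1 / (D * x ^ (-κ')) = x ^ κ' / D := by
    rw [Real.rpow_neg hx0.le]
    field_simp
  have hscale : 4 * (A * x ^ (-(1 / (16 * q)))) + 5 * (C * x ^ (-κ)) ≤ (D * x ^ (-κ')) ^ 8 := by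
    rw [← mul_assoc, ← mul_assoc]
    exact mul_rpow_add_mul_rpow_le hx (by positivity) (by positivity) (by linarith)
      (by linarith [min_le_left (1 / (16 * q)) κ]) (by linarith [min_le_right (1 / (16 * q)) κ])
  rw [mul_assoc 111]
  refine (H.measure_deviation_le 0 H.abs_integral_le_one hh).trans ?_
  refine (add_le_add_left ((measure_mono fun θ hθ => hscale.trans_lt hθ).trans
    (hD.measure_integral_abs_insertNth_le (by linarith) H 0 hω hx hg hmean)) _).trans ?_
  rw [hexp, ← ENNReal.ofReal_add (by positivity) (by positivity)]
  have hκ'κ : κ' ≤ κ := by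
    have hmin : 0 ≤ min (1 / (16 * q)) κ := le_min (by positivity) hκ
    linarith [hmin, min_le_right (1 / (16 * q)) κ]
  exact ENNReal.ofReal_le_ofReal (add_exp_le_mul_exp hx hκ'κ hC (by linarith))

end InductionStep

theorem exists_deviationEstimate (d : ℕ) {p q : ℝ} (hp : 0 < p) (hq : 1 ≤ q) :
    ∃ κ C : ℝ, 0 < κ ∧ 1 ≤ C ∧ DeviationEstimate d p q κ C := by
  induction d with
  | zero => exact ⟨1, 1, one_pos, le_rfl, deviationEstimate_zero p q 1 zero_le_one⟩
  | succ d ih =>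
    obtain ⟨κ, C, hκ, hC, hD⟩ := ih
    refine ⟨_, _, by positivity, ?_, hD.succ hp hq hκ.le hC⟩
    nlinarith [sq_nonneg (((d : ℝ) + 1) ^ q / (4 * p)), Nat.cast_nonneg (α := ℝ) d]

/-! ### Joint semicontinuity of separately sub-mean functions -/

section ChangingDomain

theorem indicator_ball_eventually_lt {ι : Type*} {l : Filter ι} {F : ι → ℂ → ℝ} {f : ℂ → ℝ}
    {c : ι → ℂ} {z ζ : ℂ} {r : ℝ} (hc : Tendsto c l (𝓝 z)) (hζ : ζ ∉ sphere z r)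
    (hlim : ζ ∈ ball z r → ∀ a, f ζ < a → ∀ᶠ i in l, F i ζ < a) {a : ℝ}
    (ha : (ball z r).indicator f ζ < a) : ∀ᶠ i in l, (ball (c i) r).indicator (F i) ζ < a := by
  have hdist : Tendsto (fun i => dist ζ (c i)) l (𝓝 (dist ζ z)) := tendsto_const_nhds.dist hc
  rcases lt_or_gt_of_ne (show dist ζ z ≠ r from hζ) with hin | hout
  · rw [indicator_of_mem (mem_ball.2 hin)] at ha
    filter_upwards [hlim hin a ha, hdist.eventually (gt_mem_nhds hin)] with i hi hir
    rwa [indicator_of_mem (mem_ball.2 hir)]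
  · rw [indicator_of_notMem (mt mem_ball.1 hout.not_gt)] at ha
    filter_upwards [hdist.eventually (lt_mem_nhds hout)] with i hir
    rwa [indicator_of_notMem (mt mem_ball.1 hir.not_gt)]

theorem eventually_setIntegral_ball_lt {ι : Type*} {l : Filter ι} [l.IsCountablyGenerated]
    {F : ι → ℂ → ℝ} {f : ℂ → ℝ} {C : ℝ} (hF : ∀ i, Measurable (F i)) (hFC : ∀ i ζ, |F i ζ| ≤ C)
    (hf : Measurable f) (hfC : ∀ ζ, |f ζ| ≤ C) {c : ι → ℂ} {z : ℂ} (hc : Tendsto c l (𝓝 z))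
    {r : ℝ} (hlim : ∀ ζ ∈ ball z r, ∀ a, f ζ < a → ∀ᶠ i in l, F i ζ < a) {a : ℝ}
    (ha : ∫ ζ in ball z r, f ζ < a) : ∀ᶠ i in l, ∫ ζ in ball (c i) r, F i ζ < a := by
  have hind : ∀ (s : Set ℂ) {v : ℂ → ℝ}, (∀ ζ, |v ζ| ≤ C) → ∀ ζ, |s.indicator v ζ| ≤ C :=
    fun s v hv ζ => (norm_indicator_le_norm_self (s := s) v ζ).trans (hv ζ)
  have hlim' : ∀ᵐ ζ ∂volume.restrict (ball z (r + 1)), ∀ a, (ball z r).indicator f ζ < a →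
      ∀ᶠ i in l, (ball (c i) r).indicator (F i) ζ < a := by
    refine ae_restrict_of_ae ?_
    filter_upwards [measure_eq_zero_iff_ae_notMem.1 (Measure.addHaar_sphere volume z r)]
      with ζ hζ a ha using indicator_ball_eventually_lt hc hζ (hlim ζ) ha
  have hball : ball z r ⊆ ball z (r + 1) := ball_subset_ball (by linarith)
  rw [← inter_eq_right.2 hball, ← setIntegral_indicator measurableSet_ball] at ha
  filter_upwards [eventually_integral_lt (fun i => (hF i).indicator measurableSet_ball)
    (fun i => hind _ (hFC i)) (hf.indicator measurableSet_ball) (hind _ hfC) hlim' ha,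
    hc (ball_mem_nhds z one_pos)] with i hi hci
  have hci' : ball (c i) r ⊆ ball z (r + 1) :=
    ball_subset_ball' (by linarith [(mem_ball.1 hci).le])
  rwa [setIntegral_indicator measurableSet_ball, inter_eq_right.2 hci'] at hi

theorem eventually_setIntegral_ball_lt_mul {v : ℂ → ℝ} {c : ℂ} {C y : ℝ}
    (hv : UpperSemicontinuousAt v c) (hmeas : Measurable v) (hC : ∀ z, |v z| ≤ C) (hy : v c < y) :
    ∀ᶠ r in 𝓝[>] (0 : ℝ), ∫ ζ in ball c r, v ζ < volume.real (ball c r) * y := by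
  obtain ⟨y', hvy', hy'⟩ := exists_between hy
  obtain ⟨ε, hε, hball⟩ := Metric.eventually_nhds_iff_ball.1 (hv y' hvy')
  filter_upwards [Ioo_mem_nhdsGT hε] with r hr
  have hpos : 0 < volume.real (ball c r) :=
    ENNReal.toReal_pos (measure_ball_pos volume c hr.1).ne' measure_ball_lt_top.ne
  calc ∫ ζ in ball c r, v ζ ≤ ∫ _ in ball c r, y' :=
        setIntegral_mono_on (integrable_of_abs_le hmeas hC) (integrable_const _) measurableSet_ball
          fun ζ hζ => (hball ζ (ball_subset_ball hr.2.le hζ)).le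
    _ = volume.real (ball c r) * y' := by rw [setIntegral_const, smul_eq_mul]
    _ < volume.real (ball c r) * y := mul_lt_mul_of_pos_left hy' hpos

theorem SubmeanOn.mul_le_setIntegral_ball {v : ℂ → ℝ} {s : Set ℂ} (h : SubmeanOn v s)
    (hv : Measurable v) {C : ℝ} (hC : ∀ z, |v z| ≤ C) {c : ℂ} {r : ℝ} (hs : ball c r ⊆ s) :
    volume.real (ball c r) * v c ≤ ∫ ζ in ball c r, v ζ := by
  have hmean := h.setIntegral_ball_nonneg hv hC hs
  rwa [integral_sub (integrable_of_abs_le hv hC) (integrable_const _), setIntegral_const,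
    smul_eq_mul, sub_nonneg] at hmean

end ChangingDomain

section SeparatelySubmean

variable {ι : Type*} [DecidableEq ι] {U : (ι → ℂ) → ℝ} {C : ℝ} {s : Set ℂ} {w : ι → ℂ}

theorem forall_update_mem_iff {i : ι} {ζ : ℂ} (hw : ∀ j, w j ∈ s) :
    (∀ j, Function.update w i ζ j ∈ s) ↔ ζ ∈ s := by
  simp only [Function.forall_update_iff w fun _ z => z ∈ s]
  exact and_iff_left fun j _ => hw j

theorem eventually_update_piecewise_lt {i : ι} {S : Finset ι} (hi : i ∉ S) {ζ : ℂ} {y : ℝ}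
    (h : ∀ᶠ z in 𝓝 (Function.update w i ζ), U (S.piecewise z (Function.update w i ζ)) < y) :
    ∀ᶠ z in 𝓝 w, U (Function.update (S.piecewise z w) i ζ) < y := by
  have hupdate : Tendsto (fun z : ι → ℂ => Function.update z i ζ) (𝓝 w)
      (𝓝 (Function.update w i ζ)) := (continuous_id.update i continuous_const).tendsto w
  filter_upwards [hupdate.eventually h] with z hz
  rw [Finset.update_piecewise_of_notMem (hi := hi)]
  convert hz using 2
  exact Finset.piecewise_congr _
    (fun j hj => (Function.update_of_ne (ne_of_mem_of_not_mem hj hi) _ _).symm) fun _ _ => rfl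

-- By induction on `S`. Moving the coordinate `i` as well, the value at the centre of a disc is at
-- most the mean over the disc, and discs with a variable centre have upper semicontinuous means.
theorem eventually_piecewise_lt [Finite ι] (hs : IsOpen s) (hC : ∀ w, |U w| ≤ C)
    (husc : ∀ i w, UpperSemicontinuous fun ζ => U (Function.update w i ζ))
    (hsub : ∀ i w, (∀ j, w j ∈ s) → SubmeanOn (fun ζ => U (Function.update w i ζ)) s)
    (S : Finset ι) (hw : ∀ j, w j ∈ s) {y : ℝ} (hy : U w < y) :
    ∀ᶠ z in 𝓝 w, U (S.piecewise z w) < y := by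
  induction S using Finset.induction_on generalizing w y with
  | empty => simpa using hy
  | insert i S hi ih =>
    have hsmall : ∀ᶠ r in 𝓝[>] (0 : ℝ), ∫ ζ in ball (w i) r, U (Function.update w i ζ) <
        volume.real (ball (w i) r) * y :=
      eventually_setIntegral_ball_lt_mul (husc i w (w i)) (husc i w).measurable (fun _ => hC _)
        (by simpa using hy)
    have hinside : ∀ᶠ r in 𝓝[>] (0 : ℝ), closedBall (w i) (2 * r) ⊆ s := by
      have htwo : Tendsto (fun r : ℝ => 2 * r) (𝓝[>] 0) (𝓝 0) :=
        ((continuous_const_mul 2).tendsto' _ _ (mul_zero _)).mono_left nhdsWithin_le_nhds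
      exact htwo.eventually (eventually_closedBall_subset (hs.mem_nhds (hw i)))
    obtain ⟨r, hwr, hrs, hr⟩ := (hsmall.and (hinside.and eventually_mem_nhdsWithin)).exists
    rw [mem_Ioi] at hr
    have hproj : Tendsto (fun z : ι → ℂ => z i) (𝓝 w) (𝓝 (w i)) :=
      (continuous_apply i).tendsto w
    have hmove : ∀ ζ ∈ ball (w i) r, ∀ a, U (Function.update w i ζ) < a →
        ∀ᶠ z in 𝓝 w, U (Function.update (S.piecewise z w) i ζ) < a := by
      intro ζ hζ a ha
      have hζs : ζ ∈ s := hrs (ball_subset_closedBall.trans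
        (closedBall_subset_closedBall (by linarith)) hζ)
      exact eventually_update_piecewise_lt hi (ih ((forall_update_mem_iff hw).2 hζs) ha)
    have hpoly : ∀ᶠ z in 𝓝 w, ∀ j, z j ∈ s := eventually_all.2 fun j =>
      (continuous_apply j).tendsto w (hs.mem_nhds (hw j))
    filter_upwards [eventually_setIntegral_ball_lt (fun z => (husc i _).measurable)
      (fun _ _ => hC _) (husc i w).measurable (fun _ => hC _) hproj hmove hwr,
      hproj (ball_mem_nhds _ hr), hpoly] with z hz hzr hzs
    have hzS : ∀ j, S.piecewise z w j ∈ s := fun j => by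
      by_cases hj : j ∈ S <;> simp [hj, hzs, hw]
    have hball : ball (z i) r ⊆ s := ((ball_subset_ball' (by
      linarith [mem_ball.1 hzr])).trans ball_subset_closedBall).trans hrs
    have hmean := (hsub i _ hzS).mul_le_setIntegral_ball (husc i _).measurable (fun _ => hC _) hball
    rw [Finset.piecewise_insert]
    rw [Measure.addHaar_real_ball_center] at hmean hz
    exact lt_of_mul_lt_mul_left (hmean.trans_lt hz) measureReal_nonneg

theorem upperSemicontinuousOn_of_separately_submean [Finite ι] (hs : IsOpen s)
    (hC : ∀ w, |U w| ≤ C)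
    (husc : ∀ i w, UpperSemicontinuous fun ζ => U (Function.update w i ζ))
    (hsub : ∀ i w, (∀ j, w j ∈ s) → SubmeanOn (fun ζ => U (Function.update w i ζ)) s) :
    UpperSemicontinuousOn U {w | ∀ j, w j ∈ s} := by
  have := Fintype.ofFinite ι
  intro w hw y hy
  refine eventually_nhdsWithin_of_eventually_nhds ?_
  simpa using eventually_piecewise_lt hs hC husc hsub Finset.univ hw hy

theorem upperSemicontinuous_of_isOpen {X : Type*} [TopologicalSpace X] {f : X → ℝ} {s : Set X}
    (hs : IsOpen s) (hf : UpperSemicontinuousOn f s) (hC : ∀ x, f x ≤ C)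
    (hout : ∀ x ∉ s, f x = C) : UpperSemicontinuous f := by
  intro x
  by_cases hx : x ∈ s
  · intro y hy
    rw [← hs.nhdsWithin_eq hx]
    exact hf x hx y hy
  · intro y hy
    rw [hout x hx] at hy
    exact Eventually.of_forall fun x' => (hC x').trans_lt hy

theorem SubharmonicOn.eventually_le_circleAverage {v V : ℂ → ℝ} (h : SubharmonicOn v s)
    (hs : IsOpen s) (hV : EqOn V v s) {z : ℂ} (hz : z ∈ s) :
    ∀ᶠ r in 𝓝[>] (0 : ℝ), V z ≤ Real.circleAverage V z r := by
  obtain ⟨r₀, hr₀, hmean⟩ := h.2 z hz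
  filter_upwards [Ioo_mem_nhdsGT hr₀,
    nhdsWithin_le_nhds (eventually_closedBall_subset (hs.mem_nhds hz))] with r hr hrs
  rw [hV hz, Real.circleAverage_congr_sphere (hV.mono ?_), Real.circleAverage_def, smul_eq_mul,
    ← one_div]
  · exact hmean r hr.1 hr.2
  · rw [abs_of_pos hr.1]
    exact sphere_subset_closedBall.trans hrs

theorem SubharmonicOn.upperSemicontinuous_and_submeanOn {v V : ℂ → ℝ} (h : SubharmonicOn v s)
    (hs : IsOpen s) (hC : ∀ z, |V z| ≤ C) (hV : EqOn V v s) (hout : ∀ z ∉ s, V z = C) :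
    UpperSemicontinuous V ∧ SubmeanOn V s := by
  have husc : UpperSemicontinuous V := upperSemicontinuous_of_isOpen hs
    (fun z hz => UpperSemicontinuousWithinAt.congr_of_eventuallyEq (h.1 z hz) hz
      hV.symm.eventuallyEq_nhdsWithin) (fun z => (abs_le.1 (hC z)).2) hout
  exact ⟨husc, SubmeanOn.of_local husc hC fun z hz => h.eventually_le_circleAverage hs hV hz⟩

end SeparatelySubmean

section Extension

variable {ι : Type*} {u : (ι → ℂ) → ℝ} {s : Set ℂ} {w : ι → ℂ}

open Classical in
/-- The function equal to `u` on the product `s × ⋯ × s` and to `1` outside it. Since `1` is an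
upper bound for the functions extended in this way, upper semicontinuity is preserved. -/
def extendByOne (s : Set ℂ) (u : (ι → ℂ) → ℝ) (w : ι → ℂ) : ℝ :=
  if ∀ i, w i ∈ s then u w else 1

theorem extendByOne_of_mem (hw : ∀ i, w i ∈ s) : extendByOne s u w = u w := if_pos hw

theorem extendByOne_of_notMem (hw : ¬∀ i, w i ∈ s) : extendByOne s u w = 1 := if_neg hw

theorem abs_extendByOne_le_one (hu : ∀ w, (∀ i, w i ∈ s) → u w ∈ Icc (-1 : ℝ) 1) (w : ι → ℂ) :
    |extendByOne s u w| ≤ 1 := by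
  by_cases hw : ∀ i, w i ∈ s
  · rw [extendByOne_of_mem hw]
    exact abs_le.2 (hu w hw)
  · rw [extendByOne_of_notMem hw, abs_one]

variable [DecidableEq ι]

theorem extendByOne_slice (hs : IsOpen s) (hu : ∀ w, (∀ i, w i ∈ s) → u w ∈ Icc (-1 : ℝ) 1)
    {i : ι} (hw : ∀ j, w j ∈ s) (h : SubharmonicOn (fun ζ => u (Function.update w i ζ)) s) :
    UpperSemicontinuous (fun ζ => extendByOne s u (Function.update w i ζ)) ∧
      SubmeanOn (fun ζ => extendByOne s u (Function.update w i ζ)) s :=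
  h.upperSemicontinuous_and_submeanOn hs (fun _ => abs_extendByOne_le_one hu _)
    (fun _ hζ => extendByOne_of_mem ((forall_update_mem_iff hw).2 hζ))
    fun _ hζ => extendByOne_of_notMem (mt (forall_update_mem_iff hw).1 hζ)

theorem upperSemicontinuous_extendByOne_update (hs : IsOpen s)
    (hu : ∀ w, (∀ i, w i ∈ s) → u w ∈ Icc (-1 : ℝ) 1)
    (hsub : ∀ i w, (∀ j, w j ∈ s) → SubharmonicOn (fun ζ => u (Function.update w i ζ)) s)
    (i : ι) (w : ι → ℂ) :
    UpperSemicontinuous fun ζ => extendByOne s u (Function.update w i ζ) := by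
  by_cases hw : ∃ ζ, ∀ j, Function.update w i ζ j ∈ s
  · obtain ⟨ζ, hζ⟩ := hw
    simpa using (extendByOne_slice hs hu hζ (hsub i _ hζ)).1
  · simpa only [extendByOne_of_notMem (not_exists.1 hw _)] using upperSemicontinuous_const

theorem upperSemicontinuous_extendByOne [Finite ι] (hs : IsOpen s)
    (hu : ∀ w, (∀ i, w i ∈ s) → u w ∈ Icc (-1 : ℝ) 1)
    (hsub : ∀ i w, (∀ j, w j ∈ s) → SubharmonicOn (fun ζ => u (Function.update w i ζ)) s) :
    UpperSemicontinuous (extendByOne s u) := by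
  have hopen : IsOpen {w : ι → ℂ | ∀ j, w j ∈ s} := by
    simpa [Set.pi] using isOpen_set_pi (finite_univ (α := ι)) fun _ _ => hs
  have hC := abs_extendByOne_le_one hu
  exact upperSemicontinuous_of_isOpen hopen
    (upperSemicontinuousOn_of_separately_submean hs hC
      (upperSemicontinuous_extendByOne_update hs hu hsub)
      fun i w hw => (extendByOne_slice hs hu hw (hsub i w hw)).2)
    (fun w => (abs_le.1 (hC w)).2) fun _ => extendByOne_of_notMem

end Extension

theorem multiTrace_extendByOne {d : ℕ} {u : (Fin d → ℂ) → ℝ}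
    (hu : ∀ w : Fin d → ℂ, (∀ i, w i ∈ ball 0 2) → u w ∈ Icc (-1) 1)
    (hsub : ∀ (i : Fin d) (w : Fin d → ℂ), (∀ j, w j ∈ ball 0 2) →
      SubharmonicOn (fun ζ => u (Function.update w i ζ)) (ball 0 2))
    (hper : ∀ (θ : Fin d → ℝ) (k : Fin d → ℤ),
      u (fun i => ((θ i + k i : ℝ) : ℂ)) = u fun i => (θ i : ℂ)) :
    MultiTrace d (extendByOne (ball 0 2) u) fun θ => u fun i => (θ i : ℂ) where
  usc := upperSemicontinuous_extendByOne isOpen_ball hu hsub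
  abs_le_one := abs_extendByOne_le_one hu
  submean i w hw := (extendByOne_slice isOpen_ball hu hw (hsub i w hw)).2
  periodic k θ := hper θ k
  trace_eq θ hθ := extendByOne_of_mem fun i => by simpa using hθ i

/-! ### Scales of bounded size -/

theorem sq_sub_le_of_abs_sub_le_one {a b : ℝ} (ha : |a| ≤ 1) (hb : |b| ≤ 1) (hab : |a - b| ≤ 1) :
    (a - b) ^ 2 ≤ (1 - a ^ 2) + (1 - b ^ 2) := by
  rw [abs_le] at ha hb hab
  suffices a ^ 2 - a * b + b ^ 2 ≤ 1 by linarith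
  rcases le_total 0 (a * b) with h | h
  · rcases le_total 0 a with ha0 | ha0 <;> rcases le_total 0 b with hb0 | hb0 <;>
      rcases le_total a b with h' | h' <;> nlinarith
  · nlinarith

-- Increments of at most `1` prevent `g` from jumping between the two ends of `[-1, 1]`, so that a
-- variance close to its maximal value `1` forces the increments to be small.
theorem MultiTrace.integral_sq_add_sub_le {d : ℕ} {U : (Fin d → ℂ) → ℝ} {g : (Fin d → ℝ) → ℝ}
    (H : MultiTrace d U g) {ω : Fin d → ℝ} (hg : ∀ θ, |g (θ + ω) - g θ| ≤ 1) :
    ∫ θ in Icc 0 1, (g (θ + ω) - g θ) ^ 2 ≤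
      2 * (1 - ∫ θ in Icc 0 1, (g θ - ∫ η in Icc 0 1, g η) ^ 2) := by
  have hsq : ∀ θ, |g θ ^ 2| ≤ 1 := fun θ => by
    rw [abs_pow]
    exact pow_le_one₀ (abs_nonneg _) (H.abs_trace_le_one θ)
  have hsqint : IntegrableOn (fun θ => g θ ^ 2) (Icc 0 1) :=
    integrable_of_abs_le (H.measurable.pow_const 2) hsq
  have hvar : ∫ θ in Icc 0 1, (g θ - ∫ η in Icc 0 1, g η) ^ 2 ≤ ∫ θ in Icc 0 1, g θ ^ 2 := by
    rw [← ProbabilityTheory.variance_eq_integral H.measurable.aemeasurable]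
    exact ProbabilityTheory.variance_le_expectation_sq H.measurable.aestronglyMeasurable
  have hint : IntegrableOn (fun θ => 1 - g θ ^ 2) (Icc 0 1) := (integrable_const 1).sub hsqint
  have hint' : IntegrableOn (fun θ => 1 - g (θ + ω) ^ 2) (Icc 0 1) :=
    (integrable_const 1).sub (integrable_of_abs_le
      ((H.measurable.comp (measurable_add_const ω)).pow_const 2) fun θ => hsq _)
  calc ∫ θ in Icc 0 1, (g (θ + ω) - g θ) ^ 2
      ≤ ∫ θ in Icc 0 1, ((1 - g (θ + ω) ^ 2) + (1 - g θ ^ 2)) :=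
        integral_mono_of_nonneg (ae_of_all _ fun θ => sq_nonneg _) (Integrable.add hint' hint)
          (ae_of_all _ fun θ => sq_sub_le_of_abs_sub_le_one (H.abs_trace_le_one _)
            (H.abs_trace_le_one θ) (hg θ))
    _ = 2 * (1 - ∫ θ in Icc 0 1, g θ ^ 2) := by
        rw [integral_add hint' hint, setIntegral_cube_comp_add_right (f := fun θ => 1 - g θ ^ 2)
          fun k θ => by simp only [H.periodic k θ], ← two_mul, integral_sub (integrable_const 1)
          hsqint, integral_const, probReal_univ, one_smul]
    _ ≤ 2 * (1 - ∫ θ in Icc 0 1, (g θ - ∫ η in Icc 0 1, g η) ^ 2) := by linarith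

theorem exists_variance_le_one_sub (d : ℕ) {p q : ℝ} (hp : 0 < p) (hq : 0 ≤ q) :
    ∃ η : ℝ, 0 < η ∧ ∀ ⦃U : (Fin d → ℂ) → ℝ⦄ ⦃g : (Fin d → ℝ) → ℝ⦄, MultiTrace d U g →
      ∀ ⦃ω : Fin d → ℝ⦄, Diophantine d p q ω → (∀ θ, |g (θ + ω) - g θ| ≤ 1) →
      ∫ θ in Icc 0 1, (g θ - ∫ η in Icc 0 1, g η) ^ 2 ≤ 1 - η := by
  rcases d with - | d
  · exact ⟨1, one_pos, fun U g _ ω _ _ => by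
      simp only [sub_integral_eq_zero_of_subsingleton]
      simp⟩
  set K : ℝ := ((d + 1) * 320) ^ 4
  set M : ℝ := (((d + 1) * K) ^ q / (4 * p)) ^ 2
  have hK : (d + 1) * (160 * K ^ (-(1 / 4) : ℝ)) = 1 / 2 := by
    rw [← Real.rpow_natCast_mul (by positivity)]
    norm_num
    rw [Real.rpow_neg_one]
    field_simp
    norm_num
  have hM : 0 ≤ M := sq_nonneg _
  refine ⟨1 / (2 * (1 + 2 * M)), by positivity, fun U g H ω hω hg => ?_⟩
  have hvar := H.variance_le hp hq hω (show 0 < K by positivity)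
  set V := ∫ θ in Icc 0 1, (g θ - ∫ η in Icc 0 1, g η) ^ 2
  have hinc := mul_le_mul_of_nonneg_left (H.integral_sq_add_sub_le hg) hM
  rw [le_sub_iff_add_le, ← le_sub_iff_add_le', div_le_iff₀ (by positivity)]
  linarith

theorem measure_lt_of_variance_le {X : Type*} [MeasurableSpace X] {μ : Measure X}
    [IsProbabilityMeasure μ] {f : X → ℝ} (hf : MemLp f 2 μ) {η κ τ c N x : ℝ} (hη : 0 < η)
    (hvar : ∫ y, (f y - ∫ z, f z ∂μ) ^ 2 ∂μ ≤ 1 - η) (hx : 1 ≤ x) (hxN : x ≤ N) (hτ : 0 ≤ τ)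
    (hκ : 0 ≤ κ) (hc : 0 ≤ c) (hτη : 2 * τ * Real.log N ≤ η / 4) (hcη : c * N ^ κ ≤ η / 4) :
    μ {y | x ^ (-τ) < |f y - ∫ z, f z ∂μ|} < ENNReal.ofReal (Real.exp (-c * x ^ κ)) := by
  have hx0 : 0 < x := one_pos.trans_le hx
  have hcheb := ProbabilityTheory.meas_ge_le_variance_div_sq hf (Real.rpow_pos_of_pos hx0 (-τ))
  rw [ProbabilityTheory.variance_eq_integral hf.aestronglyMeasurable.aemeasurable] at hcheb
  have hsubset : {y | x ^ (-τ) < |f y - ∫ z, f z ∂μ|} ⊆ {y | x ^ (-τ) ≤ |f y - ∫ z, f z ∂μ|} :=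
    ofPred_subset_ofPred.2 fun _ => le_of_lt
  refine (measure_mono hsubset).trans_lt (hcheb.trans_lt ?_)
  rw [ENNReal.ofReal_lt_ofReal_iff (Real.exp_pos _)]
  have hpow : ((x ^ (-τ)) ^ 2)⁻¹ = Real.exp (2 * τ * Real.log x) := by
    rw [← Real.rpow_mul_natCast hx0.le, ← Real.rpow_neg hx0.le, Real.rpow_def_of_pos hx0]
    push_cast
    ring_nf
  calc _ ≤ Real.exp (-η) * Real.exp (2 * τ * Real.log x) := by
        rw [div_eq_mul_inv, hpow]
        gcongr
        linarith [Real.add_one_le_exp (-η)]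
    _ = Real.exp (-η + 2 * τ * Real.log x) := (Real.exp_add _ _).symm
    _ < Real.exp (-c * x ^ κ) := by
        have hlog : 2 * τ * Real.log x ≤ 2 * τ * Real.log N := by gcongr
        have hrpow : c * x ^ κ ≤ c * N ^ κ := by gcongr
        rw [Real.exp_lt_exp]
        linarith

theorem DeviationEstimate.measure_lt {d : ℕ} {U : (Fin d → ℂ) → ℝ} {g : (Fin d → ℝ) → ℝ}
    {p q κ C τ c x : ℝ} {ω : Fin d → ℝ} (hD : DeviationEstimate d p q κ C) (H : MultiTrace d U g)
    (hω : Diophantine d p q ω) (hx : 1 ≤ x) (hg : ∀ θ, |g (θ + ω) - g θ| ≤ 1 / x)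
    (hκ : 0 ≤ κ) (hC : 1 ≤ C) (hCx : 2 * C ^ 2 ≤ x ^ (κ / 2)) (hτ : τ ≤ κ / 2)
    (hc : c ≤ 1 / (2 * C)) :
    volume.restrict (Icc 0 1) {θ | x ^ (-τ) < |g θ - ∫ η in Icc 0 1, g η|} <
      ENNReal.ofReal (Real.exp (-c * x ^ κ)) := by
  have hx0 : 0 < x := one_pos.trans_le hx
  have hC0 : 0 < C := one_pos.trans_le hC
  have hscale : C * x ^ (-κ) ≤ x ^ (-τ) := by
    have hCx' : C ≤ x ^ (κ / 2) := by nlinarith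
    calc C * x ^ (-κ) ≤ x ^ (κ / 2) * x ^ (-κ) := by gcongr
      _ = x ^ (-(κ / 2)) := by rw [← Real.rpow_add hx0]; ring_nf
      _ ≤ x ^ (-τ) := Real.rpow_le_rpow_of_exponent_le hx (neg_le_neg hτ)
  refine (measure_mono fun θ hθ => hscale.trans_lt hθ).trans_lt ((hD H hω hx hg).trans_lt ?_)
  rw [ENNReal.ofReal_lt_ofReal_iff (Real.exp_pos _)]
  have hlarge : 2 * C ≤ x ^ κ / C := by
    rw [le_div_iff₀ hC0, mul_assoc, ← sq]
    exact hCx.trans (Real.rpow_le_rpow_of_exponent_le hx (by linarith))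
  have hcx : c * x ^ κ ≤ x ^ κ / C / 2 := by
    refine (mul_le_mul_of_nonneg_right hc (by positivity)).trans_eq ?_
    field_simp
  calc C * Real.exp (-(x ^ κ / C)) < Real.exp C * Real.exp (-(x ^ κ / C)) := by
        gcongr
        linarith [Real.add_one_le_exp C]
    _ = Real.exp (C + -(x ^ κ / C)) := (Real.exp_add _ _).symm
    _ ≤ Real.exp (-c * x ^ κ) := by
        rw [Real.exp_le_exp]
        linarith

theorem exists_measure_deviation_lt (d : ℕ) {p q : ℝ} (hp : 0 < p) (hq : 1 ≤ q) :
    ∃ σ τ c : ℝ, 0 < σ ∧ 0 < τ ∧ 0 < c ∧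
      ∀ ⦃U : (Fin d → ℂ) → ℝ⦄ ⦃g : (Fin d → ℝ) → ℝ⦄, MultiTrace d U g →
      ∀ ⦃ω : Fin d → ℝ⦄, Diophantine d p q ω → ∀ ⦃x : ℝ⦄, 1 ≤ x →
      (∀ θ, |g (θ + ω) - g θ| ≤ 1 / x) →
      volume.restrict (Icc 0 1) {θ | x ^ (-τ) < |g θ - ∫ η in Icc 0 1, g η|} <
        ENNReal.ofReal (Real.exp (-c * x ^ σ)) := by
  obtain ⟨κ, C, hκ, hC, hlarge⟩ := exists_deviationEstimate d hp hq
  obtain ⟨η, hη, hsmall⟩ := exists_variance_le_one_sub d hp (zero_le_one.trans hq)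
  obtain ⟨N, hN1, hN⟩ : ∃ N : ℝ, 1 ≤ N ∧ ∀ x, N ≤ x → 2 * C ^ 2 ≤ x ^ (κ / 2) := by
    obtain ⟨N, hN⟩ := eventually_atTop.1
      ((tendsto_rpow_atTop (half_pos hκ)).eventually_ge_atTop (2 * C ^ 2))
    exact ⟨max 1 N, le_max_left _ _, fun x hx => hN x ((le_max_right _ _).trans hx)⟩
  have hlogN : 0 ≤ Real.log N := Real.log_nonneg hN1
  set τ := min (κ / 2) (η / (8 * (Real.log N + 1)))
  set c := min (1 / (2 * C)) (η / (4 * N ^ κ))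
  have hτ : 0 < τ := by positivity
  have hc : 0 < c := by positivity
  have hτN : 2 * τ * Real.log N ≤ η / 4 := by
    have hle := (le_div_iff₀ (by positivity)).1 (min_le_right (κ / 2) (η / (8 * (Real.log N + 1))))
    linarith
  have hcN : c * N ^ κ ≤ η / 4 := by
    have hle := (le_div_iff₀ (by positivity)).1 (min_le_right (1 / (2 * C)) (η / (4 * N ^ κ)))
    linarith
  refine ⟨κ, τ, c, hκ, hτ, hc, fun U g H ω hω x hx hg => ?_⟩
  rcases le_total N x with hNx | hxN
  · exact hlarge.measure_lt H hω hx hg hκ.le hC (hN x hNx) (min_le_left _ _) (min_le_left _ _)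
  · have hg1 : ∀ θ, |g (θ + ω) - g θ| ≤ 1 := fun θ =>
      (hg θ).trans (div_le_one_of_le₀ hx (zero_le_one.trans hx))
    exact measure_lt_of_variance_le (MemLp.of_bound H.measurable.aestronglyMeasurable 1
      (ae_of_all _ H.abs_trace_le_one)) hη (hsmall H hω hg1) hx hxN hτ.le hκ.le hc.le hτN hcN

theorem Diophantine.mono_exponent {d : ℕ} {p q q' : ℝ} {ω : Fin d → ℝ} (hω : Diophantine d p q ω)
    (hp : 0 ≤ p) (hqq' : q ≤ q') : Diophantine d p q' ω := by
  intro k hk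
  have hone : (1 : ℝ) ≤ ((∑ i, |k i| : ℤ) : ℝ) := by exact_mod_cast one_le_sum_abs hk
  refine le_trans ?_ (hω k hk)
  gcongr

end

theorem subharmonic_large_deviation_general (d : ℕ) {p : ℝ} (hp : 0 < p) (q : ℝ) :
    ∃ σ τ c₀ : ℝ, 0 < σ ∧ 0 < τ ∧ 0 < c₀ ∧
      ∀ u : (Fin d → ℂ) → ℝ,
        (∀ w : Fin d → ℂ, (∀ i, w i ∈ Metric.ball (0 : ℂ) 2) → u w ∈ Set.Icc (-1 : ℝ) 1) →
        (∀ (i : Fin d) (w : Fin d → ℂ), (∀ j, w j ∈ Metric.ball (0 : ℂ) 2) →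
          SubharmonicOn (fun ζ => u (Function.update w i ζ)) (Metric.ball (0 : ℂ) 2)) →
        (∀ (θ : Fin d → ℝ) (k : Fin d → ℤ),
          u (fun i => ((θ i + (k i : ℝ) : ℝ) : ℂ)) = u (fun i => ((θ i : ℝ) : ℂ))) →
        ∀ ω : Fin d → ℝ, Diophantine d p q ω →
        ∀ x : ℝ, 1 ≤ x →
        (∀ θ : Fin d → ℝ,
          |u (fun i => ((θ i + ω i : ℝ) : ℂ)) - u (fun i => ((θ i : ℝ) : ℂ))| ≤ 1 / x) →
        volume {θ ∈ Set.Icc (0 : Fin d → ℝ) 1 |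
            x ^ (-τ) < |u (fun i => ((θ i : ℝ) : ℂ)) -
              ∫ θ' in Set.Icc (0 : Fin d → ℝ) 1, u (fun i => ((θ' i : ℝ) : ℂ))|}
          < ENNReal.ofReal (Real.exp (-c₀ * x ^ σ)) := by
  obtain ⟨σ, τ, c₀, hσ, hτ, hc₀, hdev⟩ := exists_measure_deviation_lt d hp (le_max_right q 1)
  refine ⟨σ, τ, c₀, hσ, hτ, hc₀, fun u hu hsub hper ω hω x hx hshift => ?_⟩
  refine lt_of_eq_of_lt ?_ (hdev (multiTrace_extendByOne hu hsub hper)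
    (hω.mono_exponent hp.le (le_max_left q 1)) hx hshift)
  rw [Measure.restrict_apply' measurableSet_Icc, Set.inter_comm]
  rfl

/-- **Goldstein–Schlag, Proposition 9.1**: a bounded, separately subharmonic function on
`D(0,2)^d` whose shift along a Diophantine `ω` moves it by less than `1/n` concentrates
around its mean: `mes{θ ∈ 𝕋^d : |u(θ) − ⟨u⟩| > n^{−τ}} < exp(−c₀ n^σ)`, with `σ, τ, c₀`
depending only on `d` and the Diophantine parameters. -/
theorem subharmonic_large_deviation
    (d : ℕ) (hd : 0 < d) (p q : ℝ) (hp : 0 < p) (hq : (d : ℝ) < q) :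
    ∃ σ τ c₀ : ℝ, 0 < σ ∧ 0 < τ ∧ 0 < c₀ ∧
      ∀ u : (Fin d → ℂ) → ℝ,
        (∀ w : Fin d → ℂ, (∀ i, w i ∈ Metric.ball (0 : ℂ) 2) →
          u w ∈ Set.Icc (-1 : ℝ) 1) →
        (∀ (i : Fin d) (w : Fin d → ℂ), (∀ j, w j ∈ Metric.ball (0 : ℂ) 2) →
          SubharmonicOn (fun ζ => u (Function.update w i ζ)) (Metric.ball (0 : ℂ) 2)) →
        (∀ (θ : Fin d → ℝ) (k : Fin d → ℤ),
          u (fun i => ((θ i + (k i : ℝ) : ℝ) : ℂ)) = u (fun i => ((θ i : ℝ) : ℂ))) →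
        ∀ ω : Fin d → ℝ, Diophantine d p q ω →
        ∀ n : ℕ, 1 ≤ n →
        (∀ θ : Fin d → ℝ,
          |u (fun i => ((θ i + ω i : ℝ) : ℂ)) - u (fun i => ((θ i : ℝ) : ℂ))| <
            1 / (n : ℝ)) →
        volume {θ ∈ Set.Icc (0 : Fin d → ℝ) 1 |
            ((n : ℝ) ^ (-τ) : ℝ) <
              |u (fun i => ((θ i : ℝ) : ℂ)) -
                ∫ θ' in Set.Icc (0 : Fin d → ℝ) 1, u (fun i => ((θ' i : ℝ) : ℂ))|}
          < ENNReal.ofReal (Real.exp (-c₀ * (n : ℝ) ^ σ)) := by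
  obtain ⟨σ, τ, c₀, hσ, hτ, hc₀, hdev⟩ := subharmonic_large_deviation_general d hp q
  exact ⟨σ, τ, c₀, hσ, hτ, hc₀, fun u hu hsub hper ω hω n hn hshift =>
    hdev u hu hsub hper ω hω n (Nat.one_le_cast.2 hn) fun θ => (hshift θ).le⟩

end
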